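/- Let 𝔤 be a finite-dimensional complex simple Lie algebra of type E6, and let (e,h,f) be an sl2-triple in 𝔤 such that e is a distinguished nilpotent element which is not regular. Then e satisfies property (P). -/

import Mathlib

open scoped ComplexOrder

/-- The centralizer `𝔤^e = {x ∈ 𝔤 : ⁅x, e⁆ = 0}` of an element `e`, as a Lie subalgebra. -/
def centralizer (L : Type*) [LieRing L] [LieAlgebra ℂ L] (e : L) : LieSubalgebra ℂ L where
  carrier := {x : L | ⁅x, e⁆ = 0}
  add_mem' := fun {a b} ha hb => by
    simp only [Set.mem_setOf_eq] at *
    rw [add_lie, ha, hb, add_zero]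
  zero_mem' := by simp
  smul_mem' := fun c a ha => by
    simp only [Set.mem_setOf_eq] at *
    rw [smul_lie, ha, smul_zero]
  lie_mem' := fun {a b} ha hb => by
    simp only [Set.mem_setOf_eq] at *
    simp [lie_lie, ha, hb]

/-- Membership in the centre `𝔷(𝔤^e)` of the centralizer of `e`:
`v` centralizes `e` and commutes with every element of `𝔤^e`. -/
def InCenterOfCentralizer (L : Type*) [LieRing L] [LieAlgebra ℂ L] (e v : L) : Prop :=
  ⁅v, e⁆ = 0 ∧ ∀ y : L, ⁅y, e⁆ = 0 → ⁅v, y⁆ = 0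

/-- The centre `𝔷(𝔤^e)` of the centralizer of `e`, as a subspace of `L`. -/
def zCenter (L : Type*) [LieRing L] [LieAlgebra ℂ L] (e : L) : Submodule ℂ L where
  carrier := {v : L | ⁅v, e⁆ = 0 ∧ ∀ y : L, ⁅y, e⁆ = 0 → ⁅v, y⁆ = 0}
  add_mem' := fun {a b} ha hb => ⟨by rw [add_lie, ha.1, hb.1, add_zero],
    fun y hy => by rw [add_lie, ha.2 y hy, hb.2 y hy, add_zero]⟩
  zero_mem' := ⟨zero_lie e, fun y _ => zero_lie y⟩
  smul_mem' := fun c a ha => ⟨by rw [smul_lie, ha.1, smul_zero],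
    fun y hy => by rw [smul_lie, ha.2 y hy, smul_zero]⟩

/-- Property (P) for an `sl₂`-triple `(e, h, f)`: for every nonzero `v ∈ 𝔷(𝔤^e)`, the
eigenspace `𝔷_max` of the restriction of `ad h` to `𝔷(𝔤^e)` for its largest eigenvalue is
contained in `[[f, 𝔤^e], v] = {⁅⁅f, x⁆, v⁆ : x ∈ 𝔤^e}`. -/
def PropertyP (L : Type*) [LieRing L] [LieAlgebra ℂ L] (e h f : L) : Prop :=
  ∀ m : ℂ,
    (∃ z : L, z ≠ 0 ∧ InCenterOfCentralizer L e z ∧ ⁅h, z⁆ = m • z) →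
    (∀ m' : ℂ, (∃ z : L, z ≠ 0 ∧ InCenterOfCentralizer L e z ∧ ⁅h, z⁆ = m' • z) → m' ≤ m) →
    ∀ v : L, InCenterOfCentralizer L e v → v ≠ 0 →
      ∀ z : L, InCenterOfCentralizer L e z → ⁅h, z⁆ = m • z →
        ∃ x : L, ⁅x, e⁆ = 0 ∧ ⁅⁅f, x⁆, v⁆ = z

/-- The stabilizer `{x ∈ 𝔮 : ξ(⁅x, y⁆) = 0 for all y ∈ 𝔮}` of a linear functional `ξ`. -/
def coadStab (Q : Type*) [LieRing Q] [LieAlgebra ℂ Q] (ξ : Module.Dual ℂ Q) : Submodule ℂ Q where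
  carrier := {x : Q | ∀ y : Q, ξ ⁅x, y⁆ = 0}
  add_mem' := fun {a b} ha hb y => by rw [add_lie, map_add, ha y, hb y, add_zero]
  zero_mem' := fun y => by rw [zero_lie, map_zero]
  smul_mem' := fun c a ha y => by rw [smul_lie, map_smul, ha y, smul_zero]

/-- The index of a complex Lie algebra:
`ind 𝔮 = min_{ξ ∈ 𝔮*} dim {x ∈ 𝔮 : ξ(⁅x, y⁆) = 0 for all y ∈ 𝔮}`. -/
noncomputable def lieIndex (Q : Type*) [LieRing Q] [LieAlgebra ℂ Q] : ℕ :=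
  ⨅ ξ : Module.Dual ℂ Q, Module.finrank ℂ ↥(coadStab Q ξ)

/-- A nilpotent element `e` is distinguished if the only `x ∈ 𝔤^e` such that `ad x` is a
semisimple endomorphism of `𝔤` is `x = 0`. -/
def IsDistinguished (L : Type*) [LieRing L] [LieAlgebra ℂ L] (e : L) : Prop :=
  ∀ x : L, ⁅x, e⁆ = 0 → (LieAlgebra.ad ℂ L x).IsSemisimple → x = 0

/-! ### Integer linear combinations and fraction-free elimination -/

section Combinations

variable {M : Type*} [AddCommGroup M] [Module ℂ M]

/-- The vector `∑ cᵢ B(kᵢ)` with coordinates listed as pairs `(kᵢ, cᵢ)`. -/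
noncomputable def combine (B : ℕ → M) : List (ℕ × ℤ) → M
  | [] => 0
  | t :: l => (t.2 : ℂ) • B t.1 + combine B l

/-- Adds `c` to the `k`-th coordinate of a sparse vector, removing zero coordinates. -/
def addTo (c : ℤ) (k : ℕ) (f : List (ℕ × ℤ)) : List (ℕ × ℤ) :=
  match c with
  | .ofNat 0 => f
  | c =>
    match f with
    | [] => [(k, c)]
    | a :: l => bif Nat.beq a.1 k then addTo (a.2 + c) k l else a :: addTo c k l

lemma combine_addTo (B : ℕ → M) (c : ℤ) (k : ℕ) (f : List (ℕ × ℤ)) :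
    combine B (addTo c k f) = (c : ℂ) • B k + combine B f := by
  induction f generalizing c with
  | nil =>
    unfold addTo
    split <;> simp [combine]
  | cons a l ih =>
    unfold addTo
    split
    · simp
    · by_cases h : Nat.beq a.1 k = true
      · simp only [h, cond_true, ih, combine]
        rw [Nat.eq_of_beq_eq_true h]
        push_cast
        module
      · simp only [h, cond_false, combine, ih]
        module

/-- The sparse vector `c u + f`. -/
def addSMul (c : ℤ) (u f : List (ℕ × ℤ)) : List (ℕ × ℤ) :=
  u.foldr (fun t l => addTo (c * t.2) t.1 l) f

lemma combine_addSMul (B : ℕ → M) (c : ℤ) (u f : List (ℕ × ℤ)) :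
    combine B (addSMul c u f) = (c : ℂ) • combine B u + combine B f := by
  induction u with
  | nil => simp [addSMul, combine]
  | cons a l ih =>
    simp only [addSMul, List.foldr_cons, combine_addTo, combine] at ih ⊢
    rw [ih]
    push_cast
    module

/-- The extension by linearity of `A` to sparse vectors. -/
def linExtend (A : ℕ → List (ℕ × ℤ)) (u : List (ℕ × ℤ)) : List (ℕ × ℤ) :=
  u.foldr (fun t l => addSMul t.2 (A t.1) l) []

lemma combine_linExtend {N : Type*} [AddCommGroup N] [Module ℂ N] (B : ℕ → M) (C : ℕ → N)
    (φ : M →ₗ[ℂ] N) (A : ℕ → List (ℕ × ℤ)) (h : ∀ k, φ (B k) = combine C (A k))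
    (u : List (ℕ × ℤ)) : combine C (linExtend A u) = φ (combine B u) := by
  induction u with
  | nil => simp [linExtend, combine]
  | cons a l ih =>
    simp only [linExtend, List.foldr_cons, combine_addSMul, combine, map_add, map_smul, h] at ih ⊢
    rw [ih]

lemma map_combine {N : Type*} [AddCommGroup N] [Module ℂ N] (φ : M →ₗ[ℂ] N) (B : ℕ → M)
    (u : List (ℕ × ℤ)) : φ (combine B u) = combine (φ ∘ B) u := by
  induction u with
  | nil => simp [combine]
  | cons a l ih => simp [combine, ih]

/-- The bracket of sparse vectors for given structure constants. -/
def sparseLie (S : ℕ → ℕ → List (ℕ × ℤ)) (u v : List (ℕ × ℤ)) : List (ℕ × ℤ) :=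
  linExtend (fun i => linExtend (S i) v) u

lemma combine_sparseLie {L : Type*} [LieRing L] [LieAlgebra ℂ L] (B : ℕ → L)
    (S : ℕ → ℕ → List (ℕ × ℤ)) (h : ∀ i j, ⁅B i, B j⁆ = combine B (S i j))
    (u v : List (ℕ × ℤ)) : combine B (sparseLie S u v) = ⁅combine B u, combine B v⁆ := by
  unfold sparseLie
  rw [combine_linExtend B B (-(LieAlgebra.ad ℂ L (combine B v) : L →ₗ[ℂ] L))]
  · simp
  · intro i
    rw [combine_linExtend B B (LieAlgebra.ad ℂ L (B i) : L →ₗ[ℂ] L)]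
    · simp
    · intro j
      simpa using h i j

end Combinations

section Elimination

/-- The value of the linear form with the listed coefficients. -/
noncomputable def rowApply : List ℤ → (ℕ → ℂ) → ℂ
  | [], _ => 0
  | a :: l, v => a * v 0 + rowApply l (fun k => v (k + 1))

/-- The row `a r - b p`. -/
def subRows (a b : ℤ) : List ℤ → List ℤ → List ℤ
  | [], p => p.map fun y => -(b * y)
  | x :: r, [] => a * x :: subRows a b r []
  | x :: r, y :: p => (a * x - b * y) :: subRows a b r p

/-- Eliminates the first unknown from the row `r` using the pivot row `p₀ :: p`. -/
def reduceRow (p₀ : ℤ) (p : List ℤ) : List ℤ → List ℤ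
  | [] => []
  | .ofNat 0 :: r => r
  | r₀ :: r => subRows p₀ r₀ r p

def findPivot : List (List ℤ) → Option (ℤ × List ℤ)
  | [] => none
  | (.ofNat 0 :: _) :: l => findPivot l
  | (p₀ :: p) :: _ => some (p₀, p)
  | [] :: l => findPivot l

/-- Fraction-free Gaussian elimination: whether the rows have rank `n`. -/
def fullRank : ℕ → List (List ℤ) → Bool
  | 0, _ => true
  | n + 1, rows =>
    match findPivot rows with
    | none => false
    | some (p₀, p) => fullRank n (rows.map (reduceRow p₀ p))

lemma rowApply_subRows (a b : ℤ) (r p : List ℤ) (v : ℕ → ℂ) :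
    rowApply (subRows a b r p) v = a * rowApply r v - b * rowApply p v := by
  induction r generalizing p v with
  | nil =>
    induction p generalizing v with
    | nil => simp [rowApply, subRows]
    | cons y p ih =>
      simp only [subRows, List.map_cons, rowApply] at ih ⊢
      rw [ih]
      push_cast
      ring
  | cons x r ih =>
    cases p with
    | nil =>
      simp only [subRows, rowApply, ih]
      push_cast
      ring
    | cons y p =>
      simp only [subRows, rowApply, ih]
      push_cast
      ring

lemma findPivot_spec {rows : List (List ℤ)} {p₀ : ℤ} {p : List ℤ}
    (h : findPivot rows = some (p₀, p)) : p₀ ≠ 0 ∧ (p₀ :: p) ∈ rows := by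
  induction rows with
  | nil => simp [findPivot] at h
  | cons r l ih =>
    match r with
    | [] => exact ⟨(ih h).1, List.mem_cons_of_mem _ (ih h).2⟩
    | .ofNat 0 :: r => exact ⟨(ih h).1, List.mem_cons_of_mem _ (ih h).2⟩
    | .ofNat (m + 1) :: r =>
      obtain ⟨rfl, rfl⟩ : Int.ofNat (m + 1) = p₀ ∧ r = p := by
        have h' : some (Int.ofNat (m + 1), r) = some (p₀, p) := h
        simpa using h'
      exact ⟨by simp; omega, by simp⟩
    | .negSucc m :: r =>
      obtain ⟨rfl, rfl⟩ : Int.negSucc m = p₀ ∧ r = p := by simpa [findPivot] using h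
      exact ⟨by simp, by simp⟩

lemma rowApply_reduceRow {p₀ : ℤ} {p r : List ℤ} {v : ℕ → ℂ}
    (hp : rowApply (p₀ :: p) v = 0) (hr : rowApply r v = 0) :
    rowApply (reduceRow p₀ p r) (fun k => v (k + 1)) = 0 := by
  unfold reduceRow
  split
  · rfl
  · simpa [rowApply] using hr
  · rename_i r₀ r _
    rw [rowApply_subRows]
    simp only [rowApply] at hp hr
    linear_combination (p₀ : ℂ) * hr - (r₀ : ℂ) * hp

theorem eq_zero_of_fullRank {n : ℕ} {rows : List (List ℤ)} (h : fullRank n rows = true)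
    {v : ℕ → ℂ} (hv : ∀ r ∈ rows, rowApply r v = 0) {k : ℕ} (hk : k < n)
    (hvn : ∀ k, n ≤ k → v k = 0) : v k = 0 := by
  induction n generalizing rows v k with
  | zero => omega
  | succ n ih =>
    unfold fullRank at h
    split at h
    · simp at h
    · rename_i p₀ p hp
      obtain ⟨hp0, hpm⟩ := findPivot_spec hp
      have hs : ∀ k, v (k + 1) = 0 := by
        intro k
        by_cases hk : k < n
        · refine ih h (v := fun k => v (k + 1)) ?_ hk (fun k hk => hvn _ (by omega))
          intro r hr
          obtain ⟨r', hr', rfl⟩ := List.mem_map.1 hr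
          exact rowApply_reduceRow (hv _ hpm) (hv _ hr')
        · exact hvn _ (by omega)
      cases k with
      | succ k => exact hs k
      | zero =>
        have h0 : ∀ l : List ℤ, rowApply l (fun k => v (k + 1)) = 0 := by
          have : (fun k => v (k + 1)) = fun _ => 0 := funext hs
          rw [this]
          intro l
          induction l with
          | nil => rfl
          | cons a l ih => simp [rowApply, ih]
        have := hv _ hpm
        simp only [rowApply, h0, add_zero, mul_eq_zero, Int.cast_eq_zero] at this
        exact this.resolve_left hp0

end Elimination

namespace E6

/-! ### Structure constants of type E₆ and the 27-dimensional representation -/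

/-- The positive roots; the octal digits are the coefficients on the simple roots. -/
def posCodes : List ℕ :=
  [32768, 4096, 512, 64, 8, 1, 33280, 4160, 576, 72, 9, 33344,
    4672, 4168, 584, 73, 37440, 33352, 4680, 4169, 585, 37448,
    33353, 4744, 4681, 37512, 37449, 4745, 38024, 37513, 4753, 38025,
    37521, 38033, 38097, 42193]

/-- The weights of the 27-dimensional representation, relative to the lowest one. -/
def weightCodes : List ℕ :=
  [0, 1, 9, 73, 4169, 585, 4681, 33353, 37449, 4745, 37513, 4753,
    38025, 37521, 4754, 38033, 37522, 38097, 38034, 42193, 38098,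
    42194, 38106, 42202, 42266, 42778, 75546]

/-- A list of `s`-bit numbers stored in a single one, for fast evaluation by the kernel. -/
def pack (s : ℕ) : List ℕ → ℕ
  | [] => 0
  | a :: l => Nat.add (Nat.shiftLeft (pack s l) s) a

/-- The `i`-th entry of a packed list. -/
def entry (s t i : ℕ) : ℕ := Nat.mod (Nat.shiftRight t (Nat.mul s i)) (Nat.pow 2 s)

def posPack : ℕ := pack 18 posCodes

def weightPack : ℕ := pack 18 weightCodes

/-- Roots are numbered so that `k < 36` is positive and `k + 36` is its opposite. -/
def absCode (k : ℕ) : ℕ := entry 18 posPack (Nat.mod k 36)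

/-- The code of a root modulo 979, which suffices to recognize sums of roots and weights. -/
def key (k : ℕ) : ℕ :=
  bif Nat.blt k 36 then Nat.mod (absCode k) 979 else Nat.sub 979 (Nat.mod (absCode k) 979)

/-- The packed inverse of a list of keys; positions are shifted by one. -/
def positions : List ℕ → ℕ → ℕ
  | [], _ => 0
  | a :: l, n => Nat.add (positions l (Nat.succ n)) (Nat.shiftLeft (Nat.succ n) (Nat.mul 8 a))

def rootPositions : ℕ := positions ((List.range 72).map key) 0

def weightPositions : ℕ := positions (weightCodes.map (Nat.mod · 979)) 0

def odd (n : ℕ) : Bool := Nat.beq (Nat.mod n 2) 1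

/-- The parity of `∑ aᵢ bᵢ` plus the sum of `aᵢ bⱼ` over the edges `i < j` of the diagram. -/
def cocycle (a b : ℕ) : Bool :=
  let c := Nat.land b 37449
  let d := Nat.xor c (Nat.xor (Nat.land 584 (Nat.shiftLeft c 3))
    (Nat.land 36864 (Nat.shiftLeft c 6)))
  odd (Nat.shiftRight (Nat.mul 37449 (Nat.land a d)) 15)

def digit (n i : ℕ) : ℤ := .ofNat (Nat.mod (Nat.shiftRight n (Nat.sub 15 (Nat.mul 3 i))) 8)

def sgn (b : Bool) : ℤ := bif b then -1 else 1

/-- The value of the `i`-th simple coroot. -/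
def cartanInt (i n : ℕ) : ℤ :=
  2 * digit n i - match i with
    | 0 => digit n 2
    | 1 => digit n 3
    | 2 => digit n 0 + digit n 3
    | 3 => digit n 1 + (digit n 2 + digit n 4)
    | 4 => digit n 3 + digit n 5
    | _ => digit n 4

def isNeg (k : ℕ) : Bool := Nat.blt 35 k

/-- Structure constants for the root vectors (`k < 72`) and the simple coroots (`72 ≤ k < 78`). -/
def sc (i j : ℕ) : List (ℕ × ℤ) :=
  bif Nat.blt i 72 then
    bif Nat.blt j 72 then
      match Nat.mod (Nat.add (key i) (key j)) 979 with
      | 0 => (List.range 6).foldr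
          (fun k l => addTo (sgn (isNeg i) * digit (absCode i) k) (Nat.add 72 k) l) []
      | s => match entry 8 rootPositions s with
        | 0 => []
        | p + 1 => [(p, sgn (Bool.xor (cocycle (absCode i) (absCode j))
            (Bool.xor (isNeg i) (Bool.xor (isNeg j) (isNeg p)))))]
    else bif Nat.blt j 78 then 
      addTo (-(sgn (isNeg i) * cartanInt (Nat.sub j 72) (absCode i))) i [] else []
  else bif Nat.blt i 78 && Nat.blt j 72 then
    addTo (sgn (isNeg j) * cartanInt (Nat.sub i 72) (absCode j)) j [] else []

/-- The action of the `k`-th basis vector on the `n`-th weight vector. -/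
def act (k n : ℕ) : List (ℕ × ℤ) :=
  let w := entry 18 weightPack n
  bif Nat.blt n 27 then
    bif Nat.blt k 72 then
      match entry 8 weightPositions (Nat.mod (Nat.add (key k) w) 979) with
      | 0 => []
      | p + 1 => [(p, sgn (Bool.xor (isNeg k) (Bool.xor (odd (absCode k)) (cocycle (absCode k) w))))]
    else bif Nat.blt k 78 then
      addTo (cartanInt (Nat.sub k 72) w - bif Nat.beq k 77 then 1 else 0) n []
    else []
  else []

def isGen (k : ℕ) : Bool := Nat.blt k 6 || (Nat.blt 35 k && Nat.blt k 42)

/-- A generator and an earlier basis vector whose bracket is the `k`-th basis vector up to sign. -/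
def parent (k : ℕ) : ℕ × ℕ :=
  bif Nat.blt k 72 then
    (List.range 6).foldr (fun s r =>
      match entry 8 rootPositions (Nat.mod (Nat.add (key (Nat.mod k 36)) (key (Nat.add s 36))) 979) with
      | 0 => r
      | p + 1 => bif Nat.blt p 36 then
          (bif Nat.blt k 36 then (s, p) else (Nat.add s 36, Nat.add p 36)) else r) (0, 78)
  else (Nat.sub k 72, Nat.sub k 36)

def actCheck (i j n : ℕ) : Bool :=
  (addSMul (-1) (linExtend (fun k => act k n) (sc i j))
    (addSMul (-1) (linExtend (act j) (act i n)) (linExtend (act i) (act j n)))).isEmpty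

def jacobiCheck (k : ℕ) : Bool :=
  let s := (parent k).1
  let j := (parent k).2
  isGen s && Nat.blt s k && Nat.blt j k && match sc s j with
    | [(k', c)] => Nat.beq k k' && !Nat.beq c.natAbs 0 && (List.range 78).all fun m =>
      (addSMul (-c) (sc k m) (addSMul (-1) (linExtend (sc j) (sc s m))
        (linExtend (sc s) (sc j m)))).isEmpty
    | _ => false

set_option maxRecDepth 4000 in
lemma actCheck_eq : (((List.range 78).filter isGen).all fun i =>
    (List.range 78).all fun j => (List.range 27).all fun n => actCheck i j n) = true := by
  decide +kernel

set_option maxRecDepth 4000 in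
lemma jacobiCheck_eq : ((List.range 78).all fun k => isGen k || jacobiCheck k) = true := by
  decide +kernel

/-- The matrix entry `(n, m)` of the `k`-th basis vector. -/
def matrixEntry (n m k : ℕ) : ℤ :=
  match act k n with
  | [(p, c)] => bif Nat.beq p m then c else 0
  | _ => 0

def entryRow (n m : ℕ) : List ℤ := (List.range 78).map (matrixEntry n m)

def firstEntry (k : ℕ) : ℕ × ℕ :=
  (List.range 27).foldr (fun n r => match act k n with
    | [(p, _)] => (n, p)
    | _ => r) (0, 0)

set_option maxRecDepth 4000 in
lemma fullRank_entryRow : fullRank 78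
    (((List.range 72).map firstEntry ++ (List.range 27).map fun n => (n, n)).map
      fun p => entryRow p.1 p.2) = true := by
  decide +kernel

end E6

namespace E6

attribute [local instance] LieRing.ofAssociativeRing LieAlgebra.ofAssociativeAlgebra

lemma sc_eq_nil {i j : ℕ} (h : 78 ≤ i ∨ 78 ≤ j) : sc i j = [] := by
  unfold sc
  have e1 : ∀ a b, Nat.blt a b = decide (a < b) := fun a b => by
    rw [Bool.eq_iff_iff]; simp [Nat.blt_eq]
  simp only [e1]
  rcases h with h | h
  · rw [decide_eq_false (by omega : ¬ i < 72), decide_eq_false (by omega : ¬ i < 78)]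
    rfl
  · rw [decide_eq_false (by omega : ¬ j < 72), decide_eq_false (by omega : ¬ j < 78)]
    simp

lemma act_eq_nil {k n : ℕ} (h : 78 ≤ k ∨ 27 ≤ n) : act k n = [] := by
  unfold act
  have e1 : ∀ a b, Nat.blt a b = decide (a < b) := fun a b => by
    rw [Bool.eq_iff_iff]; simp [Nat.blt_eq]
  simp only [e1]
  rcases h with h | h
  · rw [decide_eq_false (by omega : ¬ k < 72), decide_eq_false (by omega : ¬ k < 78)]
    simp
  · rw [decide_eq_false (by omega : ¬ n < 27)]
    rfl

/-- The space of the 27-dimensional representation, on which the basis vectors from number 27 on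
are acted upon trivially. -/
def Rep : Type := ℕ →₀ ℂ

noncomputable instance : AddCommGroup Rep := inferInstanceAs (AddCommGroup (ℕ →₀ ℂ))

noncomputable instance : Module ℂ Rep := inferInstanceAs (Module ℂ (ℕ →₀ ℂ))

noncomputable def repBasis : Module.Basis ℕ ℂ Rep := ⟨LinearEquiv.refl ℂ (ℕ →₀ ℂ)⟩

noncomputable def weightVector (n : ℕ) : Rep := repBasis n

/-- The operators of the 27-dimensional representation. -/
noncomputable def operator (k : ℕ) : Module.End ℂ Rep :=
  repBasis.constr ℂ fun n => combine weightVector (act k n)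

lemma operator_weightVector (k n : ℕ) :
    operator k (weightVector n) = combine weightVector (act k n) := by
  simp [operator, weightVector]

lemma operator_eq_zero {k : ℕ} (h : 78 ≤ k) : operator k = 0 := by
  refine repBasis.ext fun n => ?_
  simpa [act_eq_nil (.inl h), combine, weightVector] using operator_weightVector k n

lemma combine_eq_zero_of_isEmpty {M : Type*} [AddCommGroup M] [Module ℂ M] (B : ℕ → M)
    {u : List (ℕ × ℤ)} (h : u.isEmpty = true) : combine B u = 0 := by
  rw [List.isEmpty_iff.1 h]
  rfl

lemma lie_operator_of_isGen {i : ℕ} (hi : isGen i = true) (hi' : i < 78) (j : ℕ) :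
    ⁅operator i, operator j⁆ = combine operator (sc i j) := by
  by_cases hj : 78 ≤ j
  · rw [operator_eq_zero hj, sc_eq_nil (.inr hj), lie_zero, combine]
  refine repBasis.ext fun n => ?_
  have key : ∀ k u, operator k (combine weightVector u) =
      combine weightVector (linExtend (act k) u) := fun k u =>
    (combine_linExtend _ _ (operator k) (act k) (operator_weightVector k) u).symm
  have key' : combine operator (sc i j) (weightVector n) =
      combine weightVector (linExtend (fun k => act k n) (sc i j)) :=
    (combine_linExtend _ _ (LinearMap.applyₗ (R := ℂ) (weightVector n))
      (fun k => act k n) (fun k => operator_weightVector k n) _).symm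
  change operator i (operator j (weightVector n)) - operator j (operator i (weightVector n)) =
    combine operator (sc i j) (weightVector n)
  rw [key', operator_weightVector, operator_weightVector, key, key]
  by_cases hn : 27 ≤ n
  · have : (fun k => act k n) = fun _ => [] := funext fun k => act_eq_nil (.inr hn)
    have hz : ∀ u, linExtend (fun _ => []) u = [] := by
      intro u
      induction u with
      | nil => rfl
      | cons a l ih => simp [linExtend, addSMul]
    rw [act_eq_nil (.inr hn), act_eq_nil (.inr hn), this, hz]
    simp [linExtend, combine]
  · have h := actCheck_eq
    simp only [List.all_eq_true, List.mem_filter, List.mem_range] at h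
    have := combine_eq_zero_of_isEmpty weightVector (h i ⟨hi', hi⟩ j (by omega) n (by omega))
    rw [combine_addSMul, combine_addSMul] at this
    rw [← sub_eq_zero]
    rw [← this]
    push_cast
    module

end E6

/-- A spanning family obeying the structure constants of type E₆. -/
structure IsE6Basis {L : Type*} [LieRing L] [LieAlgebra ℂ L] (B : ℕ → L) : Prop where
  lie : ∀ i j, ⁅B i, B j⁆ = combine B (E6.sc i j)
  span : ∀ x, ∃ c : ℕ → ℂ, x = ∑ k ∈ Finset.range 78, c k • B k
  indep : ∀ c : ℕ → ℂ, ∑ k ∈ Finset.range 78, c k • B k = 0 → ∀ k < 78, c k = 0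

namespace E6

attribute [local instance] LieRing.ofAssociativeRing LieAlgebra.ofAssociativeAlgebra

lemma lie_combine {L : Type*} [LieRing L] [LieAlgebra ℂ L] {B : ℕ → L} {S : ℕ → List (ℕ × ℤ)} {x : L}
    (h : ∀ j, ⁅x, B j⁆ = combine B (S j)) (u : List (ℕ × ℤ)) :
    ⁅x, combine B u⁆ = combine B (linExtend S u) :=
  (combine_linExtend B B (LieAlgebra.ad ℂ L x : L →ₗ[ℂ] L) S (fun k => by simpa using h k) u).symm

lemma exists_parent {k : ℕ} (hk : k < 78) (hg : ¬ isGen k = true) :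
    ∃ s j : ℕ, ∃ c : ℤ, isGen s = true ∧ s < k ∧ j < k ∧ c ≠ 0 ∧ sc s j = [(k, c)] ∧
      ∀ m < 78, (addSMul (-c) (sc k m) (addSMul (-1) (linExtend (sc j) (sc s m))
        (linExtend (sc s) (sc j m)))).isEmpty = true := by
  have hc := jacobiCheck_eq
  simp only [List.all_eq_true, List.mem_range] at hc
  have hc := hc k hk
  rw [Bool.eq_false_iff.2 hg, Bool.false_or] at hc
  unfold jacobiCheck at hc
  simp only [Bool.and_eq_true] at hc
  obtain ⟨⟨⟨hs, hsk⟩, hlt⟩, hc⟩ := hc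
  split at hc
  · rename_i k' c hsc
    simp only [Bool.and_eq_true, List.all_eq_true, List.mem_range] at hc
    obtain ⟨⟨hk', hc0⟩, hc⟩ := hc
    obtain rfl := Nat.eq_of_beq_eq_true hk'
    refine ⟨_, _, c, hs, by simpa [Nat.blt_eq] using hsk, by simpa [Nat.blt_eq] using hlt, ?_, hsc, hc⟩
    rintro rfl
    simp at hc0
  · simp at hc

/-- The Jacobi identity propagates the structure constants from the generators. -/
lemma lie_of_isGen {L : Type*} [LieRing L] [LieAlgebra ℂ L] {B : ℕ → L}
    (hB : ∀ k, 78 ≤ k → B k = 0)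
    (h : ∀ i < 78, isGen i = true → ∀ j, ⁅B i, B j⁆ = combine B (sc i j)) (i j : ℕ) :
    ⁅B i, B j⁆ = combine B (sc i j) := by
  induction i using Nat.strong_induction_on generalizing j with
  | _ k ih =>
    by_cases hk : 78 ≤ k
    · rw [hB k hk, sc_eq_nil (.inl hk), zero_lie, combine]
    by_cases hj : 78 ≤ j
    · rw [hB j hj, sc_eq_nil (.inr hj), lie_zero, combine]
    by_cases hg : isGen k = true
    · exact h k (by omega) hg j
    obtain ⟨s, t, c, hs, hsk, hlt, hc0, hsc, hc⟩ := exists_parent (by omega) hg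
    have hbs := h s (by omega) hs
    have e := combine_eq_zero_of_isEmpty B (hc j (by omega))
    have f1 := combine_linExtend B B (LieAlgebra.ad ℂ L (B s) : L →ₗ[ℂ] L) (sc s)
      (fun k => by simpa using hbs k) (sc t j)
    have f2 := combine_linExtend B B (LieAlgebra.ad ℂ L (B t) : L →ₗ[ℂ] L) (sc t)
      (fun k => by simpa using ih t hlt k) (sc s j)
    rw [combine_addSMul, combine_addSMul, f1, f2, ← ih t hlt j, ← hbs j] at e
    have hst := hbs t
    rw [hsc] at hst
    simp only [combine, add_zero] at hst
    have hc0' : (c : ℂ) ≠ 0 := by exact_mod_cast hc0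
    have := congrArg (fun z => ⁅z, B j⁆) hst
    simp only [lie_lie, smul_lie] at this
    simp only [LieAlgebra.ad_apply] at e
    have : (c : ℂ) • (⁅B k, B j⁆ - combine B (sc k j)) = 0 := by
      rw [smul_sub, ← this, ← e]
      push_cast
      module
    rw [smul_eq_zero] at this
    exact sub_eq_zero.1 (this.resolve_left hc0')

lemma lie_operator (i j : ℕ) : ⁅operator i, operator j⁆ = combine operator (sc i j) :=
  lie_of_isGen (fun _ => operator_eq_zero) (fun _ hi hg j => lie_operator_of_isGen hg hi j) i j

end E6

namespace E6

attribute [local instance] LieRing.ofAssociativeRing LieAlgebra.ofAssociativeAlgebra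

lemma repr_operator (n m k : ℕ) :
    repBasis.repr (operator k (weightVector n)) m = matrixEntry n m k := by
  rw [operator_weightVector, matrixEntry]
  have : act k n = [] ∨ ∃ p c, act k n = [(p, c)] := by
    unfold act
    dsimp only
    cases (Nat.blt n 27)
    · simp
    cases (Nat.blt k 72)
    · cases (Nat.blt k 78)
      · simp
      · simp only [cond_true, cond_false]
        unfold addTo
        split <;> simp
    · simp only [cond_true]
      split <;> simp
  rcases this with h | ⟨p, c, h⟩
  · simp [h, combine]
  · simp only [h, combine, weightVector, add_zero, map_smul, Module.Basis.repr_self,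
      Finsupp.smul_apply, Finsupp.single_apply]
    by_cases hpm : p = m
    · simp [hpm]
    · have : Nat.beq p m = false := by
        rw [Bool.eq_false_iff]; exact fun h => hpm (Nat.eq_of_beq_eq_true h)
      simp [hpm, this]

lemma rowApply_map_range (F : ℕ → ℤ) (N : ℕ) (v : ℕ → ℂ) :
    rowApply ((List.range N).map F) v = ∑ k ∈ Finset.range N, v k * F k := by
  induction N generalizing F v with
  | zero => simp [rowApply]
  | succ N ih =>
    rw [List.range_succ_eq_map, List.map_cons, List.map_map, rowApply, ih,
      Finset.sum_range_succ']
    simp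
    ring

lemma repr_sum_operator (c : ℕ → ℂ) (N n m : ℕ) :
    repBasis.repr ((∑ k ∈ Finset.range N, c k • operator k) (weightVector n)) m =
      ∑ k ∈ Finset.range N, c k * matrixEntry n m k := by
  simp [repr_operator]

lemma operator_indep (c : ℕ → ℂ) (h : ∑ k ∈ Finset.range 78, c k • operator k = 0) :
    ∀ k < 78, c k = 0 := by
  intro k hk
  set c' : ℕ → ℂ := fun k => if k < 78 then c k else 0 with hc'
  have hsum : ∀ (n m : ℕ), rowApply (entryRow n m) c' = 0 := by
    intro n m
    have h1 := repr_sum_operator c 78 n m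
    rw [h] at h1
    rw [entryRow, rowApply_map_range]
    simp only [LinearMap.zero_apply, map_zero, Finsupp.zero_apply] at h1
    rw [h1]
    refine Finset.sum_congr rfl fun k hk => ?_
    simp only [hc', if_pos (Finset.mem_range.1 hk)]
  have := eq_zero_of_fullRank fullRank_entryRow (v := c') (k := k) (by
    intro r hr
    obtain ⟨p, -, rfl⟩ := List.mem_map.1 hr
    exact hsum _ _) hk (fun k hk => by simp [hc', not_lt.2 hk])
  simpa [hc', hk] using this

lemma operator_zero_ne : operator 0 ≠ 0 := by
  intro h
  have := operator_indep (fun k => if k = 0 then 1 else 0) (by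
    rw [Finset.sum_eq_single 0] <;> simp [h]
    intro b _ hb h'
    exact absurd h' hb) 0 (by norm_num)
  simp at this

/-- The numbering of the Chevalley generators. -/
def genIndex : CartanMatrix.Generators (Fin 6) → ℕ
  | .H i => 72 + i
  | .E i => i
  | .F i => 36 + i

/-- The span of the operators, as a Lie algebra. -/
noncomputable def operatorAlgebra : LieSubalgebra ℂ (Module.End ℂ Rep) where
  __ := Submodule.span ℂ (Set.range operator)
  lie_mem' := by
    intro x y hx hy
    induction hx, hy using Submodule.span_induction₂ with
    | mem_mem x y hx hy =>
      obtain ⟨i, rfl⟩ := hx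
      obtain ⟨j, rfl⟩ := hy
      rw [lie_operator]
      generalize sc i j = l
      induction l with
      | nil => exact Submodule.zero_mem _
      | cons a l ih =>
        exact Submodule.add_mem _ (Submodule.smul_mem _ _ (Submodule.subset_span ⟨_, rfl⟩)) ih
    | zero_left y hy => rw [zero_lie]; exact Submodule.zero_mem _
    | zero_right x hx => rw [lie_zero]; exact Submodule.zero_mem _
    | add_left x y z _ _ _ h1 h2 => rw [add_lie]; exact Submodule.add_mem _ h1 h2
    | add_right x y z _ _ _ h1 h2 => rw [lie_add]; exact Submodule.add_mem _ h1 h2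
    | smul_left r x y _ _ h => rw [smul_lie]; exact Submodule.smul_mem _ _ h
    | smul_right r x y _ _ h => rw [lie_smul]; exact Submodule.smul_mem _ _ h

noncomputable def rep : FreeLieAlgebra ℂ (CartanMatrix.Generators (Fin 6)) →ₗ⁅ℂ⁆ Module.End ℂ Rep :=
  FreeLieAlgebra.lift ℂ fun g => operator (genIndex g)

lemma rep_of (g : CartanMatrix.Generators (Fin 6)) :
    rep (FreeLieAlgebra.of ℂ g) = operator (genIndex g) := by
  simp [rep]

lemma rep_mem_span (x : FreeLieAlgebra ℂ (CartanMatrix.Generators (Fin 6))) :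
    rep x ∈ Submodule.span ℂ (Set.range operator) := by
  let φ : FreeLieAlgebra ℂ (CartanMatrix.Generators (Fin 6)) →ₗ⁅ℂ⁆ operatorAlgebra :=
    FreeLieAlgebra.lift ℂ fun g =>
      ⟨operator (genIndex g), Submodule.subset_span (s := Set.range operator) ⟨_, rfl⟩⟩
  have : rep = operatorAlgebra.incl.comp φ := by
    apply FreeLieAlgebra.hom_ext
    intro g
    simp [rep, φ]
  rw [this]
  exact (φ x).2

lemma rep_ad_pow (i j n : ℕ) (x y : FreeLieAlgebra ℂ (CartanMatrix.Generators (Fin 6)))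
    (hx : rep x = operator i) (hy : rep y = operator j) :
    rep (((LieAlgebra.ad ℂ _ x) ^ n) ⁅x, y⁆) =
      combine operator ((linExtend (sc i))^[n] (sc i j)) := by
  induction n with
  | zero => simp [hx, hy, lie_operator]
  | succ n ih =>
    rw [pow_succ', Module.End.mul_apply, LieAlgebra.ad_apply, LieHom.map_lie, ih,
      Function.iterate_succ_apply', hx, lie_combine (lie_operator i)]

lemma sc_serre : ∀ i j : Fin 6,
    sc (72 + i) (72 + j) = [] ∧
    sc i (36 + j) = (if i = j then [(72 + i.1, 1)] else []) ∧
    sc (72 + i) j = addTo (CartanMatrix.E₆ i j) j [] ∧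
    sc (72 + i) (36 + j) = addTo (-CartanMatrix.E₆ i j) (36 + j) [] ∧
    (linExtend (sc i))^[(-CartanMatrix.E₆ i j).toNat] (sc i j) = [] ∧
    (linExtend (sc (36 + i)))^[(-CartanMatrix.E₆ i j).toNat] (sc (36 + i) (36 + j)) = [] := by
  decide +kernel

open CartanMatrix.Relations in
lemma rep_eq_zero_of_mem_toSet {x : FreeLieAlgebra ℂ (CartanMatrix.Generators (Fin 6))}
    (hx : x ∈ toSet ℂ CartanMatrix.E₆) : rep x = 0 := by
  simp only [toSet, Set.mem_union, Set.mem_range, Prod.exists, HH, EF, HE,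
    HF, adE, adF, Function.uncurry_apply_pair, Function.comp_apply] at hx
  rcases hx with ((((⟨i, j, rfl⟩ | ⟨i, j, rfl⟩) | ⟨i, j, rfl⟩) | ⟨i, j, rfl⟩) | ⟨i, j, rfl⟩) |
    ⟨i, j, rfl⟩ <;> obtain ⟨h1, h2, h3, h4, h5, h6⟩ := sc_serre i j
  · rw [LieHom.map_lie, rep_of, rep_of, genIndex, genIndex, lie_operator, h1, combine]
  · by_cases hij : i = j
    · subst hij
      simp only [if_true, map_sub, LieHom.map_lie, rep_of, genIndex, lie_operator] at h2 ⊢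
      simp [h2, combine]
    · simp only [hij, if_false, LieHom.map_lie, rep_of, genIndex, lie_operator] at h2 ⊢
      simp [h2, combine]
  · rw [map_sub, LieHom.map_lie, map_zsmul, rep_of, rep_of, genIndex, genIndex, lie_operator, h3,
      combine_addTo,
      Int.cast_smul_eq_zsmul]
    simp only [combine, add_zero, sub_self]
  · rw [map_add, LieHom.map_lie, map_zsmul, rep_of, rep_of, genIndex, genIndex, lie_operator, h4,
      combine_addTo,
      Int.cast_smul_eq_zsmul]
    simp only [combine, neg_smul, add_zero, neg_add_cancel]
  · exact (rep_ad_pow i j _ _ _ (rep_of (.E i)) (rep_of (.E j))).trans (by rw [h5, combine])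
  · exact (rep_ad_pow (36 + i) (36 + j) _ _ _ (rep_of (.F i)) (rep_of (.F j))).trans
      (by rw [h6, combine])

lemma exists_rep_eq (k : ℕ) : ∃ x, rep x = operator k := by
  induction k using Nat.strong_induction_on with
  | _ k ih =>
    by_cases hk : 78 ≤ k
    · exact ⟨0, by rw [map_zero, operator_eq_zero hk]⟩
    by_cases hg : isGen k = true
    · have : k < 6 ∨ 36 ≤ k ∧ k < 42 := by
        revert hg
        simp [isGen, Nat.blt_eq]
        omega
      rcases this with h | h
      · exact ⟨_, rep_of (.E ⟨k, h⟩)⟩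
      · refine ⟨_, (rep_of (.F ⟨k - 36, by omega⟩)).trans ?_⟩
        simp only [genIndex]
        congr 1
        omega
    · obtain ⟨s, j, c, hs, hsj, hlt, hc, hsc, -⟩ := exists_parent (by omega) hg
      obtain ⟨x, hx⟩ := ih s hsj
      obtain ⟨y, hy⟩ := ih j hlt
      refine ⟨(c : ℂ)⁻¹ • ⁅x, y⁆, ?_⟩
      rw [map_smul, LieHom.map_lie, hx, hy, lie_operator, hsc, combine, combine, add_zero,
        inv_smul_smul₀ (by exact_mod_cast hc)]

/-- Every simple Lie algebra of type E₆ has a basis with the structure constants `E6.sc`. -/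
theorem exists_isE6Basis (L : Type*) [LieRing L] [LieAlgebra ℂ L] [LieAlgebra.IsSimple ℂ L]
    (htype : Nonempty (L ≃ₗ⁅ℂ⁆ LieAlgebra.e₆ ℂ)) : ∃ B : ℕ → L, IsE6Basis B := by
  obtain ⟨φ⟩ := htype
  let I := CartanMatrix.Relations.toIdeal ℂ CartanMatrix.E₆
  let π : FreeLieAlgebra ℂ (CartanMatrix.Generators (Fin 6)) →ₗ⁅ℂ⁆ LieAlgebra.e₆ ℂ :=
    { (LieSubmodule.Quotient.mk' I : _ →ₗ[ℂ] _ ⧸ I) with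
      map_lie' := fun {x y} => LieSubmodule.Quotient.mk_bracket (I := I) x y }
  have hπ : ∀ x, π x = 0 ↔ x ∈ I := fun x => LieSubmodule.Quotient.mk_eq_zero I
  have hπs : Function.Surjective π := LieSubmodule.Quotient.surjective_mk' I
  let g : FreeLieAlgebra ℂ (CartanMatrix.Generators (Fin 6)) →ₗ⁅ℂ⁆ L := φ.symm.toLieHom.comp π
  have hgs : Function.Surjective g := φ.symm.surjective.comp hπs
  have hg : ∀ x, g x = 0 → rep x = 0 := by
    intro x hx
    have : π x = 0 := φ.symm.injective (by simpa [g] using hx)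
    rw [hπ] at this
    have hI : I ≤ rep.ker := by
      refine LieSubmodule.lieSpan_le.2 ?_
      intro x hx
      exact rep_eq_zero_of_mem_toSet hx
    exact hI this
  have hg' : ∀ x, rep x = 0 → g x = 0 := by
    intro x hx
    have hmem : g x ∈ LieIdeal.map g rep.ker := LieIdeal.mem_map hx
    rcases LieAlgebra.IsSimple.eq_bot_or_eq_top (LieIdeal.map g rep.ker) with h | h
    · rw [h] at hmem
      simpa using hmem
    · exfalso
      have : g (FreeLieAlgebra.of ℂ (.E 0)) ∈ LieIdeal.map g rep.ker := by rw [h]; trivial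
      obtain ⟨⟨x, hx⟩, hxe⟩ := LieIdeal.mem_map_of_surjective hgs this
      have h0 := hg (x - FreeLieAlgebra.of ℂ (.E 0)) (by rw [map_sub, sub_eq_zero]; exact hxe)
      rw [map_sub, rep_of, (LieHom.mem_ker).1 hx, zero_sub, neg_eq_zero] at h0
      exact operator_zero_ne h0
  choose t ht using exists_rep_eq
  refine ⟨fun k => g (t k), ?_, ?_, ?_⟩
  · intro i j
    have h1 := map_combine (g : _ →ₗ[ℂ] L) t (sc i j)
    have h2 := map_combine (LieHom.toLinearMap rep) t (sc i j)
    have h3 : (LieHom.toLinearMap rep ∘ t : ℕ → Module.End ℂ Rep) = operator := funext ht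
    rw [h3] at h2
    rw [← LieHom.map_lie]
    refine Eq.trans (sub_eq_zero.1 ?_) h1
    refine (map_sub g _ _).symm.trans (hg' _ ?_)
    rw [map_sub, LieHom.map_lie, ht, ht, lie_operator]
    exact sub_eq_zero.2 h2.symm
  · intro x
    obtain ⟨y, rfl⟩ := hgs x
    have hy := rep_mem_span y
    generalize hz : rep y = z at hy
    have : ∃ c : ℕ → ℂ, z = ∑ k ∈ Finset.range 78, c k • operator k := by
      clear hz
      induction hy using Submodule.span_induction with
      | mem z hz =>
        obtain ⟨k, rfl⟩ := hz
        by_cases hk : k < 78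
        · exact ⟨fun m => if m = k then 1 else 0, by simp [ite_smul, hk]⟩
        · exact ⟨0, by simp [operator_eq_zero (not_lt.1 hk)]⟩
      | zero => exact ⟨0, by simp⟩
      | add a b _ _ ha hb =>
        obtain ⟨c, rfl⟩ := ha
        obtain ⟨d, rfl⟩ := hb
        exact ⟨c + d, by simp [add_smul, Finset.sum_add_distrib]⟩
      | smul r a _ ha =>
        obtain ⟨c, rfl⟩ := ha
        exact ⟨r • c, by simp [Finset.smul_sum, mul_smul]⟩
    obtain ⟨c, hc⟩ := this
    refine ⟨c, ?_⟩
    have : g (y - ∑ k ∈ Finset.range 78, c k • t k) = 0 := hg' _ (by simp [hz, hc, ht])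
    rw [map_sub, sub_eq_zero] at this
    rw [this]
    simp
  · intro c hc
    apply operator_indep c
    have := hg (∑ k ∈ Finset.range 78, c k • t k) (by simpa using hc)
    simpa [ht] using this

end E6

namespace Sl2

open Module Module.End

variable {V : Type*} [AddCommGroup V] [Module ℂ V] {H E F : Module.End ℂ V}

lemma pow_mul_raise (hEF : E * F = F * E + H) (hHE : H * E = E * H + 2 • E) (j : ℕ) :
    E ^ (j + 1) * F = F * E ^ (j + 1) + (j + 1 : ℂ) • ((H - (j : ℂ) • 1) * E ^ j) := by
  have hc : ∀ j : ℕ, H * E ^ j = E ^ j * H + (2 * j : ℂ) • E ^ j := by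
    intro j
    induction j with
    | zero => simp
    | succ j ih =>
      rw [pow_succ, ← mul_assoc, ih, add_mul, mul_assoc, hHE, mul_add, smul_mul_assoc, mul_smul_comm,
        mul_assoc]
      push_cast
      module
  induction j with
  | zero => simp [hEF]
  | succ j ih =>
    have h1 : E * (F * E ^ (j + 1)) = F * E ^ (j + 1 + 1) + H * E ^ (j + 1) := by
      rw [← mul_assoc, hEF, add_mul, mul_assoc, ← pow_succ']
    have h2 : E * (H * E ^ j) = H * E ^ (j + 1) - (2 : ℂ) • E ^ (j + 1) := by
      rw [← mul_assoc, eq_sub_of_add_eq hHE.symm, sub_mul, mul_assoc, pow_succ', smul_mul_assoc,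
        ← Nat.cast_smul_eq_nsmul ℂ]
      norm_num
    rw [pow_succ' E (j + 1), mul_assoc, ih, mul_add, h1, mul_smul_comm, sub_mul, mul_sub, h2,
      sub_mul, smul_mul_assoc, smul_mul_assoc, one_mul, one_mul, mul_smul_comm, ← pow_succ', ← pow_succ']
    push_cast
    module

lemma mem_maxGenEigenspace_raise {c : ℂ} (hHE : H * E = E * H + c • E) {μ : ℂ} {z : V}
    (hz : z ∈ H.maxGenEigenspace μ) : E z ∈ H.maxGenEigenspace (μ + c) := by
  rw [mem_maxGenEigenspace] at hz ⊢
  obtain ⟨k, hk⟩ := hz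
  refine ⟨k, ?_⟩
  have : SemiconjBy E (H - μ • 1) (H - (μ + c) • 1) := by
    rw [SemiconjBy, mul_sub, sub_mul, hHE, mul_smul_comm, smul_mul_assoc, mul_one, one_mul]
    module
  have := congrArg (fun g => g z) (this.pow_right k).eq
  simp only [Module.End.mul_apply] at this
  rw [← this, hk, map_zero]

lemma isNilpotent_raise [FiniteDimensional ℂ V] {c : ℂ} (hc : c ≠ 0)
    (hHE : H * E = E * H + c • E) : IsNilpotent E := by
  rw [Module.End.isNilpotent_iff_of_finite]
  intro v
  have hv : v ∈ ⨆ μ, H.maxGenEigenspace μ := by simp [iSup_maxGenEigenspace_eq_top]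
  induction hv using Submodule.iSup_induction' with
  | mem μ z hz =>
    have hmem : ∀ n : ℕ, (E ^ n) z ∈ H.maxGenEigenspace (μ + n * c) := by
      intro n
      induction n with
      | zero => simpa using hz
      | succ n ih =>
        rw [pow_succ', Module.End.mul_apply]
        have := mem_maxGenEigenspace_raise hHE ih
        convert this using 2
        push_cast
        ring
    by_contra! hne
    have hinj : Function.Injective fun n : ℕ => μ + n * c := by
      intro a b hab
      simpa [hc] using hab
    refine Set.infinite_of_injective_forall_mem (s := {μ | H.HasEigenvalue μ}) hinj (fun n => ?_)
      H.finite_hasEigenvalue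
    change H.HasUnifEigenvalue _ _
    rw [← Module.End.hasUnifEigenvalue_iff_hasUnifEigenvalue_one (k := ⊤) (by simp),
      Module.End.HasUnifEigenvalue]
    intro h
    refine hne n ?_
    have := hmem n
    simpa [Module.End.maxGenEigenspace, h] using this
  | zero => exact ⟨0, by simp⟩
  | add x y _ _ hx hy =>
    obtain ⟨a, ha⟩ := hx
    obtain ⟨b, hb⟩ := hy
    refine ⟨a + b, ?_⟩
    have h1 : (E ^ (a + b)) x = 0 := by
      rw [add_comm, pow_add, Module.End.mul_apply, ha, map_zero]
    have h2 : (E ^ (a + b)) y = 0 := by rw [pow_add, Module.End.mul_apply, hb, map_zero]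
    rw [map_add, h1, h2, add_zero]

/-- The kernel of the raising operator is spanned by eigenvectors with natural eigenvalues. -/
lemma mem_iSup_eigenspace_of_raise_eq_zero (hEF : E * F = F * E + H)
    (hHE : H * E = E * H + 2 • E) (hHF : H * F = F * H + (-2 : ℂ) • F) (k : ℕ) {w : V}
    (hw : E w = 0) (hk : (F ^ k) w = 0) : w ∈ ⨆ n : Fin k, H.eigenspace (n : ℂ) := by
  induction k generalizing w with
  | zero => simp_all
  | succ k ih =>
    have hF := pow_mul_raise (H := -H) (E := F) (F := E) (by rw [hEF]; abel)
      (by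
        rw [neg_mul, hHF, mul_neg, ← Nat.cast_smul_eq_nsmul ℂ]
        push_cast
        module) k
    have hFH : ∀ k : ℕ, H * F ^ k = F ^ k * H + (-2 * k : ℂ) • F ^ k := by
      intro j
      induction j with
      | zero => simp
      | succ j ih =>
        rw [pow_succ, ← mul_assoc, ih, add_mul, mul_assoc, hHF, mul_add, smul_mul_assoc,
          mul_smul_comm, mul_assoc]
        push_cast
        module
    have h1 : (F ^ k) (H w - (k : ℂ) • w) = 0 := by
      have h2 := congrArg (fun g => g w) hF
      have h3 := congrArg (fun g => g w) (hFH k)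
      simp only [Module.End.mul_apply, hw, hk, LinearMap.add_apply, LinearMap.smul_apply, map_zero,
        zero_add, LinearMap.sub_apply, LinearMap.neg_apply, Module.End.one_apply] at h2 h3
      rw [eq_comm, smul_eq_zero] at h2
      have h2 := h2.resolve_left (by exact_mod_cast k.succ_ne_zero)
      rw [map_sub, map_smul]
      rw [h3] at h2
      have : -((F ^ k) (H w) + (-2 * (k : ℂ)) • (F ^ k) w) - (k : ℂ) • (F ^ k) w =
        -((F ^ k) (H w) - (k : ℂ) • (F ^ k) w) := by module
      rw [this, neg_eq_zero] at h2
      exact h2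
    have h2 : E (H w - (k : ℂ) • w) = 0 := by
      have := congrArg (fun g => g w) hHE
      simp only [Module.End.mul_apply, LinearMap.add_apply, LinearMap.smul_apply, hw, map_zero,
        smul_zero, add_zero] at this
      rw [map_sub, map_smul, hw, ← this, smul_zero, sub_zero]
    have h3 := ih h2 h1
    have hs : ∀ y ∈ ⨆ n : Fin k, H.eigenspace (n : ℂ), ∃ s ∈ ⨆ n : Fin k, H.eigenspace (n : ℂ),
        H s - (k : ℂ) • s = y := by
      intro y hy
      induction hy using Submodule.iSup_induction' with
      | mem n y hy =>
        have hn : (n : ℂ) - k ≠ 0 := by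
          rw [sub_ne_zero]
          exact_mod_cast n.2.ne
        refine ⟨((n : ℂ) - k)⁻¹ • y,
          Submodule.mem_iSup_of_mem n (Submodule.smul_mem _ _ hy), ?_⟩
        rw [mem_eigenspace_iff] at hy
        rw [map_smul, hy, smul_comm (k : ℂ), ← smul_sub, ← sub_smul, inv_smul_smul₀ hn]
      | zero => exact ⟨0, Submodule.zero_mem _, by simp⟩
      | add x y _ _ hx hy =>
        obtain ⟨s, hs, rfl⟩ := hx
        obtain ⟨t, ht, rfl⟩ := hy
        exact ⟨s + t, Submodule.add_mem _ hs ht, by rw [map_add]; module⟩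
    obtain ⟨s, hs, hsw⟩ := hs _ h3
    have h4 : w - s ∈ H.eigenspace (k : ℂ) := by
      rw [mem_eigenspace_iff, map_sub, smul_sub, sub_eq_sub_iff_sub_eq_sub, ← hsw]
    rw [← sub_add_cancel w s]
    refine Submodule.add_mem _ (Submodule.mem_iSup_of_mem (Fin.last k) (by simpa using h4)) ?_
    have hle : ⨆ n : Fin k, H.eigenspace (n : ℂ) ≤ ⨆ n : Fin (k + 1), H.eigenspace (n : ℂ) :=
      iSup_le fun n => le_iSup_of_le n.castSucc (by simp)
    exact hle hs

lemma raise_ker_disjoint [FiniteDimensional ℂ V] (hEF : E * F = F * E + H)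
    (hHE : H * E = E * H + 2 • E) (hHF : H * F = F * H + (-2 : ℂ) • F) :
    Disjoint (LinearMap.ker E) (LinearMap.range F) := by
  have hHE' : H * E = E * H + (2 : ℂ) • E := by
    rw [hHE, ← Nat.cast_smul_eq_nsmul ℂ]; norm_num
  have hker : LinearMap.ker (E * F) ≤ LinearMap.ker F := by
    have hcomm : H * (E * F) = E * F * H := by
      rw [← mul_assoc, hHE', add_mul, mul_assoc, hHF, mul_add, mul_assoc, smul_mul_assoc,
        mul_smul_comm]
      module
    have hst : ∀ x ∈ LinearMap.ker (E * F), H x ∈ LinearMap.ker (E * F) := by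
      intro x hx
      rw [LinearMap.mem_ker] at hx ⊢
      rw [← Module.End.mul_apply, ← hcomm, Module.End.mul_apply, hx, map_zero]
    have := Submodule.inf_iSup_genEigenspace hst ⊤
    rw [show ⨆ μ, H.genEigenspace μ ⊤ = ⊤ from iSup_maxGenEigenspace_eq_top H, inf_top_eq] at this
    rw [this]
    refine iSup_le fun μ => ?_
    rintro z ⟨hz, hzμ⟩
    change z ∈ H.maxGenEigenspace μ at hzμ
    rw [SetLike.mem_coe, LinearMap.mem_ker, Module.End.mul_apply] at hz
    rw [LinearMap.mem_ker]
    have hinj : ∀ ν a : ℂ, ν ≠ a → ∀ x ∈ H.maxGenEigenspace ν, H x = a • x → x = 0 := by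
      intro ν a hνa x hx hxa
      have h1 : x ∈ H.maxGenEigenspace a :=
        Module.End.mem_maxGenEigenspace _ _ _ |>.2 ⟨1, by simp [hxa]⟩
      have := (Module.End.independent_maxGenEigenspace H).pairwiseDisjoint hνa
      exact Submodule.disjoint_def.1 this x hx h1
    by_cases hμ : ∃ j : ℕ, μ = -j
    · obtain ⟨j, rfl⟩ := hμ
      have h1 := mem_maxGenEigenspace_raise hHF hzμ
      obtain ⟨k, hk⟩ := isNilpotent_raise (c := -2) (by norm_num) hHF
      have h2 := mem_iSup_eigenspace_of_raise_eq_zero hEF hHE hHF k hz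
        (by rw [hk, LinearMap.zero_apply])
      refine Submodule.disjoint_def.1
        ((Module.End.independent_maxGenEigenspace H) (-(j : ℂ) + -2)) _ h1 ?_
      revert h2
      generalize F z = y
      revert y
      change ⨆ n : Fin k, H.eigenspace (n : ℂ) ≤ _
      refine iSup_le fun n => ?_
      refine le_iSup₂_of_le (n : ℂ) ?_ ?_
      · have : ((n.1 : ℤ) : ℂ) ≠ ((-j - 2 : ℤ) : ℂ) := by
          rw [Ne, Int.cast_inj]
          omega
        push_cast at this
        simpa [sub_eq_add_neg] using this
      · exact (Module.End.genEigenspace H (n : ℂ)).mono le_top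
    · push Not at hμ
      have hmem : ∀ n : ℕ, (E ^ n) z ∈ H.maxGenEigenspace (μ + n * 2) := by
        intro n
        induction n with
        | zero => simpa using hzμ
        | succ n ih =>
          rw [pow_succ', Module.End.mul_apply]
          convert mem_maxGenEigenspace_raise hHE' ih using 2
          push_cast
          ring
      have hdown : ∀ n : ℕ, (E ^ n) z = 0 → z = 0 := by
        intro n
        induction n with
        | zero => simp
        | succ n ih =>
          intro h
          apply ih
          have h2 := congrArg (fun g => g z) (pow_mul_raise hEF hHE n)
          simp only [Module.End.mul_apply, LinearMap.add_apply, LinearMap.smul_apply, h, map_zero,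
            zero_add, LinearMap.sub_apply, Module.End.one_apply] at h2
          rw [pow_succ, Module.End.mul_apply, hz, map_zero, eq_comm, smul_eq_zero] at h2
          have h2 := h2.resolve_left (by exact_mod_cast n.succ_ne_zero)
          refine hinj _ n ?_ _ (hmem n) (sub_eq_zero.1 h2)
          intro h
          exact hμ n (by linear_combination h)
      obtain ⟨k, hk⟩ := isNilpotent_raise (c := 2) (by norm_num) hHE'
      rw [hdown k (by rw [hk, LinearMap.zero_apply]), map_zero]
  rw [Submodule.disjoint_def]
  rintro _ hx ⟨z, rfl⟩
  exact hker hx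

theorem iSup_eigenspace_eq_top [FiniteDimensional ℂ V] (hEF : E * F = F * E + H)
    (hHE : H * E = E * H + 2 • E) (hHF : H * F = F * H + (-2 : ℂ) • F) :
    ⨆ n : ℤ, H.eigenspace (n : ℂ) = ⊤ := by
  have d1 := raise_ker_disjoint hEF hHE hHF
  have d2 := raise_ker_disjoint (H := -H) (E := F) (F := E) (by rw [hEF]; abel)
      (by
        rw [neg_mul, hHF, mul_neg, ← Nat.cast_smul_eq_nsmul ℂ]
        push_cast
        module)
      (by
        rw [neg_mul, hHE, mul_neg, ← Nat.cast_smul_eq_nsmul ℂ]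
        push_cast
        module)
  have htop : LinearMap.ker E ⊔ LinearMap.range F = ⊤ := by
    apply Submodule.eq_top_of_finrank_eq
    have e1 := Submodule.finrank_sup_add_finrank_inf_eq (LinearMap.ker E) (LinearMap.range F)
    have e2 := Submodule.finrank_sup_add_finrank_inf_eq (LinearMap.ker F) (LinearMap.range E)
    rw [d1.eq_bot, finrank_bot] at e1
    rw [d2.eq_bot, finrank_bot] at e2
    have e3 := LinearMap.finrank_range_add_finrank_ker E
    have e4 := LinearMap.finrank_range_add_finrank_ker F
    have e5 := Submodule.finrank_le (LinearMap.ker F ⊔ LinearMap.range E)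
    have e6 := Submodule.finrank_le (LinearMap.ker E ⊔ LinearMap.range F)
    omega
  set W := ⨆ n : ℤ, H.eigenspace (n : ℂ) with hW
  obtain ⟨k, hk⟩ := isNilpotent_raise (c := -2) (by norm_num) hHF
  have hker : LinearMap.ker E ≤ W := by
    intro w hw
    have := mem_iSup_eigenspace_of_raise_eq_zero hEF hHE hHF k hw (by rw [hk, LinearMap.zero_apply])
    exact (iSup_le fun n => le_iSup_of_le (n.1 : ℤ) (by simp) :
      ⨆ n : Fin k, H.eigenspace (n : ℂ) ≤ W) this
  have hFW : ∀ w ∈ W, F w ∈ W := by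
    intro w hw
    induction hw using Submodule.iSup_induction' with
    | mem n y hy =>
      refine Submodule.mem_iSup_of_mem (n - 2) ?_
      rw [mem_eigenspace_iff] at hy ⊢
      rw [← Module.End.mul_apply, hHF, LinearMap.add_apply, Module.End.mul_apply, hy, map_smul,
        LinearMap.smul_apply]
      push_cast
      module
    | zero => simp
    | add x y _ _ hx hy => rw [map_add]; exact add_mem hx hy
  have hall : ∀ n : ℕ, ∀ v, ∃ w ∈ W, ∃ u, v = w + (F ^ n) u := by
    intro n
    induction n with
    | zero => exact fun v => ⟨0, zero_mem _, v, by simp⟩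
    | succ n ih =>
      intro v
      have hv : v ∈ LinearMap.ker E ⊔ LinearMap.range F := by rw [htop]; trivial
      obtain ⟨a, ha, _, ⟨b, rfl⟩, rfl⟩ := Submodule.mem_sup.1 hv
      obtain ⟨w, hw, u, rfl⟩ := ih b
      refine ⟨a + F w, add_mem (hker ha) (hFW w hw), u, ?_⟩
      rw [map_add, pow_succ', Module.End.mul_apply]
      abel
  rw [eq_top_iff]
  intro v _
  obtain ⟨w, hw, u, rfl⟩ := hall k v
  rw [hk]
  simpa using hw

end Sl2

open Module in
/-- The operator `ad y` in coordinates. -/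
noncomputable def coordAd {L : Type*} [LieRing L] [LieAlgebra ℂ L] [FiniteDimensional ℂ L] :
    L →ₗ[ℂ] ((Fin (finrank ℂ L) → ℂ) →L[ℂ] (Fin (finrank ℂ L) → ℂ)) :=
  LinearMap.toContinuousLinearMap.toLinearMap ∘ₗ
    ((finBasis ℂ L).equivFun.conj : Module.End ℂ L ≃ₗ[ℂ] _).toLinearMap ∘ₗ
      (LieModule.toEnd ℂ L L : L →ₗ[ℂ] Module.End ℂ L)

section

variable {V : Type*} [NormedAddCommGroup V] [NormedSpace ℂ V] [CompleteSpace V]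

lemma hasSum_exp_apply (D : V →L[ℂ] V) (w : V) :
    HasSum (fun n : ℕ => (n.factorial⁻¹ : ℂ) • (D ^ n) w) (NormedSpace.exp D w) :=
  (NormedSpace.exp_series_hasSum_exp' (𝕂 := ℂ) D).mapL (ContinuousLinearMap.apply ℂ V w)

lemma exp_mul_exp_neg (D : V →L[ℂ] V) : NormedSpace.exp D * NormedSpace.exp (-D) = 1 := by
  let : NormedAlgebra ℚ ℂ := inferInstance
  let := NormedAlgebra.restrictScalars ℚ ℂ (V →L[ℂ] V)
  rw [← NormedSpace.exp_add_of_commute (Commute.neg_right (Commute.refl _)), add_neg_cancel,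
    NormedSpace.exp_zero]

lemma exp_bilinear (D : V →L[ℂ] V) (β : V →L[ℂ] V →L[ℂ] V)
    (hD : ∀ a b, D (β a b) = β (D a) b + β a (D b)) (a b : V) :
    NormedSpace.exp D (β a b) = β (NormedSpace.exp D a) (NormedSpace.exp D b) := by
  have hd : ∀ (c : V) (s : ℂ), HasDerivAt (fun s : ℂ => NormedSpace.exp (s • D) c)
      (D (NormedSpace.exp (s • D) c)) s := fun c s =>
    ((hasDerivAt_exp_smul_const' (𝕂 := ℂ) D s).clm_apply (hasDerivAt_const s c)).congr_deriv
      (by simp)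
  have hcomm : ∀ s : ℂ, Commute (NormedSpace.exp (s • D)) D := fun s =>
    ((Commute.refl D).smul_left s).exp_left
  have hf : ∀ s : ℂ, HasDerivAt (fun s : ℂ => NormedSpace.exp (-s • D)
      (β (NormedSpace.exp (s • D) a) (NormedSpace.exp (s • D) b))) 0 s := by
    intro s
    have h1 := (β.hasFDerivAt (x := NormedSpace.exp (s • D) a)).comp_hasDerivAt s (hd a s)
    have h2 := h1.clm_apply (hd b s)
    have h3 := (hasDerivAt_exp_smul_const (𝕂 := ℂ) D (-s)).scomp s (hasDerivAt_neg s)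
    refine (h3.clm_apply h2).congr_deriv ?_
    have e1 := (hcomm (-s)).eq
    simp only [Function.comp_apply, hD, neg_smul, one_smul, neg_apply,
      mul_apply_eq_comp, map_add]
    abel
  have hc := is_const_of_deriv_eq_zero (fun s => (hf s).differentiableAt) (fun s => (hf s).deriv) 1 0
  simp only [one_smul, neg_zero, zero_smul, NormedSpace.exp_zero,
    one_apply_eq_self] at hc
  have h4 := congrArg (fun v => NormedSpace.exp D v) hc
  rwa [← mul_apply_eq_comp, neg_smul, one_smul, exp_mul_exp_neg, one_apply_eq_self, eq_comm] at h4

/-- The orbit map of `N` under `exp (A y)` is open at the base point. -/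
lemma eventually_exists_exp {W : Type*} [NormedAddCommGroup W] [NormedSpace ℂ W] [CompleteSpace W]
    (A : W →L[ℂ] V →L[ℂ] V) (N : Submodule ℂ V) [CompleteSpace N] (x : V) (hx : x ∈ N)
    (h : ∀ z, ∃ y, ∃ t ∈ N, A y x + t = z) :
    ∀ᶠ x' in nhds x, ∃ y, ∃ t ∈ N, NormedSpace.exp (A y) t = x' := by
  have h1 : HasStrictFDerivAt (fun p : W × N => NormedSpace.exp (A p.1))
      (A.comp (ContinuousLinearMap.fst ℂ W N)) ((0 : W), (⟨x, hx⟩ : N)) := by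
    have := hasStrictFDerivAt_exp_zero (𝕂 := ℂ) (𝔸 := V →L[ℂ] V)
    rw [← map_zero A] at this
    exact this.comp ((0 : W), (⟨x, hx⟩ : N)) (f := fun p : W × N => A p.1)
      (A.comp (ContinuousLinearMap.fst ℂ W N)).hasStrictFDerivAt
  have h2 : HasStrictFDerivAt (fun p : W × N => (p.2 : V))
      (N.subtypeL.comp (ContinuousLinearMap.snd ℂ W N)) ((0 : W), (⟨x, hx⟩ : N)) :=
    (N.subtypeL.comp (ContinuousLinearMap.snd ℂ W N)).hasStrictFDerivAt
  have h3 := h1.clm_apply h2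
  have h4 := h3.map_nhds_eq_of_surj (by
    rw [LinearMap.range_eq_top]
    intro z
    obtain ⟨y, t, ht, rfl⟩ := h z
    refine ⟨(y, ⟨t, ht⟩), ?_⟩
    simp [add_comm])
  simp only [map_zero, NormedSpace.exp_zero, one_apply_eq_self] at h4
  rw [← h4, Filter.eventually_map]
  exact Filter.Eventually.of_forall fun p => ⟨p.1, p.2, p.2.2, rfl⟩

end

section

open Module

variable {L : Type*} [LieRing L] [LieAlgebra ℂ L] [FiniteDimensional ℂ L]

lemma coordAd_apply (y w : L) :
    coordAd y ((finBasis ℂ L).equivFun w) = (finBasis ℂ L).equivFun ⁅y, w⁆ := by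
  simp [coordAd, LinearEquiv.conj_apply]

lemma coordAd_pow_apply (y w : L) (n : ℕ) :
    (coordAd y ^ n) ((finBasis ℂ L).equivFun w) =
      (finBasis ℂ L).equivFun (((LieAlgebra.ad ℂ L y) ^ n) w) := by
  induction n with
  | zero => simp
  | succ n ih => rw [pow_succ', mul_apply_eq_comp, ih, coordAd_apply, pow_succ']; rfl

lemma exp_coordAd_mul_neg (y : L) (w) :
    NormedSpace.exp (coordAd y) (NormedSpace.exp (coordAd (-y)) w) = w := by
  rw [← mul_apply_eq_comp, map_neg, exp_mul_exp_neg, one_apply_eq_self]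

/-- The bracket in coordinates. -/
noncomputable def coordBracket : (Fin (finrank ℂ L) → ℂ) →L[ℂ] (Fin (finrank ℂ L) → ℂ) →L[ℂ]
    (Fin (finrank ℂ L) → ℂ) :=
  LinearMap.toContinuousLinearMap (coordAd ∘ₗ (finBasis ℂ L).equivFun.symm.toLinearMap)

lemma coordBracket_apply (a b : L) :
    coordBracket ((finBasis ℂ L).equivFun a) ((finBasis ℂ L).equivFun b) =
      (finBasis ℂ L).equivFun ⁅a, b⁆ := by
  rw [← coordAd_apply]
  simp only [coordBracket, LinearMap.coe_toContinuousLinearMap', LinearMap.comp_apply,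
    LinearEquiv.coe_coe, LinearEquiv.symm_apply_apply]

lemma exp_coordAd_bracket (y : L) (a b) :
    NormedSpace.exp (coordAd y) (coordBracket (L := L) a b) =
      coordBracket (NormedSpace.exp (coordAd y) a) (NormedSpace.exp (coordAd y) b) := by
  apply exp_bilinear
  intro a b
  obtain ⟨a, rfl⟩ := (finBasis ℂ L).equivFun.surjective a
  obtain ⟨b, rfl⟩ := (finBasis ℂ L).equivFun.surjective b
  simp only [coordBracket_apply, coordAd_apply, ← map_add]
  rw [leibniz_lie]

/-- The automorphism `exp (ad y)`. -/
noncomputable def expAd (y : L) : L ≃ₗ⁅ℂ⁆ L where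
  toFun w := (finBasis ℂ L).equivFun.symm
    (NormedSpace.exp (coordAd y) ((finBasis ℂ L).equivFun w))
  map_add' a b := by rw [map_add, map_add, map_add]
  map_smul' c a := by rw [map_smul, map_smul, map_smul]; rfl
  map_lie' := by
    intro a b
    apply (finBasis ℂ L).equivFun.injective
    simp only [← coordBracket_apply, LinearEquiv.apply_symm_apply]
    exact exp_coordAd_bracket y _ _
  invFun w := (finBasis ℂ L).equivFun.symm
    (NormedSpace.exp (coordAd (-y)) ((finBasis ℂ L).equivFun w))
  left_inv w := by
    simp only [LinearEquiv.apply_symm_apply]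
    have := exp_coordAd_mul_neg (-y) ((finBasis ℂ L).equivFun w)
    rw [neg_neg] at this
    rw [this, LinearEquiv.symm_apply_apply]
  right_inv w := by
    simp only [LinearEquiv.apply_symm_apply]
    rw [exp_coordAd_mul_neg, LinearEquiv.symm_apply_apply]

lemma equivFun_expAd (y w : L) : (finBasis ℂ L).equivFun (expAd y w) =
    NormedSpace.exp (coordAd y) ((finBasis ℂ L).equivFun w) := by
  change (finBasis ℂ L).equivFun ((finBasis ℂ L).equivFun.symm _) = _
  rw [LinearEquiv.apply_symm_apply]

lemma hasSum_expAd (y w : L) :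
    HasSum (fun n : ℕ => (finBasis ℂ L).equivFun
      ((n.factorial⁻¹ : ℂ) • ((LieAlgebra.ad ℂ L y) ^ n) w))
      ((finBasis ℂ L).equivFun (expAd y w)) := by
  rw [equivFun_expAd]
  have := hasSum_exp_apply (coordAd y) ((finBasis ℂ L).equivFun w)
  simpa only [coordAd_pow_apply, ← map_smul] using this

lemma expAd_of_lie_eq_smul {y w : L} {c : ℂ} (h : ⁅y, w⁆ = c • w) :
    expAd y w = Complex.exp c • w := by
  have hpow : ∀ n, ((LieAlgebra.ad ℂ L y) ^ n) w = c ^ n • w := by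
    intro n
    induction n with
    | zero => simp
    | succ n ih =>
      rw [pow_succ', Module.End.mul_apply, ih, map_smul, LieAlgebra.ad_apply, h, smul_smul, pow_succ]
  have h1 := hasSum_expAd y w
  simp only [hpow, map_smul] at h1
  have h2 : HasSum (fun n : ℕ => (n.factorial⁻¹ : ℂ) • c ^ n) (Complex.exp c) := by
    rw [Complex.exp_eq_exp_ℂ]
    exact NormedSpace.exp_series_hasSum_exp' c
  have h3 := h2.smul_const ((finBasis ℂ L).equivFun w)
  simp only [smul_assoc] at h3
  apply (finBasis ℂ L).equivFun.injective
  rw [h1.unique h3, map_smul]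

lemma expAd_of_lie_lie_lie_eq_zero {y w : L} (h : ⁅y, ⁅y, ⁅y, w⁆⁆⁆ = 0) :
    expAd y w = w + ⁅y, w⁆ + (1 / 2 : ℂ) • ⁅y, ⁅y, w⁆⁆ := by
  have hpow : ∀ n, n ∉ Finset.range 3 → (finBasis ℂ L).equivFun
      ((n.factorial⁻¹ : ℂ) • ((LieAlgebra.ad ℂ L y) ^ n) w) = 0 := by
    intro n hn
    obtain ⟨m, rfl⟩ := Nat.exists_eq_add_of_le' (by simpa using hn : 3 ≤ n)
    have : ((LieAlgebra.ad ℂ L y) ^ 3) w = 0 := h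
    rw [pow_add, Module.End.mul_apply, this, map_zero, smul_zero, map_zero]
  have h1 := (hasSum_expAd y w).unique (hasSum_sum_of_ne_finset_zero hpow)
  rw [← map_sum] at h1
  rw [(finBasis ℂ L).equivFun.injective h1]
  simp [Finset.sum_range_succ, pow_succ]

end

section CartanConjugacy

attribute [local instance] LieRing.ofAssociativeRing LieAlgebra.ofAssociativeAlgebra

open Module LieAlgebra LieSubalgebra Filter Topology

variable {L : Type*} [LieRing L] [LieAlgebra ℂ L]

lemma mem_engel_map_iff (σ : L ≃ₗ⁅ℂ⁆ L) (t w : L) :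
    σ w ∈ engel ℂ (σ t) ↔ w ∈ engel ℂ t := by
  have : ∀ n : ℕ, ((ad ℂ L (σ t)) ^ n) (σ w) = σ (((ad ℂ L t) ^ n) w) := by
    intro n
    induction n with
    | zero => rfl
    | succ n ih =>
      rw [pow_succ', Module.End.mul_apply, ih, pow_succ', Module.End.mul_apply]
      exact (σ.toLieHom.map_lie _ _).symm
  simp only [mem_engel_iff, this, map_eq_zero_iff σ σ.injective]

variable [FiniteDimensional ℂ L]

lemma exists_lie_add_mem_engel (x z : L) : ∃ y : L, ∃ t ∈ engel ℂ x, ⁅y, x⁆ + t = z := by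
  obtain ⟨n, hn⟩ := Filter.eventually_atTop.mp (ad ℂ L x).eventually_codisjoint_ker_pow_range_pow
  have h := hn (n + 1) (Nat.le_succ n)
  rw [codisjoint_iff] at h
  have hz : z ∈ LinearMap.ker (ad ℂ L x ^ (n + 1)) ⊔ LinearMap.range (ad ℂ L x ^ (n + 1)) :=
    h ▸ Submodule.mem_top
  obtain ⟨t, ht, r, ⟨w, rfl⟩, rfl⟩ := Submodule.mem_sup.mp hz
  refine ⟨-((ad ℂ L x ^ n) w), t, (mem_engel_iff ℂ x t).mpr ⟨n + 1, ht⟩, ?_⟩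
  rw [neg_lie, lie_skew, pow_succ', Module.End.mul_apply, ad_apply, add_comm]

lemma eventually_exists_expAd (x z : L) :
    ∀ᶠ s : ℂ in 𝓝 0, ∃ y, ∃ t ∈ engel ℂ x, expAd y t = x + s • z := by
  let E := (finBasis ℂ L).equivFun
  let N : Submodule ℂ (Fin (finrank ℂ L) → ℂ) := (engel ℂ x).toSubmodule.map E.toLinearMap
  have hA := eventually_exists_exp
    (LinearMap.toContinuousLinearMap ((coordAd (L := L)) ∘ₗ E.symm.toLinearMap)) N (E x)
    (Submodule.mem_map_of_mem (self_mem_engel ℂ x)) (by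
      intro z
      obtain ⟨y, t, ht, h⟩ := exists_lie_add_mem_engel x (E.symm z)
      refine ⟨E y, E t, Submodule.mem_map_of_mem ht, ?_⟩
      simp only [LinearMap.coe_toContinuousLinearMap', LinearMap.comp_apply, LinearEquiv.coe_coe,
        LinearEquiv.symm_apply_apply]
      rw [coordAd_apply, ← map_add, h, LinearEquiv.apply_symm_apply])
  have hc : Tendsto (fun s : ℂ => E x + s • E z) (𝓝 0) (𝓝 (E x)) := by
    have : Continuous (fun s : ℂ => E x + s • E z) := by fun_prop
    simpa using this.tendsto 0
  filter_upwards [hc.eventually hA] with s hs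
  obtain ⟨y, t, ⟨t, ht, rfl⟩, h⟩ := hs
  obtain ⟨y, rfl⟩ := E.surjective y
  refine ⟨y, t, ht, E.injective ?_⟩
  rw [map_add, map_smul, ← h, equivFun_expAd]
  simp [E]

lemma isRegular_map_iff (σ : L ≃ₗ⁅ℂ⁆ L) (t : L) : IsRegular ℂ (σ t) ↔ IsRegular ℂ t := by
  rw [isRegular_iff_finrank_engel_eq_rank, isRegular_iff_finrank_engel_eq_rank]
  have : (engel ℂ t).toSubmodule.map (σ : L →ₗ[ℂ] L) = (engel ℂ (σ t)).toSubmodule := by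
    ext w
    constructor
    · rintro ⟨u, hu, rfl⟩
      exact (mem_engel_map_iff σ t u).mpr hu
    · intro hw
      refine ⟨σ.symm w, (mem_engel_map_iff σ t _).mp ?_, σ.apply_symm_apply w⟩
      rwa [σ.apply_symm_apply]
  have h := LinearEquiv.finrank_map_eq σ.toLinearEquiv (engel ℂ t).toSubmodule
  change finrank ℂ ((engel ℂ t).toSubmodule.map (σ : L →ₗ[ℂ] L)) = _ at h
  rw [this] at h
  exact Eq.congr_left h

lemma engel_eq_of_isRegular {x t : L} (hx : IsRegular ℂ x) (ht : IsRegular ℂ t)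
    (h : t ∈ engel ℂ x) : engel ℂ x = engel ℂ t := by
  let Ex : {engel ℂ z | z ∈ engel ℂ x} := ⟨engel ℂ x, x, self_mem_engel _ _, rfl⟩
  have hx' := (isRegular_iff_finrank_engel_eq_rank ℂ x).mp hx
  have hle : engel ℂ x ≤ engel ℂ t := by
    suffices IsBot Ex from @this ⟨engel ℂ t, t, h, rfl⟩
    apply engel_isBot_of_isMin ?_ (engel ℂ x) Ex le_rfl
    · rintro ⟨_, y, hy, rfl⟩ hyx
      suffices finrank ℂ (engel ℂ x) ≤ finrank ℂ (engel ℂ y) by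
        suffices engel ℂ y = engel ℂ x from this.ge
        apply LieSubalgebra.toSubmodule_injective
        exact Submodule.eq_of_le_of_finrank_le hyx this
      rw [hx']
      apply rank_le_finrank_engel
    · exact Cardinal.natCast_le_aleph0.trans <| Cardinal.infinite_iff.mp inferInstance
  apply LieSubalgebra.toSubmodule_injective
  refine Submodule.eq_of_le_of_finrank_le hle ?_
  exact ((isRegular_iff_finrank_engel_eq_rank ℂ t).mp ht).trans hx'.symm |>.le

lemma finite_not_isRegular (x : L) {y : L} (hy : IsRegular ℂ y) :
    {s : ℂ | ¬ IsRegular ℂ (x + s • (y - x))}.Finite := by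
  let b := finBasis ℂ L
  let q := (LinearMap.polyCharpoly (ad ℂ L).toLinearMap b).coeff (rank ℂ L)
  let p : Polynomial ℂ := MvPolynomial.aeval (fun i => Polynomial.C (b.repr x i) +
    Polynomial.X * Polynomial.C (b.repr (y - x) i)) q
  have hp : ∀ s : ℂ, p.eval s = MvPolynomial.eval (b.repr (x + s • (y - x))) q := by
    intro s
    have : p.eval s = (Polynomial.aeval s) p := by simp
    rw [this, ← AlgHom.comp_apply, MvPolynomial.comp_aeval]
    change _ = MvPolynomial.aeval (R := ℂ) _ q
    congr 2
    funext i
    simp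
  have h0 : p ≠ 0 := by
    intro h0
    have h1 := hp 1
    rw [h0, one_smul, add_sub_cancel, Polynomial.eval_zero] at h1
    exact (isRegular_iff_coeff_polyCharpoly_rank_ne_zero ℂ b y).mp hy h1.symm
  refine (p.finite_setOfPred_isRoot h0).subset ?_
  intro s hs
  rw [Set.mem_ofPred_eq, isRegular_iff_coeff_polyCharpoly_rank_ne_zero ℂ b, not_not] at hs
  exact (hp s).trans hs

/-- The Engel subalgebras of two regular elements are conjugate. -/
lemma exists_conj_engel {x y : L} (hx : IsRegular ℂ x) (hy : IsRegular ℂ y) :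
    ∃ σ : L ≃ₗ⁅ℂ⁆ L, ∀ w, w ∈ engel ℂ x ↔ σ w ∈ engel ℂ y := by
  let γ : ℂ → L := fun s => x + s • (y - x)
  let T : Set ℂ := {s : ℂ | IsRegular ℂ (γ s)}
  have hT : IsPreconnected T := by
    have := (finite_not_isRegular x hy).countable.isPathConnected_compl_of_one_lt_rank
      (E := ℂ) (by rw [Complex.rank_real_complex]; exact Nat.one_lt_ofNat)
    convert this.isConnected.isPreconnected using 1
    ext s
    simp [T, γ]
  have := hT.induction₂ (fun s s' => ∃ σ : L ≃ₗ⁅ℂ⁆ L, ∀ w, w ∈ engel ℂ (γ s) ↔ σ w ∈ engel ℂ (γ s'))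
    (by
      intro s hs
      have h1 := eventually_exists_expAd (γ s) (y - x)
      have h2 : Tendsto (fun s' => s' - s) (𝓝 s) (𝓝 0) := by
        have : Continuous (fun s' : ℂ => s' - s) := by fun_prop
        simpa using this.tendsto s
      filter_upwards [nhdsWithin_le_nhds (h2.eventually h1), self_mem_nhdsWithin] with s' h hs'
      obtain ⟨u, t, ht, h⟩ := h
      have h' : expAd u t = γ s' := by
        rw [h]
        simp only [γ, sub_smul]
        abel
      refine ⟨expAd u, fun w => ?_⟩
      rw [← h', mem_engel_map_iff]
      have : IsRegular ℂ t := by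
        rw [← isRegular_map_iff (expAd u), h']
        exact hs'
      rw [engel_eq_of_isRegular hs this ht])
    (by
      rintro s s' s'' - - - ⟨σ, hσ⟩ ⟨τ, hτ⟩
      exact ⟨σ.trans τ, fun w => by rw [hσ, hτ]; rfl⟩)
    (by
      rintro s s' - - ⟨σ, hσ⟩
      refine ⟨σ.symm, fun w => ?_⟩
      rw [hσ]
      simp)
    (x := 0) (y := 1) (by simpa [T, γ] using hx) (by simpa [T, γ] using hy)
  simpa [γ] using this

lemma exists_isRegular_mem_engel (x : L) : ∃ t ∈ engel ℂ x, IsRegular ℂ t := by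
  obtain ⟨ρ, hρ⟩ := exists_isRegular ℂ L
  have h1 := eventually_exists_expAd x (ρ - x)
  have h2 : ∀ᶠ s in 𝓝[≠] (0 : ℂ), IsRegular ℂ (x + s • (ρ - x)) := by
    have h3 := ((finite_not_isRegular x hρ).subset
      (Set.sdiff_subset (t := {0}))).isClosed.isOpen_compl.mem_nhds (x := 0) (by simp)
    filter_upwards [nhdsWithin_le_nhds h3, self_mem_nhdsWithin] with s hs hs0
    by_contra hcon
    exact hs ⟨hcon, hs0⟩
  obtain ⟨s, ⟨y, t, ht, hs⟩, hs'⟩ := ((h1.filter_mono nhdsWithin_le_nhds).and h2).exists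
  rw [← hs, isRegular_map_iff] at hs'
  exact ⟨t, ht, hs'⟩

lemma isRegular_of_isAbelian_engel {ρ : L}
    (h : ∀ a ∈ engel ℂ ρ, ∀ b ∈ engel ℂ ρ, ⁅a, b⁆ = 0) : IsRegular ℂ ρ := by
  obtain ⟨t, ht, hreg⟩ := exists_isRegular_mem_engel ρ
  rw [isRegular_iff_finrank_engel_eq_rank] at hreg ⊢
  refine le_antisymm ?_ (rank_le_finrank_engel ℂ ρ)
  rw [← hreg]
  refine Submodule.finrank_mono (show engel ℂ ρ ≤ engel ℂ t from fun a ha => ?_)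
  exact (mem_engel_iff ℂ t a).mpr ⟨1, h t ht a ha⟩

/-- If every element of `engel h` commutes with `h`, then some automorphism carries `h` into any
given regular Engel subalgebra. -/
lemma exists_map_mem_engel {h ρ : L} (hh : ∀ w ∈ engel ℂ h, ⁅h, w⁆ = 0) (hρ : IsRegular ℂ ρ) :
    ∃ σ : L ≃ₗ⁅ℂ⁆ L, σ h ∈ engel ℂ ρ := by
  obtain ⟨t, ht, ht'⟩ := exists_isRegular_mem_engel h
  obtain ⟨σ, hσ⟩ := exists_conj_engel ht' hρ
  refine ⟨σ, (hσ h).mp ((mem_engel_iff ℂ t h).mpr ⟨1, ?_⟩)⟩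
  rw [pow_one, ad_apply, ← lie_skew, hh t ht, neg_zero]

end CartanConjugacy

section Diagonalizable

open Module

variable {V : Type*} [AddCommGroup V] [Module ℂ V]

lemma exists_int_of_hasEigenvector {H : End ℂ V} (hH : ⨆ n : ℤ, H.eigenspace (n : ℂ) = ⊤) {μ : ℂ}
    {x : V} (hx : H x = μ • x) (hx0 : x ≠ 0) : ∃ n : ℤ, μ = n := by
  by_contra! hcon
  have h1 := H.eigenspaces_iSupIndep μ
  have h2 : (⊤ : Submodule ℂ V) ≤ ⨆ j, ⨆ (_ : j ≠ μ), H.eigenspace j := by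
    rw [← hH]
    exact iSup_le fun n => le_iSup₂_of_le (n : ℂ) (hcon n).symm le_rfl
  exact hx0 (Submodule.disjoint_def.mp h1 x (End.mem_eigenspace_iff.mpr hx) (h2 trivial))

lemma apply_eq_zero_of_pow_apply_eq_zero {H : End ℂ V} (hH : ⨆ n : ℤ, H.eigenspace (n : ℂ) = ⊤)
    {x : V} {n : ℕ} (hx : (H ^ n) x = 0) : H x = 0 := by
  have key : ∀ y, H (H y) = 0 → H y = 0 := by
    intro y hy
    have h2 : (⊤ : Submodule ℂ V) ≤ (⨆ j, ⨆ (_ : j ≠ (0 : ℂ)), H.eigenspace j).comap H := by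
      rw [← hH]
      refine iSup_le fun n z hz => ?_
      rw [End.mem_eigenspace_iff] at hz
      rw [Submodule.mem_comap, hz]
      by_cases hn : (n : ℂ) = 0
      · rw [hn, zero_smul]
        exact zero_mem _
      · exact Submodule.smul_mem _ _ ((le_iSup₂_of_le (f := fun j (_ : j ≠ 0) => H.eigenspace j)
          (n : ℂ) hn le_rfl) (End.mem_eigenspace_iff.mpr hz))
    exact Submodule.disjoint_def.mp (H.eigenspaces_iSupIndep 0) _
      (End.mem_eigenspace_iff.mpr (by rw [hy, zero_smul])) (h2 trivial)
  induction n with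
  | zero => rw [(by simpa using hx : x = 0), map_zero]
  | succ n ih =>
    cases n with
    | zero => simpa using hx
    | succ n =>
      apply ih
      rw [pow_succ', pow_succ', End.mul_apply, End.mul_apply] at hx
      rw [pow_succ', End.mul_apply]
      exact key _ hx

end Diagonalizable

namespace E6

/-- The coefficient of the `i`-th basis vector's weight on the `k`-th simple root. -/
def coef (i k : ℕ) : ℤ := bif Nat.blt i 72 then sgn (isNeg i) * digit (absCode i) k else 0

/-- The weight of the `i`-th basis vector for an element taking the values `a` on simple roots. -/
def wt {R : Type*} [Ring R] (a : ℕ → R) (i : ℕ) : R :=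
  a 0 * (coef i 0 : R) + a 1 * (coef i 1 : R) + a 2 * (coef i 2 : R) + a 3 * (coef i 3 : R) +
    a 4 * (coef i 4 : R) + a 5 * (coef i 5 : R)

lemma wt_of_le {R : Type*} [Ring R] (a : ℕ → R) {i : ℕ} (h : 72 ≤ i) : wt a i = 0 := by
  have : Nat.blt i 72 = false := by
    rw [← Bool.not_eq_true, Nat.blt_eq]
    omega
  simp [wt, coef, this]

lemma wt_intCast (a : ℕ → ℤ) (i : ℕ) : wt (fun k => (a k : ℂ)) i = (wt a i : ℤ) := by
  simp [wt]

def cartanEntry (j k : ℕ) : ℤ := cartanInt j (absCode k)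

/-- Three times the inverse of the Cartan matrix. -/
def coweight : ℕ → List (ℕ × ℤ)
  | 0 => [(72, 4), (73, 3), (74, 5), (75, 6), (76, 4), (77, 2)]
  | 1 => [(72, 3), (73, 6), (74, 6), (75, 9), (76, 6), (77, 3)]
  | 2 => [(72, 5), (73, 6), (74, 10), (75, 12), (76, 8), (77, 4)]
  | 3 => [(72, 6), (73, 9), (74, 12), (75, 18), (76, 12), (77, 6)]
  | 4 => [(72, 4), (73, 6), (74, 8), (75, 12), (76, 10), (77, 5)]
  | _ => [(72, 2), (73, 3), (74, 4), (75, 6), (76, 5), (77, 4)]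

set_option maxRecDepth 4000 in
lemma sc_coroot : ∀ j ∈ List.range 6, ∀ i ∈ List.range 78,
    sc (72 + j) i = addTo (wt (cartanEntry j) i) i [] := by
  decide +kernel

set_option maxRecDepth 4000 in
lemma sparseLie_coweight : ∀ k ∈ List.range 6, ∀ i ∈ List.range 78,
    sparseLie sc (coweight k) [(i, 1)] = addTo (3 * coef i k) i [] := by
  decide +kernel

set_option maxRecDepth 4000 in
lemma coef_of_mem_sc : ∀ i ∈ List.range 78, ∀ j ∈ List.range 78, ∀ t ∈ sc i j,
    t.1 < 78 ∧ ∀ k ∈ List.range 6, coef t.1 k = coef i k + coef j k := by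
  decide +kernel

set_option maxRecDepth 4000 in
lemma wt_one_ne_zero : ∀ i ∈ List.range 72, wt (fun _ => (1 : ℤ)) i ≠ 0 := by
  decide +kernel

end E6

namespace IsE6Basis

open Module LieAlgebra LieSubalgebra Finset

variable {L : Type*} [LieRing L] [LieAlgebra ℂ L] {B : ℕ → L}

lemma ext_coord (hB : IsE6Basis B) {c c' : ℕ → ℂ}
    (h : ∑ k ∈ range 78, c k • B k = ∑ k ∈ range 78, c' k • B k) : ∀ k < 78, c k = c' k := by
  intro k hk
  have := hB.indep (fun k => c k - c' k) (by simp only [sub_smul, sum_sub_distrib, h, sub_self]) k hk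
  exact sub_eq_zero.mp this

/-- The basis indexed by `Fin 78`. -/
noncomputable def basis (hB : IsE6Basis B) : Basis (Fin 78) ℂ L :=
  Basis.mk (v := fun i : Fin 78 => B i)
    (by
      rw [Fintype.linearIndependent_iff]
      intro g hg i
      have := hB.indep (fun k => if hk : k < 78 then g ⟨k, hk⟩ else 0)
        (by rw [← hg, Finset.sum_range]; simp) i i.2
      simpa using this)
    (by
      rintro x -
      obtain ⟨c, rfl⟩ := hB.span x
      rw [Finset.sum_range]
      exact Submodule.sum_mem _ fun i _ => Submodule.smul_mem _ _ (Submodule.subset_span ⟨i, rfl⟩))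

lemma basis_apply (hB : IsE6Basis B) (i : Fin 78) : hB.basis i = B i := by simp [basis]

lemma ne_zero (hB : IsE6Basis B) {i : ℕ} (hi : i < 78) : B i ≠ 0 := by
  have := hB.basis.ne_zero ⟨i, hi⟩
  rwa [basis_apply] at this

lemma map (hB : IsE6Basis B) (σ : L ≃ₗ⁅ℂ⁆ L) : IsE6Basis fun i => σ (B i) := by
  have hc : ∀ c : ℕ → ℂ, ∑ k ∈ range 78, c k • σ (B k) = σ (∑ k ∈ range 78, c k • B k) := by
    intro c
    rw [map_sum]
    exact sum_congr rfl fun k _ => (σ.toLinearEquiv.map_smul _ _).symm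
  refine ⟨fun i j => ?_, fun x => ?_, fun c h => ?_⟩
  · rw [← LieEquiv.coe_toLieHom, ← LieHom.map_lie, hB.lie]
    exact map_combine σ.toLinearEquiv.toLinearMap B _
  · obtain ⟨c, hx⟩ := hB.span (σ.symm x)
    refine ⟨c, ?_⟩
    rw [hc, ← hx, σ.apply_symm_apply]
  · rw [hc] at h
    exact hB.indep c (σ.injective (h.trans (map_zero σ).symm))

/-- The element of the Cartan subalgebra with values `a` on the simple roots. -/
noncomputable def torus (B : ℕ → L) (a : ℕ → ℂ) : L :=
  ∑ k ∈ range 6, (a k / 3) • combine B (E6.coweight k)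

lemma lie_torus (hB : IsE6Basis B) (a : ℕ → ℂ) {i : ℕ} (hi : i < 78) :
    ⁅torus B a, B i⁆ = E6.wt a i • B i := by
  have h1 : ∀ k ∈ range 6, ⁅combine B (E6.coweight k), B i⁆ = (3 * E6.coef i k : ℂ) • B i := by
    intro k hk
    have h := combine_sparseLie B E6.sc hB.lie (E6.coweight k) [(i, 1)]
    rw [E6.sparseLie_coweight k (by simpa using hk) i (by simpa using hi), combine_addTo] at h
    simp only [combine, Int.cast_one, one_smul, add_zero] at h
    rw [← h]
    push_cast
    rfl
  rw [torus, sum_lie]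
  calc ∑ k ∈ range 6, ⁅(a k / 3) • combine B (E6.coweight k), B i⁆
      = ∑ k ∈ range 6, (a k * (E6.coef i k : ℂ)) • B i := by
        refine sum_congr rfl fun k hk => ?_
        rw [smul_lie, h1 k hk, smul_smul]
        congr 1
        ring
    _ = _ := by rw [← sum_smul]; simp [sum_range_succ, E6.wt]

lemma lie_coroot (hB : IsE6Basis B) {j i : ℕ} (hj : j < 6) (hi : i < 78) :
    ⁅B (72 + j), B i⁆ = ((E6.wt (E6.cartanEntry j) i : ℤ) : ℂ) • B i := by
  rw [hB.lie, E6.sc_coroot j (by simpa using hj) i (by simpa using hi), combine_addTo]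
  simp [combine]

/-- The span of the simple coroots. -/
def cartan (B : ℕ → L) : Submodule ℂ L := Submodule.span ℂ ((fun j => B (72 + j)) '' Set.Iio 6)

lemma exists_wt_of_mem_cartan (hB : IsE6Basis B) {x : L} (hx : x ∈ cartan B) :
    ∃ a : ℕ → ℂ, ∀ i < 78, ⁅x, B i⁆ = E6.wt a i • B i := by
  induction hx using Submodule.span_induction with
  | mem x h =>
    obtain ⟨j, hj, rfl⟩ := h
    refine ⟨fun k => (E6.cartanEntry j k : ℂ), fun i hi => ?_⟩
    rw [hB.lie_coroot hj hi]
    simp [E6.wt]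
  | zero => exact ⟨0, fun i _ => by simp [E6.wt]⟩
  | add x y _ _ hx hy =>
    obtain ⟨a, ha⟩ := hx
    obtain ⟨b, hb⟩ := hy
    refine ⟨a + b, fun i hi => ?_⟩
    rw [add_lie, ha i hi, hb i hi, ← add_smul]
    congr 1
    simp only [E6.wt, Pi.add_apply]
    ring
  | smul c x _ hx =>
    obtain ⟨a, ha⟩ := hx
    refine ⟨c • a, fun i hi => ?_⟩
    rw [smul_lie, ha i hi, smul_smul]
    congr 1
    simp only [E6.wt, Pi.smul_apply, smul_eq_mul]
    ring

lemma ad_pow_sum {x : L} {μ : ℕ → ℂ} (h : ∀ i < 78, ⁅x, B i⁆ = μ i • B i) (c : ℕ → ℂ) (n : ℕ) :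
    (ad ℂ L x ^ n) (∑ k ∈ range 78, c k • B k) = ∑ k ∈ range 78, (μ k ^ n * c k) • B k := by
  induction n with
  | zero => simp
  | succ n ih =>
    rw [pow_succ', Module.End.mul_apply, ih, map_sum]
    refine sum_congr rfl fun k hk => ?_
    rw [map_smul, ad_apply, h k (by simpa using hk), smul_smul]
    congr 1
    ring

lemma engel_torus (hB : IsE6Basis B) {w : L} (hw : w ∈ engel ℂ (torus B fun _ => 1)) :
    w ∈ cartan B := by
  obtain ⟨n, hn⟩ := (mem_engel_iff ℂ _ _).mp hw
  obtain ⟨c, rfl⟩ := hB.span w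
  rw [ad_pow_sum (fun i hi => hB.lie_torus _ hi)] at hn
  have h0 := hB.indep _ hn
  have h1 : ∀ k < 72, c k = 0 := by
    intro k hk
    refine (mul_eq_zero.mp (h0 k (by omega))).resolve_left (pow_ne_zero _ ?_)
    have := E6.wt_one_ne_zero k (by simpa using hk)
    simp only [E6.wt] at this ⊢
    exact_mod_cast this
  rw [Finset.sum_range_add (fun k => c k • B k) 72 6, sum_eq_zero, zero_add]
  · refine Submodule.sum_mem _ fun j hj => Submodule.smul_mem _ _ (Submodule.subset_span ?_)
    exact ⟨j, by simpa using hj, rfl⟩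
  · intro k hk
    rw [h1 k (by simpa using hk), zero_smul]

lemma lie_eq_zero_of_mem_cartan (hB : IsE6Basis B) {x y : L} (hx : x ∈ cartan B)
    (hy : y ∈ cartan B) : ⁅x, y⁆ = 0 := by
  obtain ⟨a, ha⟩ := hB.exists_wt_of_mem_cartan hx
  induction hy using Submodule.span_induction with
  | mem y h =>
    obtain ⟨j, hj, rfl⟩ := h
    rw [ha _ (by simp only [Set.mem_Iio] at hj; omega)]
    rw [E6.wt_of_le a (by omega), zero_smul]
  | zero => exact lie_zero _
  | add y z _ _ hy hz => rw [lie_add, hy, hz, add_zero]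
  | smul c y _ hy => rw [lie_smul, hy, smul_zero]

variable [FiniteDimensional ℂ L]

/-- A diagonalizable element is diagonal with respect to some basis with the structure constants of
type E₆. -/
theorem exists_diagonal (hB : IsE6Basis B) {h : L}
    (hh : ⨆ n : ℤ, (ad ℂ L h : End ℂ L).eigenspace (n : ℂ) = ⊤) :
    ∃ B' : ℕ → L, IsE6Basis B' ∧ h ∈ cartan B' := by
  have hab : ∀ a ∈ engel ℂ (torus B fun _ => 1), ∀ b ∈ engel ℂ (torus B fun _ => 1), ⁅a, b⁆ = 0 :=
    fun a ha b hb => hB.lie_eq_zero_of_mem_cartan (hB.engel_torus ha) (hB.engel_torus hb)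
  obtain ⟨σ, hσ⟩ := exists_map_mem_engel (h := h) (fun w hw => by
    obtain ⟨n, hn⟩ := (mem_engel_iff ℂ _ _).mp hw
    exact apply_eq_zero_of_pow_apply_eq_zero hh hn) (isRegular_of_isAbelian_engel hab)
  refine ⟨_, hB.map σ.symm, ?_⟩
  have h1 := Submodule.mem_map_of_mem (f := σ.symm.toLinearEquiv.toLinearMap) (hB.engel_torus hσ)
  rw [cartan, Submodule.map_span, ← Set.image_comp] at h1
  have h2 : σ.symm (σ h) ∈ cartan fun i => σ.symm (B i) := h1
  rwa [σ.symm_apply_apply] at h2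

end IsE6Basis

namespace E6

set_option maxRecDepth 4000 in
lemma sc_sl2 : ∀ k ∈ List.range 6, sc k (k + 36) = [(72 + k, 1)] ∧
    sc (72 + k) (k + 36) = [(k + 36, -2)] ∧ sc (72 + k) k = [(k, 2)] := by
  decide +kernel

set_option maxRecDepth 4000 in
lemma coef_simple : ∀ k ∈ List.range 6, ∀ j ∈ List.range 6,
    coef k j = (if k = j then 1 else 0) ∧ coef (k + 36) j = (if k = j then -1 else 0) := by
  decide +kernel

lemma wt_simple {R : Type*} [Ring R] (a : ℕ → R) {k : ℕ} (hk : k < 6) : wt a k = a k := by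
  have h := fun j (hj : j < 6) => (coef_simple k (by simpa using hk) j (by simpa using hj)).1
  rw [wt, h 0, h 1, h 2, h 3, h 4, h 5]
  · interval_cases k <;> simp
  all_goals norm_num

lemma wt_neg_simple {R : Type*} [Ring R] (a : ℕ → R) {k : ℕ} (hk : k < 6) :
    wt a (k + 36) = -a k := by
  have h := fun j (hj : j < 6) => (coef_simple k (by simpa using hk) j (by simpa using hj)).2
  rw [wt, h 0, h 1, h 2, h 3, h 4, h 5]
  · interval_cases k <;> simp
  all_goals norm_num

/-- The value at the sum of the positive roots. -/
def height (a : ℕ → ℤ) : ℤ := 16 * a 0 + 22 * a 1 + 30 * a 2 + 42 * a 3 + 30 * a 4 + 16 * a 5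

lemma height_cartanEntry : ∀ k ∈ List.range 6, height (cartanEntry k) = 2 := by
  decide +kernel

end E6

/-- An E₆ basis on which `h` acts diagonally, with integral weights. -/
structure IsE6Grading {L : Type*} [LieRing L] [LieAlgebra ℂ L] (B : ℕ → L) (h : L) (a : ℕ → ℤ) :
    Prop extends IsE6Basis B where
  weight : ∀ i < 78, ⁅h, B i⁆ = ((E6.wt a i : ℤ) : ℂ) • B i

section

open Module LieAlgebra

variable {L : Type*} [LieRing L] [LieAlgebra ℂ L] [FiniteDimensional ℂ L] {B : ℕ → L} {h : L}

lemma IsE6Basis.exists_reflection (hB : IsE6Basis B) {k : ℕ} (hk : k < 6) {a : ℂ}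
    (h1 : ⁅h, B k⁆ = a • B k) (h2 : ⁅h, B (k + 36)⁆ = (-a) • B (k + 36)) :
    ∃ σ : L ≃ₗ⁅ℂ⁆ L, σ h = h - a • B (72 + k) := by
  obtain ⟨s1, s2, s3⟩ := E6.sc_sl2 k (by simpa using hk)
  have e1 : ⁅B k, B (k + 36)⁆ = B (72 + k) := by simp [hB.lie, s1, combine]
  have e2 : ⁅B (72 + k), B (k + 36)⁆ = (-2 : ℂ) • B (k + 36) := by simp [hB.lie, s2, combine]
  have e3 : ⁅B (72 + k), B k⁆ = (2 : ℂ) • B k := by simp [hB.lie, s3, combine]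
  have f1 : ⁅B k, h⁆ = (-a) • B k := by rw [← lie_skew, h1, neg_smul]
  have f2 : ⁅-B (k + 36), h⁆ = (-a) • B (k + 36) := by rw [neg_lie, lie_skew, h2]
  have f3 : ⁅-B (k + 36), B k⁆ = B (72 + k) := by rw [neg_lie, lie_skew, e1]
  have f4 : ⁅-B (k + 36), B (72 + k)⁆ = (-2 : ℂ) • B (k + 36) := by rw [neg_lie, lie_skew, e2]
  have f5 : ⁅B k, B (72 + k)⁆ = (-2 : ℂ) • B k := by rw [← lie_skew, e3, neg_smul]
  have g1 : expAd (B k) h = h - a • B k := by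
    rw [expAd_of_lie_lie_lie_eq_zero] <;> simp [f1, sub_eq_add_neg]
  have f6 : ⁅-B (k + 36), B (k + 36)⁆ = 0 := by simp
  have g2 : expAd (-B (k + 36)) h = h - a • B (k + 36) := by
    rw [expAd_of_lie_lie_lie_eq_zero] <;> rw [f2, lie_smul, f6]
    · module
    · simp
  have g3 : expAd (-B (k + 36)) (B k) = B k + B (72 + k) - B (k + 36) := by
    rw [expAd_of_lie_lie_lie_eq_zero] <;> rw [f3, f4]
    · module
    · simp
  have g4 : expAd (B k) (B (72 + k)) = B (72 + k) - (2 : ℂ) • B k := by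
    rw [expAd_of_lie_lie_lie_eq_zero] <;> simp [f5, sub_eq_add_neg]
  have g5 : expAd (B k) (B k) = B k := by
    rw [expAd_of_lie_lie_lie_eq_zero] <;> simp
  refine ⟨((expAd (B k)).trans (expAd (-B (k + 36)))).trans (expAd (B k)), ?_⟩
  change expAd (B k) (expAd (-B (k + 36)) (expAd (B k) h)) = _
  have hs : ∀ (σ : L ≃ₗ⁅ℂ⁆ L) (c : ℂ) (x : L), σ (c • x) = c • σ x :=
    fun σ c x => σ.toLinearEquiv.map_smul c x
  rw [g1, map_sub, hs, g2, g3]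
  have : h - a • B (k + 36) - a • (B k + B (72 + k) - B (k + 36)) =
      h - a • B k - a • B (72 + k) := by module
  rw [this, map_sub, map_sub, hs, hs, g1, g4, g5]
  module

lemma IsE6Grading.reflect {a : ℕ → ℤ} (hB : IsE6Grading B h a) {k : ℕ} (hk : k < 6) :
    ∃ B' : ℕ → L, IsE6Grading B' h fun j => a j - a k * E6.cartanEntry k j := by
  obtain ⟨σ, hσ⟩ := hB.exists_reflection hk (a := a k)
    (by rw [hB.weight k (by omega), E6.wt_simple a hk])
    (by rw [hB.weight (k + 36) (by omega), E6.wt_neg_simple a hk, Int.cast_neg])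
  refine ⟨_, hB.toIsE6Basis.map σ.symm, fun i hi => ?_⟩
  have h1 : ⁅σ h, B i⁆ =
      ((E6.wt (fun j => a j - a k * E6.cartanEntry k j) i : ℤ) : ℂ) • B i := by
    rw [hσ, sub_lie, smul_lie, hB.weight i hi, hB.lie_coroot hk hi, smul_smul, ← sub_smul]
    congr 1
    simp only [E6.wt]
    push_cast
    ring
  have h2 := congrArg σ.symm h1
  rw [← LieEquiv.coe_toLieHom, LieHom.map_lie] at h2
  change ⁅σ.symm (σ h), _⁆ = _ at h2
  rw [σ.symm_apply_apply] at h2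
  exact h2.trans (σ.symm.toLinearEquiv.map_smul _ _)

lemma IsE6Grading.weight_bddAbove :
    ∃ M : ℤ, ∀ (B : ℕ → L) (a : ℕ → ℤ), IsE6Grading B h a → ∀ k < 6, a k ≤ M := by
  have hf : {n : ℤ | (ad ℂ L h : End ℂ L).HasEigenvalue (n : ℂ)}.Finite :=
    Set.Finite.preimage Int.cast_injective.injOn (Module.End.finite_hasEigenvalue (ad ℂ L h))
  obtain ⟨M, hM⟩ := hf.bddAbove
  refine ⟨M, fun B a hB k hk => hM ?_⟩
  refine Module.End.hasEigenvalue_of_hasEigenvector (x := B k)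
    ⟨Module.End.mem_eigenspace_iff.mpr ?_, hB.ne_zero (by omega)⟩
  rw [ad_apply, hB.weight k (by omega), E6.wt_simple a hk]

/-- Weyl chambers: the basis may be chosen such that the simple roots take nonnegative values. -/
lemma IsE6Grading.exists_dominant {a : ℕ → ℤ} (hB : IsE6Grading B h a) :
    ∃ (B' : ℕ → L) (a' : ℕ → ℤ), IsE6Grading B' h a' ∧ ∀ k < 6, 0 ≤ a' k := by
  obtain ⟨M, hM⟩ := IsE6Grading.weight_bddAbove (L := L) (h := h)
  obtain ⟨_, ⟨B', a', hB', rfl⟩, hmax⟩ := Int.exists_greatest_of_bdd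
    (P := fun n => ∃ B' a', IsE6Grading (L := L) B' h a' ∧ E6.height a' = n)
    ⟨156 * M, by
      rintro _ ⟨B', a', hB', rfl⟩
      have := hM B' a' hB'
      have h0 := this 0 (by norm_num)
      have h1 := this 1 (by norm_num)
      have h2 := this 2 (by norm_num)
      have h3 := this 3 (by norm_num)
      have h4 := this 4 (by norm_num)
      have h5 := this 5 (by norm_num)
      simp only [E6.height]
      omega⟩ ⟨_, B, a, hB, rfl⟩
  refine ⟨B', a', hB', fun k hk => ?_⟩
  obtain ⟨B'', hB''⟩ := hB'.reflect hk
  have h1 := hmax _ ⟨B'', _, hB'', rfl⟩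
  have h2 := E6.height_cartanEntry k (by simpa using hk)
  have h3 : E6.height (fun j => a' j - a' k * E6.cartanEntry k j) =
      E6.height a' - a' k * E6.height (E6.cartanEntry k) := by
    simp only [E6.height]
    ring
  rw [h3, h2] at h1
  omega

lemma IsE6Basis.exists_isE6Grading (hB : IsE6Basis B)
    (hh : ⨆ n : ℤ, (ad ℂ L h : End ℂ L).eigenspace (n : ℂ) = ⊤) :
    ∃ (B' : ℕ → L) (a' : ℕ → ℤ), IsE6Grading B' h a' ∧ ∀ k < 6, 0 ≤ a' k := by
  obtain ⟨B', hB', hh'⟩ := hB.exists_diagonal hh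
  obtain ⟨a, ha⟩ := hB'.exists_wt_of_mem_cartan hh'
  have : ∀ k, ∃ n : ℤ, k < 6 → a k = n := by
    intro k
    by_cases hk : k < 6
    · obtain ⟨n, hn⟩ := exists_int_of_hasEigenvector hh (ha k (by omega)) (hB'.ne_zero (by omega))
      rw [E6.wt_simple a hk] at hn
      exact ⟨n, fun _ => hn⟩
    · exact ⟨0, fun h => absurd h hk⟩
  choose n hn using this
  refine IsE6Grading.exists_dominant (a := n) ⟨hB', fun i hi => ?_⟩
  rw [ha i hi, ← E6.wt_intCast]
  simp only [E6.wt, ← hn _ (show 0 < 6 by norm_num), ← hn _ (show 1 < 6 by norm_num),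
    ← hn _ (show 2 < 6 by norm_num), ← hn _ (show 3 < 6 by norm_num),
    ← hn _ (show 4 < 6 by norm_num), ← hn _ (show 5 < 6 by norm_num)]

end

section

open Module LieAlgebra

variable {L : Type*} [LieRing L] [LieAlgebra ℂ L]

section Sl2

variable {e h f : L}

lemma IsSl2Triple.ad_mul_ad (t : IsSl2Triple h e f) :
    (ad ℂ L e * ad ℂ L f : End ℂ L) = ad ℂ L f * ad ℂ L e + ad ℂ L h := by
  ext x
  simp [← t.lie_e_f]

lemma IsSl2Triple.ad_mul_ad_e (t : IsSl2Triple h e f) :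
    (ad ℂ L h * ad ℂ L e : End ℂ L) =
    ad ℂ L e * ad ℂ L h + 2 • ad ℂ L e := by
  ext x
  have := leibniz_lie h e x
  rw [t.lie_h_e_nsmul] at this
  simp [this, add_comm]

lemma IsSl2Triple.ad_mul_ad_f (t : IsSl2Triple h e f) :
    (ad ℂ L h * ad ℂ L f : End ℂ L) =
    ad ℂ L f * ad ℂ L h + (-2 : ℂ) • ad ℂ L f := by
  ext x
  have := leibniz_lie h f x
  rw [t.lie_lie_smul_f ℂ] at this
  simp [this, add_comm]

end Sl2

variable [FiniteDimensional ℂ L]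

/-- The semisimple part of an inner derivation of a Killing Lie algebra is inner. -/
lemma exists_ad_eq_of_isSemisimple [IsKilling ℂ L] {x : L} {s : End ℂ L} (hs : s.IsSemisimple)
    (hc : Commute (ad ℂ L x) s) (hn : IsNilpotent (ad ℂ L x - s)) : ∃ y, ad ℂ L y = s := by
  have hsx : ∀ (μ : ℂ) (u : L), u ∈ (ad ℂ L x : End ℂ L).maxGenEigenspace μ → s u = μ • u :=
    fun μ u hu => Module.End.apply_eq_of_mem_of_comm_of_isFinitelySemisimple_of_isNil hu hc
      hs.isFinitelySemisimple hn
  have htop : ∀ u : L, u ∈ ⨆ μ, (ad ℂ L x : End ℂ L).maxGenEigenspace μ := by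
    intro u
    rw [Module.End.iSup_maxGenEigenspace_eq_top]
    trivial
  have key : ∀ u v : L, s ⁅u, v⁆ = ⁅u, s v⁆ - ⁅v, s u⁆ := by
    intro u v
    induction htop u using Submodule.iSup_induction' with
    | mem μ u hu =>
      induction htop v using Submodule.iSup_induction' with
      | mem ν v hv =>
        have : ⁅u, v⁆ ∈ (ad ℂ L x : End ℂ L).maxGenEigenspace (μ + ν) :=
          LieModule.lie_mem_maxGenEigenspace_toEnd hu hv
        rw [hsx _ _ this, hsx _ _ hu, hsx _ _ hv, lie_smul, lie_smul, ← lie_skew u v]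
        module
      | zero => simp
      | add v w _ _ h1 h2 => simp only [lie_add, add_lie, map_add, h1, h2]; abel
    | zero => simp
    | add v w _ _ h1 h2 => simp only [lie_add, add_lie, map_add, h1, h2]; abel
  obtain ⟨y, hy⟩ := LieDerivation.IsKilling.exists_eq_ad (⟨s, key⟩ : LieDerivation ℂ L L)
  refine ⟨y, LinearMap.ext fun u => ?_⟩
  rw [← LieDerivation.coe_ad_apply_eq_ad_apply]
  exact LieDerivation.congr_fun hy u

/-- Every element centralizing a distinguished element is ad-nilpotent. -/
lemma IsDistinguished.isNilpotent_ad [IsKilling ℂ L] {e : L} (he : IsDistinguished L e) {x : L}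
    (hx : ⁅x, e⁆ = 0) : IsNilpotent (ad ℂ L x) := by
  obtain ⟨n, hn, s, hs, hnil, hss, hsum⟩ :=
    Module.End.exists_isNilpotent_isSemisimple (K := ℂ) (f := ad ℂ L x)
  have hc : Commute (ad ℂ L x) s := (Algebra.commute_of_mem_adjoin_self hs)
  obtain ⟨y, rfl⟩ := exists_ad_eq_of_isSemisimple hss hc (by rw [hsum]; simpa using hnil)
  have h0 : e ∈ (ad ℂ L x : End ℂ L).maxGenEigenspace 0 := by
    rw [Module.End.mem_maxGenEigenspace]
    exact ⟨1, by simpa using hx⟩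
  have := Module.End.apply_eq_of_mem_of_comm_of_isFinitelySemisimple_of_isNil h0 hc
    hss.isFinitelySemisimple (by rw [hsum]; simpa using hnil)
  rw [zero_smul, ad_apply] at this
  have := he y this hss
  subst this
  rw [hsum]
  simpa using hnil

/-- The centralizer of a distinguished element is orthogonal to itself. -/
lemma IsDistinguished.killingForm_eq_zero [IsKilling ℂ L] {e : L} (he : IsDistinguished L e)
    {x y : L} (hx : ⁅x, e⁆ = 0) (hy : ⁅y, e⁆ = 0) : killingForm ℂ L x y = 0 := by
  have : LieModule.IsNilpotent (centralizer L e) L := by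
    rw [LieModule.isNilpotent_iff_forall' (R := ℂ)]
    exact fun z => he.isNilpotent_ad z.2
  have h := LieModule.traceForm_eq_zero_of_isNilpotent ℂ (centralizer L e) L
  exact LinearMap.congr_fun (LinearMap.congr_fun h ⟨x, hx⟩) ⟨y, hy⟩

section Sl2

variable {e h f : L}

lemma IsSl2Triple.iSup_eigenspace_eq_top (t : IsSl2Triple h e f) :
    ⨆ n : ℤ, (ad ℂ L h : End ℂ L).eigenspace (n : ℂ) = ⊤ :=
  Sl2.iSup_eigenspace_eq_top t.ad_mul_ad t.ad_mul_ad_e t.ad_mul_ad_f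

lemma IsSl2Triple.exists_nat_of_lie_eq_zero (t : IsSl2Triple h e f)
    {x : L} {μ : ℂ} (hx : ⁅e, x⁆ = 0) (hx' : ⁅h, x⁆ = μ • x)
    (hx0 : x ≠ 0) : ∃ n : ℕ, μ = n :=
  (IsSl2Triple.HasPrimitiveVectorWith.mk hx0 hx' hx :
    IsSl2Triple.HasPrimitiveVectorWith t x μ).exists_nat

lemma IsSl2Triple.lie_f_eq_zero (t : IsSl2Triple h e f)
    {x : L} (hx : ⁅e, x⁆ = 0) (hx' : ⁅h, x⁆ = 0) : ⁅f, x⁆ = 0 := by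
  by_cases hx0 : x = 0
  · simp [hx0]
  have P : IsSl2Triple.HasPrimitiveVectorWith t x (0 : ℂ) := ⟨hx0, by simpa using hx', hx⟩
  simpa using P.pow_toEnd_f_eq_zero_of_eq_nat (n := 0) (by simp)

lemma IsSl2Triple.ker_sup_range (t : IsSl2Triple h e f) :
    LinearMap.ker (ad ℂ L e) ⊔ LinearMap.range (ad ℂ L f) = ⊤ := by
  have d1 := Sl2.raise_ker_disjoint t.ad_mul_ad t.ad_mul_ad_e t.ad_mul_ad_f
  have t' := t.symm
  have d2 := Sl2.raise_ker_disjoint t'.ad_mul_ad t'.ad_mul_ad_e t'.ad_mul_ad_f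
  have s1 := Submodule.finrank_add_finrank_le_of_disjoint d1
  have s2 := Submodule.finrank_add_finrank_le_of_disjoint d2
  have r1 := LinearMap.finrank_range_add_finrank_ker (ad ℂ L e : End ℂ L)
  have r2 := LinearMap.finrank_range_add_finrank_ker (ad ℂ L f : End ℂ L)
  refine Submodule.eq_top_of_disjoint _ _ ?_ d1
  omega

/-- No nonzero element of weight zero centralizes a distinguished element. -/
lemma IsSl2Triple.eq_zero_of_isDistinguished [IsKilling ℂ L]
    (t : IsSl2Triple h e f) (he : IsDistinguished L e) {x : L}
    (hx : ⁅e, x⁆ = 0) (hx' : ⁅h, x⁆ = 0) : x = 0 := by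
  have hxe : ⁅x, e⁆ = 0 := by rw [← lie_skew, hx, neg_zero]
  have hxf : ⁅x, f⁆ = 0 := by rw [← lie_skew, t.lie_f_eq_zero hx hx', neg_zero]
  have : x ∈ LinearMap.ker (killingForm ℂ L) := by
    rw [LinearMap.mem_ker]
    ext y
    have hy : y ∈ LinearMap.ker (ad ℂ L e) ⊔ LinearMap.range (ad ℂ L f) := by
      rw [t.ker_sup_range]; trivial
    obtain ⟨u, hu, _, ⟨w, rfl⟩, rfl⟩ := Submodule.mem_sup.mp hy
    rw [map_add, he.killingForm_eq_zero hxe (by rw [← lie_skew, show ⁅e, u⁆ = 0 from hu, neg_zero]),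
      ad_apply, ← LieModule.traceForm_apply_lie_apply, hxf]
    simp
  simpa using this

end Sl2

end

namespace E6

/-! ### The weighted Dynkin diagrams of distinguished elements -/

def digitNat (n i : ℕ) : ℕ := Nat.mod (Nat.shiftRight n (Nat.sub 15 (Nat.mul 3 i))) 8

def wtNat (a₀ a₁ a₂ a₃ a₄ a₅ n : ℕ) : ℕ :=
  Nat.add (Nat.mul a₀ (digitNat n 0)) (Nat.add (Nat.mul a₁ (digitNat n 1))
    (Nat.add (Nat.mul a₂ (digitNat n 2)) (Nat.add (Nat.mul a₃ (digitNat n 3))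
      (Nat.add (Nat.mul a₄ (digitNat n 4)) (Nat.mul a₅ (digitNat n 5))))))

/-- Compares twice the number of roots of weight 0 with the number of roots of weight 2. -/
def balanced (a₀ a₁ a₂ a₃ a₄ a₅ : ℕ) : List ℕ → ℕ → ℕ → Bool
  | [], m, n => Nat.beq m n
  | c :: l, m, n =>
    match wtNat a₀ a₁ a₂ a₃ a₄ a₅ c with
    | 0 => balanced a₀ a₁ a₂ a₃ a₄ a₅ l (Nat.add m 2) n
    | 2 => balanced a₀ a₁ a₂ a₃ a₄ a₅ l m (Nat.add n 1)
    | _ => balanced a₀ a₁ a₂ a₃ a₄ a₅ l m n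

set_option maxRecDepth 4000 in
lemma eq_of_balanced : ∀ a₀ ∈ [0, 1, 2], ∀ a₁ ∈ [0, 1, 2], ∀ a₂ ∈ [0, 1, 2], ∀ a₃ ∈ [0, 1, 2],
    ∀ a₄ ∈ [0, 1, 2], ∀ a₅ ∈ [0, 1, 2], balanced a₀ a₁ a₂ a₃ a₄ a₅ posCodes 6 0 = true →
    [a₀, a₁, a₂, a₃, a₄, a₅] = [2, 0, 0, 2, 0, 2] ∨ [a₀, a₁, a₂, a₃, a₄, a₅] = [2, 2, 2, 0, 2, 2] ∨
    [a₀, a₁, a₂, a₃, a₄, a₅] = [2, 2, 2, 2, 2, 2] := by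
  decide +kernel

lemma balanced_iff (a₀ a₁ a₂ a₃ a₄ a₅ : ℕ) (l : List ℕ) (m n : ℕ) :
    balanced a₀ a₁ a₂ a₃ a₄ a₅ l m n = true ↔
      m + 2 * l.countP (fun c => wtNat a₀ a₁ a₂ a₃ a₄ a₅ c = 0) =
        n + l.countP (fun c => wtNat a₀ a₁ a₂ a₃ a₄ a₅ c = 2) := by
  induction l generalizing m n with
  | nil => simp [balanced]
  | cons c l ih =>
    rw [balanced]
    split
    · rename_i h
      rw [ih]
      simp only [List.countP_cons, h, decide_true, if_true, Nat.add_eq]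
      norm_num
      omega
    · rename_i h
      rw [ih]
      simp only [List.countP_cons, h, decide_true, if_true, Nat.add_eq]
      norm_num
      omega
    · rename_i h h'
      rw [ih]
      have h0 : wtNat a₀ a₁ a₂ a₃ a₄ a₅ c ≠ 0 := h
      have h2 : wtNat a₀ a₁ a₂ a₃ a₄ a₅ c ≠ 2 := h'
      simp [h0, h2]

set_option maxRecDepth 4000 in
lemma coef_symm : ∀ i ∈ List.range 36, ∀ k ∈ List.range 6,
    coef i k = digitNat (absCode i) k ∧ coef (36 + i) k = - coef i k := by
  decide +kernel

lemma wt_nonneg {a : ℕ → ℤ} (ha : ∀ k < 6, 0 ≤ a k) {i : ℕ} (hi : i < 36) : 0 ≤ wt a i := by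
  have h := fun k (hk : k < 6) => (coef_symm i (by simpa using hi) k (by simpa using hk)).1
  simp only [wt, h 0 (by norm_num), h 1 (by norm_num), h 2 (by norm_num), h 3 (by norm_num),
    h 4 (by norm_num), h 5 (by norm_num)]
  have := ha 0 (by norm_num)
  have := ha 1 (by norm_num)
  have := ha 2 (by norm_num)
  have := ha 3 (by norm_num)
  have := ha 4 (by norm_num)
  have := ha 5 (by norm_num)
  positivity

lemma wt_add_36 (a : ℕ → ℤ) {i : ℕ} (hi : i < 36) : wt a (36 + i) = -wt a i := by
  have h := fun k (hk : k < 6) => (coef_symm i (by simpa using hi) k (by simpa using hk)).2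
  simp only [wt, h 0 (by norm_num), h 1 (by norm_num), h 2 (by norm_num), h 3 (by norm_num),
    h 4 (by norm_num), h 5 (by norm_num)]
  push_cast
  ring

/-- The multiplicity of a weight. -/
def mult (a : ℕ → ℤ) (d : ℤ) : ℕ := ((Finset.range 78).filter fun i => wt a i = d).card

lemma card_filter_range (n : ℕ) (p : ℕ → Prop) [DecidablePred p] :
    ((Finset.range n).filter p).card = (List.range n).countP (fun i => p i) := by
  induction n with
  | zero => simp
  | succ n ih =>
    rw [Finset.range_add_one, Finset.filter_insert, List.range_succ, List.countP_append, ← ih]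
    by_cases h : p n <;> simp [h]

lemma mult_eq (a : ℕ → ℤ) (d : ℤ) : mult a d = (List.range 36).countP (fun i => wt a i = d) +
    (List.range 36).countP (fun i => wt a i = -d) + if d = 0 then 6 else 0 := by
  rw [mult, card_filter_range, show 78 = 36 + 36 + 6 by rfl, List.range_add, List.range_add,
    List.countP_append, List.countP_append, List.countP_map, List.countP_map]
  congr 1
  · congr 1
    refine List.countP_congr fun i hi => ?_
    simp only [List.mem_range] at hi
    simp [wt_add_36 a hi, neg_eq_iff_eq_neg]
  · have : ∀ i, wt a (72 + i) = 0 := fun i => wt_of_le _ (by omega)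
    by_cases hd : d = 0
    · simp [Function.comp_def, this, hd]
    · simp [Function.comp_def, this, hd, Ne.symm hd]

lemma mult_neg (a : ℕ → ℤ) (d : ℤ) : mult a (-d) = mult a d := by
  rw [mult_eq, mult_eq, neg_neg, add_comm (List.countP _ _)]
  simp

lemma posCodes_eq : posCodes = (List.range 36).map absCode := by
  decide +kernel

/-- There are exactly three weighted Dynkin diagrams for which the multiplicities of the weights
0 and 2 are equal. -/
lemma eq_of_mult_eq {a : ℕ → ℤ} (ha : ∀ k < 6, 0 ≤ a k) (ha' : ∀ k < 6, a k ≤ 2)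
    (h : mult a 0 = mult a 2) :
    [a 0, a 1, a 2, a 3, a 4, a 5] = [2, 0, 0, 2, 0, 2] ∨
    [a 0, a 1, a 2, a 3, a 4, a 5] = [2, 2, 2, 0, 2, 2] ∨
    [a 0, a 1, a 2, a 3, a 4, a 5] = [2, 2, 2, 2, 2, 2] := by
  have hb : ∀ k < 6, ∃ n : ℕ, a k = n ∧ n ∈ [0, 1, 2] := by
    intro k hk
    obtain ⟨n, hn⟩ := Int.eq_ofNat_of_zero_le (ha k hk)
    have := ha' k hk
    refine ⟨n, hn, ?_⟩
    have : n ≤ 2 := by omega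
    interval_cases n <;> simp
  obtain ⟨a₀, e₀, h₀⟩ := hb 0 (by norm_num)
  obtain ⟨a₁, e₁, h₁⟩ := hb 1 (by norm_num)
  obtain ⟨a₂, e₂, h₂⟩ := hb 2 (by norm_num)
  obtain ⟨a₃, e₃, h₃⟩ := hb 3 (by norm_num)
  obtain ⟨a₄, e₄, h₄⟩ := hb 4 (by norm_num)
  obtain ⟨a₅, e₅, h₅⟩ := hb 5 (by norm_num)
  have hwt : ∀ i < 36, wt a i = wtNat a₀ a₁ a₂ a₃ a₄ a₅ (absCode i) := by
    intro i hi
    have h := fun k (hk : k < 6) => (coef_symm i (by simpa using hi) k (by simpa using hk)).1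
    simp only [wt, wtNat, h 0 (by norm_num), h 1 (by norm_num), h 2 (by norm_num),
      h 3 (by norm_num), h 4 (by norm_num), h 5 (by norm_num), e₀, e₁, e₂, e₃, e₄, e₅, Nat.add_eq,
      Nat.mul_eq]
    push_cast
    ring
  have hz : (List.range 36).countP (fun i => wt a i = -2) = 0 := by
    rw [List.countP_eq_zero]
    intro i hi
    have := wt_nonneg ha (by simpa using hi : i < 36)
    simp only [decide_eq_true_eq]
    omega
  have hc : ∀ d : ℕ, (List.range 36).countP (fun i => wt a i = (d : ℤ)) =
      posCodes.countP (fun c => wtNat a₀ a₁ a₂ a₃ a₄ a₅ c = d) := by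
    intro d
    rw [posCodes_eq, List.countP_map]
    refine List.countP_congr fun i hi => ?_
    simp [hwt i (by simpa using hi)]
  have hc0 := hc 0
  have hc2 := hc 2
  rw [mult_eq, mult_eq, hz, neg_zero] at h
  push_cast at hc0 hc2
  rw [hc0, hc2] at h
  have := eq_of_balanced _ h₀ _ h₁ _ h₂ _ h₃ _ h₄ _ h₅ ((balanced_iff _ _ _ _ _ _ _ _ _).mpr (by
    simp only [if_true, OfNat.ofNat_ne_zero, if_false] at h
    omega))
  simp only [List.cons.injEq] at this
  simp only [List.cons.injEq, e₀, e₁, e₂, e₃, e₄, e₅]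
  exact_mod_cast this

end E6

namespace E6

set_option maxRecDepth 4000 in
lemma lt_of_mem_sc_neg_simple : ∀ i ∈ List.range 36, ∀ k ∈ List.range 6, i ≠ k →
    ∀ t ∈ sc i (k + 36), t.1 < 36 := by
  decide +kernel

end E6

section

open Module LieAlgebra

variable {L : Type*} [LieRing L] [LieAlgebra ℂ L]

lemma lie_weight {h x y : L} {m n : ℂ} (hx : ⁅h, x⁆ = m • x) (hy : ⁅h, y⁆ = n • y) :
    ⁅h, ⁅x, y⁆⁆ = (m + n) • ⁅x, y⁆ := by
  rw [leibniz_lie, hx, hy, smul_lie, lie_smul, add_smul]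

namespace IsE6Grading

variable {B : ℕ → L} {h : L} {a : ℕ → ℤ}

lemma coord_eq_zero (hB : IsE6Grading B h a) {c : ℕ → ℂ} {n : ℤ}
    (hx : ⁅h, ∑ i ∈ Finset.range 78, c i • B i⁆ = (n : ℂ) • ∑ i ∈ Finset.range 78, c i • B i)
    {i : ℕ} (hi : i < 78) (hn : E6.wt a i ≠ n) : c i = 0 := by
  have h1 : ⁅h, ∑ i ∈ Finset.range 78, c i • B i⁆ =
      ∑ i ∈ Finset.range 78, (c i * (E6.wt a i : ℤ)) • B i := by
    rw [lie_sum]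
    refine Finset.sum_congr rfl fun i hi => ?_
    rw [lie_smul, hB.weight i (by simpa using hi), smul_smul]
  rw [h1, Finset.smul_sum] at hx
  simp only [smul_smul] at hx
  have h2 := hB.ext_coord hx i hi
  have h3 : c i * (((E6.wt a i : ℤ) : ℂ) - n) = 0 := by
    rw [mul_sub, h2]
    ring
  refine (mul_eq_zero.mp h3).resolve_right ?_
  rw [sub_eq_zero]
  exact_mod_cast hn

lemma exists_coord (hB : IsE6Grading B h a) {x : L} {n : ℤ} (hx : ⁅h, x⁆ = (n : ℂ) • x) :
    ∃ c : ℕ → ℂ, x = ∑ i ∈ Finset.range 78, c i • B i ∧ ∀ i, c i ≠ 0 → i < 78 ∧ E6.wt a i = n := by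
  obtain ⟨c, rfl⟩ := hB.span x
  have hc : ∑ i ∈ Finset.range 78, (if i < 78 then c i else 0) • B i =
      ∑ i ∈ Finset.range 78, c i • B i :=
    Finset.sum_congr rfl fun i hi => by rw [if_pos (by simpa using hi)]
  refine ⟨fun i => if i < 78 then c i else 0, hc.symm, fun i hi => ?_⟩
  simp only [ne_eq, ite_eq_right_iff, not_forall] at hi
  obtain ⟨hi, hi0⟩ := hi
  refine ⟨hi, ?_⟩
  by_contra hn
  exact hi0 (hB.coord_eq_zero hx hi hn)

lemma finrank_eigenspace (hB : IsE6Grading B h a) (n : ℤ) :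
    finrank ℂ ((ad ℂ L h : End ℂ L).eigenspace (n : ℂ)) = E6.mult a n := by
  let s := (Finset.range 78).filter fun i => E6.wt a i = n
  have hs : ∀ i : s, (i : ℕ) < 78 := fun i => by
    have := i.2
    simp only [s, Finset.mem_filter, Finset.mem_range] at this
    exact this.1
  have hli : LinearIndependent ℂ fun i : s => B i := by
    have := hB.basis.linearIndependent.comp (fun i : s => (⟨i, hs i⟩ : Fin 78))
      (fun i j hij => Subtype.ext (by simpa using hij))
    simpa [Function.comp_def, hB.basis_apply] using this
  have : (ad ℂ L h : End ℂ L).eigenspace (n : ℂ) = Submodule.span ℂ (Set.range fun i : s => B i) := by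
    refine le_antisymm (fun x hx => ?_) (Submodule.span_le.mpr ?_)
    · rw [End.mem_eigenspace_iff, ad_apply] at hx
      obtain ⟨c, rfl, hc⟩ := hB.exists_coord hx
      refine Submodule.sum_mem _ fun i _ => ?_
      by_cases hi : c i = 0
      · simp [hi]
      · exact Submodule.smul_mem _ _ (Submodule.subset_span
          ⟨⟨i, by simpa [s] using hc i hi⟩, rfl⟩)
    · rintro _ ⟨i, rfl⟩
      have := i.2
      simp only [s, Finset.mem_filter, Finset.mem_range] at this
      rw [SetLike.mem_coe, End.mem_eigenspace_iff, ad_apply, hB.weight i this.1, this.2]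
  rw [this, finrank_span_eq_card hli, Fintype.card_coe]
  rfl

end IsE6Grading

variable {B : ℕ → L} {e h f : L} {a : ℕ → ℤ}

lemma IsSl2Triple.mapsTo_eigenspace (t : IsSl2Triple h e f) (n : ℤ) :
    ∀ x ∈ (ad ℂ L h : End ℂ L).eigenspace (n : ℂ),
      ad ℂ L e x ∈ (ad ℂ L h : End ℂ L).eigenspace ((n + 2 : ℤ) : ℂ) := by
  intro x hx
  rw [End.mem_eigenspace_iff, ad_apply] at hx ⊢
  rw [ad_apply, lie_weight (t.lie_h_e_smul ℂ) hx]
  push_cast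
  rw [add_comm]

variable [FiniteDimensional ℂ L] [IsKilling ℂ L]

lemma IsSl2Triple.eq_zero_of_nonpos (t : IsSl2Triple h e f) (he : IsDistinguished L e) {x : L}
    {n : ℤ} (hn : n ≤ 0) (hx : ⁅e, x⁆ = 0) (hx' : ⁅h, x⁆ = (n : ℂ) • x) : x = 0 := by
  by_contra hx0
  obtain ⟨m, hm⟩ := t.exists_nat_of_lie_eq_zero hx hx' hx0
  have hm' : n = m := by exact_mod_cast hm
  obtain rfl : n = 0 := by omega
  exact hx0 (t.eq_zero_of_isDistinguished he hx (by simpa using hx'))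

lemma IsSl2Triple.injective_restrict (t : IsSl2Triple h e f) (he : IsDistinguished L e) {n : ℤ}
    (hn : n ≤ 0) : Function.Injective ((ad ℂ L e : End ℂ L).restrict (t.mapsTo_eigenspace n)) := by
  rw [← LinearMap.ker_eq_bot, LinearMap.ker_eq_bot']
  rintro ⟨x, hx⟩ h0
  rw [End.mem_eigenspace_iff, ad_apply] at hx
  have : ⁅e, x⁆ = 0 := congrArg Subtype.val h0
  exact Subtype.ext (t.eq_zero_of_nonpos he hn this hx)

namespace IsE6Grading

lemma le_two (hB : IsE6Grading B h a) (t : IsSl2Triple h e f) (he : IsDistinguished L e)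
    (ha : ∀ k < 6, 0 ≤ a k) : ∀ k < 6, a k ≤ 2 := by
  intro k hk
  by_contra! hlt
  have hw := hB.weight (k + 36) (by omega)
  rw [E6.wt_neg_simple a hk] at hw
  refine hB.ne_zero (show k + 36 < 78 by omega) (t.eq_zero_of_nonpos he (by omega) ?_ hw)
  obtain ⟨c, hc, hc'⟩ := hB.exists_coord (x := e) (n := 2) (by simpa using t.lie_h_e_smul ℂ)
  rw [hc, sum_lie]
  refine Finset.sum_eq_zero fun i _ => ?_
  by_cases hi : c i = 0
  · simp [hi]
  obtain ⟨hi78, hwi⟩ := hc' i hi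
  have hi36 : i < 36 := by
    by_contra! hle
    by_cases h72 : i < 72
    · have h1 := E6.wt_add_36 a (show i - 36 < 36 by omega)
      have h2 := E6.wt_nonneg ha (show i - 36 < 36 by omega)
      rw [show 36 + (i - 36) = i by omega] at h1
      omega
    · rw [E6.wt_of_le a (by omega)] at hwi
      omega
  have hik : i ≠ k := by
    rintro rfl
    rw [E6.wt_simple a hk] at hwi
    omega
  have hnil : E6.sc i (k + 36) = [] := by
    rw [List.eq_nil_iff_forall_not_mem]
    intro s hs
    have h1 := E6.lt_of_mem_sc_neg_simple i (by simpa using hi36) k (by simpa using hk) hik s hs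
    have h2 := (E6.coef_of_mem_sc i (by simpa using hi78) (k + 36)
      (by simp only [List.mem_range]; omega) s hs).2
    have h3 : E6.wt a s.1 = E6.wt a i + E6.wt a (k + 36) := by
      have h2 := fun j (hj : j < 6) => h2 j (by simpa using hj)
      simp only [E6.wt, h2 0 (by norm_num), h2 1 (by norm_num), h2 2 (by norm_num),
        h2 3 (by norm_num), h2 4 (by norm_num), h2 5 (by norm_num)]
      push_cast
      ring
    rw [E6.wt_neg_simple a hk, hwi] at h3
    have := E6.wt_nonneg ha h1
    omega
  rw [smul_lie, hB.lie, hnil]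
  simp [combine]

/-- The weighted Dynkin diagram of a distinguished element of type E₆, together with the
surjectivity of `ad e` onto the elements of weight 2. -/
lemma eq_or_of_isDistinguished (hB : IsE6Grading B h a) (t : IsSl2Triple h e f)
    (he : IsDistinguished L e) (ha : ∀ k < 6, 0 ≤ a k) :
    ([a 0, a 1, a 2, a 3, a 4, a 5] = [2, 0, 0, 2, 0, 2] ∨
      [a 0, a 1, a 2, a 3, a 4, a 5] = [2, 2, 2, 0, 2, 2] ∨
      [a 0, a 1, a 2, a 3, a 4, a 5] = [2, 2, 2, 2, 2, 2]) ∧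
    ∀ y : L, ⁅h, y⁆ = (2 : ℂ) • y → ∃ x : L, ⁅h, x⁆ = 0 ∧ ⁅e, x⁆ = y := by
  have i0 := t.injective_restrict he le_rfl
  have l0 := LinearMap.finrank_le_finrank_of_injective i0
  have l2 := LinearMap.finrank_le_finrank_of_injective
    (t.injective_restrict he (show (-2 : ℤ) ≤ 0 by norm_num))
  rw [hB.finrank_eigenspace, hB.finrank_eigenspace] at l0 l2
  rw [E6.mult_neg] at l2
  norm_num at l0 l2
  have hm := le_antisymm l0 l2
  refine ⟨E6.eq_of_mult_eq ha (hB.le_two t he ha) hm, fun y hy => ?_⟩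
  have hs := (LinearMap.injective_iff_surjective_of_finrank_eq_finrank (by
    rw [hB.finrank_eigenspace, hB.finrank_eigenspace, hm]
    norm_num)).mp i0
  obtain ⟨⟨x, hx⟩, hxy⟩ := hs ⟨y, by rw [End.mem_eigenspace_iff, ad_apply, hy]; norm_num⟩
  rw [End.mem_eigenspace_iff, ad_apply] at hx
  exact ⟨x, by simpa using hx, congrArg Subtype.val hxy⟩

end IsE6Grading

end

namespace E6

/-- The triples `(i, j, k)` such that `⁅B r, B i⁆` has coordinate `k` at `j`, for `i` in `T`. -/
def bracketTable (r : ℕ) (T : List ℕ) : List (ℕ × ℕ × ℤ) :=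
  T.flatMap fun i => (sc r i).map fun t => (i, t.1, t.2)

/-- The coordinates of `exp (u • ad (B r))` applied to a vector with coordinates `c`, when
`tab` is the table of the brackets of `B r` and `(ad (B r)) ^ 2` vanishes. -/
def shear (tab : List (ℕ × ℕ × ℤ)) (u : ℂ) (c : ℕ → ℂ) (j : ℕ) : ℂ :=
  c j + u * (tab.map fun t => if t.2.1 = j then (t.2.2 : ℂ) * c t.1 else 0).sum

lemma coweight_mem : ∀ k ∈ List.range 6, ∀ t ∈ coweight k, 72 ≤ t.1 ∧ t.1 < 78 := by
  decide +kernel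

end E6

section

variable {L : Type*} [LieRing L] [LieAlgebra ℂ L]

/-- The linear combination of the `B i` for `i` in a list of indices. -/
def lcomb (B : ℕ → L) (T : List ℕ) (c : ℕ → ℂ) : L := (T.map fun i => c i • B i).sum

lemma lcomb_congr (B : ℕ → L) {T : List ℕ} {c c' : ℕ → ℂ} (h : ∀ i ∈ T, c i = c' i) :
    lcomb B T c = lcomb B T c' := by
  unfold lcomb
  congr 1
  exact List.map_congr_left fun i hi => by rw [h i hi]

lemma map_lcomb {B : ℕ → L} {T : List ℕ} {c : ℕ → ℂ} (φ : L →ₗ[ℂ] L) :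
    φ (lcomb B T c) = (T.map fun i => c i • φ (B i)).sum := by
  unfold lcomb
  rw [map_list_sum, List.map_map]
  congr 1
  exact List.map_congr_left fun i _ => by simp

lemma lcomb_add_single (B : ℕ → L) {T : List ℕ} (hT : T.Nodup) (c : ℕ → ℂ) {k : ℕ} (hk : k ∈ T)
    (v : ℂ) : lcomb B T (fun j => c j + if k = j then v else 0) = lcomb B T c + v • B k := by
  unfold lcomb
  rw [← List.sum_toFinset _ hT, ← List.sum_toFinset _ hT]
  simp only [add_smul, ite_smul, zero_smul, Finset.sum_add_distrib, Finset.sum_ite_eq,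
    List.mem_toFinset, hk, if_true]

lemma lcomb_shear (B : ℕ → L) {T : List ℕ} (hT : T.Nodup) (u : ℂ) (c : ℕ → ℂ)
    {tab : List (ℕ × ℕ × ℤ)} (h : ∀ t ∈ tab, t.2.1 ∈ T) :
    lcomb B T (E6.shear tab u c) =
      lcomb B T c + u • (tab.map fun t => c t.1 • (t.2.2 : ℂ) • B t.2.1).sum := by
  induction tab with
  | nil =>
    simp only [List.map_nil, List.sum_nil, smul_zero, add_zero]
    exact lcomb_congr B fun i _ => by simp [E6.shear]
  | cons t tab ih =>
    have e1 : lcomb B T (E6.shear (t :: tab) u c) = lcomb B T (fun j => E6.shear tab u c j +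
        if t.2.1 = j then u * t.2.2 * c t.1 else 0) := lcomb_congr B fun i _ => by
      simp only [E6.shear, List.map_cons, List.sum_cons]
      split_ifs <;> ring
    rw [e1, lcomb_add_single B hT _ (h t List.mem_cons_self),
      ih fun s hs => h s (List.mem_cons_of_mem _ hs), List.map_cons, List.sum_cons, smul_add,
      smul_smul, smul_smul]
    module

lemma combine_eq_sum (B : ℕ → L) (l : List (ℕ × ℤ)) :
    combine B l = (l.map fun t => (t.2 : ℂ) • B t.1).sum := by
  induction l with
  | nil => rfl
  | cons t l ih => simp [combine, ih]

lemma sum_bracketTable (B : ℕ → L) (r : ℕ) (T : List ℕ) (c : ℕ → ℂ) :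
    ((E6.bracketTable r T).map fun t => c t.1 • (t.2.2 : ℂ) • B t.2.1).sum =
      (T.map fun i => c i • combine B (E6.sc r i)).sum := by
  induction T with
  | nil => rfl
  | cons i T ih =>
    have hcons : E6.bracketTable r (i :: T) =
      (E6.sc r i).map (fun t => (i, t.1, t.2)) ++ E6.bracketTable r T := rfl
    rw [hcons, List.map_append, List.sum_append, ih, List.map_cons, List.sum_cons, combine_eq_sum,
      List.map_map, List.smul_sum, List.map_map]
    rfl

end

namespace IsE6Grading

open Module LieAlgebra

variable {L : Type*} [LieRing L] [LieAlgebra ℂ L] {B : ℕ → L} {e h f : L} {a : ℕ → ℤ}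

lemma congr (hB : IsE6Grading B h a) {a' : ℕ → ℤ} (ha : ∀ k < 6, a k = a' k) :
    IsE6Grading B h a' := by
  refine ⟨hB.toIsE6Basis, fun i hi => ?_⟩
  rw [hB.weight i hi]
  simp only [E6.wt, ha 0 (by norm_num), ha 1 (by norm_num), ha 2 (by norm_num),
    ha 3 (by norm_num), ha 4 (by norm_num), ha 5 (by norm_num)]

lemma lie_combine_eq_smul (hB : IsE6Grading B h a) {l : List (ℕ × ℤ)} {n : ℤ}
    (hl : ∀ t ∈ l, t.1 < 78 ∧ E6.wt a t.1 = n) : ⁅h, combine B l⁆ = (n : ℂ) • combine B l := by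
  rw [combine_eq_sum, ← ad_apply (R := ℂ), map_list_sum, List.smul_sum, List.map_map, List.map_map]
  congr 1
  refine List.map_congr_left fun t ht => ?_
  simp only [Function.comp_apply, map_smul, ad_apply]
  rw [hB.weight _ (hl t ht).1, (hl t ht).2, smul_comm]

lemma torus_lie (hB : IsE6Grading B h a) (s : ℕ → ℂ) : ⁅IsE6Basis.torus B s, h⁆ = 0 := by
  rw [IsE6Basis.torus, sum_lie]
  refine Finset.sum_eq_zero fun k hk => ?_
  have := hB.lie_combine_eq_smul (n := 0) (l := E6.coweight k) fun t ht => by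
    have := E6.coweight_mem k (by simpa using hk) t ht
    exact ⟨this.2, E6.wt_of_le a this.1⟩
  rw [smul_lie, ← lie_skew, this]
  simp

lemma exists_eq_lcomb (hB : IsE6Grading B h a) {T : List ℕ} (hT : T.Nodup) {n : ℤ}
    (hTn : ∀ i ∈ List.range 78, i ∈ T ↔ E6.wt a i = n) {x : L} (hx : ⁅h, x⁆ = (n : ℂ) • x) :
    ∃ c, x = lcomb B T c := by
  obtain ⟨c, rfl, hc⟩ := hB.exists_coord hx
  refine ⟨c, ?_⟩
  unfold lcomb
  rw [← List.sum_toFinset _ hT]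
  have hz : ∀ i, i ∉ T → c i • B i = 0 := fun i hi => by
    by_cases h0 : c i = 0
    · rw [h0, zero_smul]
    · exact absurd ((hTn i (by simpa using (hc i h0).1)).mpr (hc i h0).2) hi
  have hle : ∀ i, 78 ≤ i → c i • B i = 0 := fun i hi => by
    by_cases h0 : c i = 0
    · rw [h0, zero_smul]
    · exact absurd (hc i h0).1 (by omega)
  rw [Finset.sum_subset (Finset.subset_union_left (s₁ := Finset.range 78) (s₂ := T.toFinset))
    (fun i _ hi => hle i (by simpa using hi)),
    ← Finset.sum_subset (Finset.subset_union_right (s₁ := Finset.range 78) (s₂ := T.toFinset))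
    (fun i _ hi => hz i (by simpa using hi))]

variable [FiniteDimensional ℂ L]

lemma conj (hB : IsE6Grading B h a) {y : L} (hy : ⁅y, h⁆ = 0) :
    IsE6Grading (fun i => (expAd y).symm (B i)) h a := by
  refine ⟨hB.toIsE6Basis.map _, fun i hi => ?_⟩
  have hh : (expAd y).symm h = h := by
    have : expAd y h = h := by
      rw [expAd_of_lie_eq_smul (c := 0) (by simpa using hy), Complex.exp_zero, one_smul]
    conv_lhs => rw [← this]
    exact (expAd y).symm_apply_apply h
  conv_lhs => rw [← hh]
  rw [← LieEquiv.coe_toLieHom, ← LieHom.map_lie, hB.weight i hi, map_smul]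

lemma exists_scale (hB : IsE6Grading B h a) {T : List ℕ} (hT : ∀ i ∈ T, i < 78) {c : ℕ → ℂ}
    (he : e = lcomb B T c) (s : ℕ → ℂ) : ∃ B', IsE6Grading B' h a ∧
      e = lcomb B' T fun i => Complex.exp (E6.wt s i) * c i := by
  set y := IsE6Basis.torus B s with hy
  refine ⟨_, hB.conj (hB.torus_lie s), (expAd y).injective ?_⟩
  have h1 := map_lcomb (B := B) (T := T) (c := c) (expAd y).toLieHom.toLinearMap
  have h2 := map_lcomb (B := fun i => (expAd y).symm (B i)) (T := T)
    (c := fun i => Complex.exp (E6.wt s i) * c i) (expAd y).toLieHom.toLinearMap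
  refine ((congrArg _ he).trans h1).trans (Eq.trans ?_ h2.symm)
  congr 1
  refine List.map_congr_left fun i hi => ?_
  have h3 : expAd y (B i) = Complex.exp (E6.wt s i) • B i :=
    expAd_of_lie_eq_smul (hB.lie_torus s (hT i hi))
  refine (congrArg _ h3).trans ?_
  refine Eq.trans ?_ (congrArg _ ((expAd y).apply_symm_apply (B i))).symm
  rw [smul_smul, mul_comm]

lemma exists_shear (hB : IsE6Grading B h a) {T : List ℕ} (hT : T.Nodup) {c : ℕ → ℂ}
    (he : e = lcomb B T c) {r : ℕ} (hr : r < 78 ∧ E6.wt a r = 0)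
    (htab : ∀ t ∈ E6.bracketTable r T, t.2.1 ∈ T ∧ E6.sc r t.2.1 = []) (u : ℂ) :
    ∃ B', IsE6Grading B' h a ∧ e = lcomb B' T (E6.shear (E6.bracketTable r T) u c) := by
  set y := u • B r with hy
  have hyh : ⁅y, h⁆ = 0 := by
    rw [hy, smul_lie, ← lie_skew, hB.weight r hr.1, hr.2]
    simp
  refine ⟨_, hB.conj hyh, (expAd y).injective ?_⟩
  have h1 := map_lcomb (B := B) (T := T) (c := c) (expAd y).toLieHom.toLinearMap
  have h2 := map_lcomb (B := fun i => (expAd y).symm (B i)) (T := T)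
    (c := E6.shear (E6.bracketTable r T) u c) (expAd y).toLieHom.toLinearMap
  refine ((congrArg _ he).trans h1).trans (Eq.trans ?_ h2.symm)
  have e2 : (T.map fun i => E6.shear (E6.bracketTable r T) u c i •
      (expAd y).toLieHom.toLinearMap ((expAd y).symm (B i))).sum =
      lcomb B T (E6.shear (E6.bracketTable r T) u c) := by
    unfold lcomb
    congr 1
    exact List.map_congr_left fun i _ => congrArg _ ((expAd y).apply_symm_apply (B i))
  rw [e2, lcomb_shear B hT u c fun t ht => (htab t ht).1, sum_bracketTable]
  unfold lcomb
  rw [List.smul_sum, List.map_map, ← List.sum_map_add]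
  congr 1
  refine List.map_congr_left fun i hi => ?_
  have h3 : ⁅y, ⁅y, B i⁆⁆ = 0 := by
    rw [hy, smul_lie, smul_lie, lie_smul, hB.lie, combine_eq_sum, ← ad_apply (R := ℂ) (L := L),
      map_list_sum, List.map_map, List.sum_eq_zero, smul_zero, smul_zero]
    intro x hx
    obtain ⟨t, ht, rfl⟩ := List.mem_map.mp hx
    have := (htab (i, t.1, t.2) (List.mem_flatMap.mpr ⟨i, hi, List.mem_map.mpr ⟨t, ht, rfl⟩⟩)).2
    simp only [Function.comp_apply, map_smul, ad_apply]
    rw [hB.lie, this]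
    simp [combine]
  have h4 : expAd y (B i) = B i + u • combine B (E6.sc r i) := by
    rw [expAd_of_lie_lie_lie_eq_zero (by rw [h3, lie_zero]), h3, smul_zero, add_zero, hy, smul_lie,
      hB.lie]
  refine (congrArg _ h4).trans ?_
  rw [smul_add, smul_comm]
  rfl

/-- The injectivity of `ad e` on the elements of weight 0 bounds the number of basis vectors of
weight 0 by the number of basis vectors occurring in their brackets with `e`. -/
lemma false_of_card_lt [IsKilling ℂ L] (hB : IsE6Grading B h a) (t : IsSl2Triple h e f)
    (hd : IsDistinguished L e) {T : List ℕ} {c : ℕ → ℂ} (he : e = lcomb B T c) {Z : List ℕ}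
    (hZ : ∀ z ∈ Z, c z = 0) (P Q : List ℕ) (hP : P.Nodup) (hPw : ∀ p ∈ P, p < 78 ∧ E6.wt a p = 0)
    (hPQ : ∀ i ∈ T, i ∉ Z → ∀ p ∈ P, ∀ s ∈ E6.sc p i, s.1 ∈ Q) (hlt : Q.length < P.length) :
    False := by
  let W : Submodule ℂ L := Submodule.span ℂ (Set.range fun q : Fin Q.length => B (Q.get q))
  have hW : finrank ℂ W ≤ Q.length :=
    (finrank_range_le_card (R := ℂ) fun q : Fin Q.length => B (Q.get q)).trans_eq
      (Fintype.card_fin _)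
  have hbW : ∀ p ∈ P, ⁅e, B p⁆ ∈ W := by
    intro p hp
    rw [← lie_skew, he, ← ad_apply (R := ℂ) (L := L), map_lcomb]
    refine W.neg_mem (list_sum_mem fun x hx => ?_)
    obtain ⟨i, hi, rfl⟩ := List.mem_map.mp hx
    by_cases hiZ : i ∈ Z
    · rw [hZ i hiZ, zero_smul]
      exact W.zero_mem
    refine W.smul_mem _ ?_
    rw [ad_apply, hB.lie, combine_eq_sum]
    refine list_sum_mem fun x hx => ?_
    obtain ⟨s, hs, rfl⟩ := List.mem_map.mp hx
    obtain ⟨q, hq⟩ := List.get_of_mem (hPQ i hi hiZ p hp s hs)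
    exact W.smul_mem _ (Submodule.subset_span ⟨q, by simp only [hq]⟩)
  have hli : LinearIndependent ℂ fun p : Fin P.length => B (P.get p) := by
    have := hB.basis.linearIndependent.comp
      (fun p : Fin P.length => (⟨P.get p, (hPw _ (List.get_mem P p)).1⟩ : Fin 78))
      (fun i j hij => (List.nodup_iff_injective_get.mp hP) (by simpa using hij))
    simpa [Function.comp_def, hB.basis_apply] using this
  have hli' : LinearIndependent ℂ fun p : Fin P.length => ⁅e, B (P.get p)⁆ := by
    rw [Fintype.linearIndependent_iff] at hli ⊢
    intro g hg
    refine hli g (t.eq_zero_of_isDistinguished hd ?_ ?_)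
    · rw [lie_sum, ← hg]
      exact Finset.sum_congr rfl fun p _ => lie_smul _ _ _
    · rw [lie_sum]
      refine Finset.sum_eq_zero fun p _ => ?_
      have := hPw _ (List.get_mem P p)
      rw [lie_smul, hB.weight _ this.1, this.2]
      simp
  have hli'' : LinearIndependent ℂ fun p : Fin P.length =>
      (⟨⁅e, B (P.get p)⁆, hbW _ (List.get_mem P p)⟩ : W) :=
    LinearIndependent.of_comp W.subtype hli'
  have := hli''.fintype_card_le_finrank
  rw [Fintype.card_fin] at this
  omega

end IsE6Grading

namespace E6

lemma wt_of_coef_eq {R : Type*} [CommRing R] (a : ℕ → R) {i : ℕ} {x0 x1 x2 x3 x4 x5 : ℤ}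
    (h : (List.range 6).map (coef i) = [x0, x1, x2, x3, x4, x5]) :
    wt a i = a 0 * x0 + a 1 * x1 + a 2 * x2 + a 3 * x3 + a 4 * x4 + a 5 * x5 := by
  have e : List.range 6 = [0, 1, 2, 3, 4, 5] := by decide
  simp only [e, List.map_cons, List.map_nil, List.cons.injEq, and_true] at h
  obtain ⟨h0, h1, h2, h3, h4, h5⟩ := h
  simp only [wt, h0, h1, h2, h3, h4, h5]

/-- The weights of the simple roots for the nilpotent orbit E₆(a₁). -/
def diagramA1 (k : ℕ) : ℤ := [2, 2, 2, 0, 2, 2].getD k 0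

/-- The weights of the simple roots for the nilpotent orbit E₆(a₃). -/
def diagramA3 (k : ℕ) : ℤ := [2, 0, 0, 2, 0, 2].getD k 0

/-- The basis vectors of weight 2 for E₆(a₁). -/
def weightTwoA1 : List ℕ := [0, 1, 2, 4, 5, 7, 8, 9]

/-- The basis vectors of weight 2 for E₆(a₃). -/
def weightTwoA3 : List ℕ := [0, 5, 6, 10, 3, 8, 9, 14, 7, 12, 13, 18]

end E6

namespace IsE6Grading

open Module LieAlgebra

variable {L : Type*} [LieRing L] [LieAlgebra ℂ L] [FiniteDimensional ℂ L]
  {B : ℕ → L} {e h f : L} {c : ℕ → ℂ}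

section

open E6 in
lemma exists_shearA1 (hB : IsE6Grading B h diagramA1) (he : e = lcomb B weightTwoA1 c) (r : ℕ)
    (hr : r ∈ [3, 39]) (u : ℂ) : ∃ B', IsE6Grading B' h diagramA1 ∧
      e = lcomb B' weightTwoA1 (shear (bracketTable r weightTwoA1) u c) := by
  have H : ∀ r ∈ [3, 39], (r < 78 ∧ wt diagramA1 r = 0) ∧
    ∀ t ∈ bracketTable r weightTwoA1, t.2.1 ∈ weightTwoA1 ∧ sc r t.2.1 = [] := by decide +kernel
  exact hB.exists_shear (by decide) he (H r hr).1 (H r hr).2 u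

open E6 in
lemma exists_shearA3 (hB : IsE6Grading B h diagramA3) (he : e = lcomb B weightTwoA3 c) (r : ℕ)
    (hr : r ∈ [1, 37, 2, 38, 4, 40]) (u : ℂ) : ∃ B', IsE6Grading B' h diagramA3 ∧
      e = lcomb B' weightTwoA3 (shear (bracketTable r weightTwoA3) u c) := by
  have H : ∀ r ∈ [1, 37, 2, 38, 4, 40], (r < 78 ∧ wt diagramA3 r = 0) ∧
    ∀ t ∈ bracketTable r weightTwoA3, t.2.1 ∈ weightTwoA3 ∧ sc r t.2.1 = [] := by decide +kernel
  exact hB.exists_shear (by decide) he (H r hr).1 (H r hr).2 u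

lemma exp_neg_log_mul {z : ℂ} (hz : z ≠ 0) {x : ℂ} (hx : x = -Complex.log z) :
    Complex.exp x * z = 1 := by
  rw [hx, Complex.exp_neg, Complex.exp_log hz, inv_mul_cancel₀ hz]

variable [IsKilling ℂ L]

lemma exists_normalForm_regular (hB : IsE6Grading B h fun _ => 2) (t : IsSl2Triple h e f)
    (hd : IsDistinguished L e) : ∃ B', IsE6Grading B' h (fun _ => 2) ∧
      e = combine B' [(0, 1), (1, 1), (2, 1), (3, 1), (4, 1), (5, 1)] := by
  obtain ⟨c, he⟩ := hB.exists_eq_lcomb (T := [0, 1, 2, 3, 4, 5]) (n := 2) (by decide)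
    (by decide +kernel) (by simpa using t.lie_h_e_smul ℂ)
  have hne : ∀ i ∈ [0, 1, 2, 3, 4, 5], c i ≠ 0 := by
    intro i hi h0
    refine hB.false_of_card_lt t hd he (Z := [i]) (by simpa using h0)
      [72, 73, 74, 75, 76, 77] ([0, 1, 2, 3, 4, 5].filter (· ≠ i)) (by decide) (by decide +kernel)
      ?_ ?_ <;> clear h0 <;> revert i <;> decide +kernel
  obtain ⟨B', hB', he'⟩ := hB.exists_scale (by decide) he fun k => -Complex.log (c k)
  refine ⟨B', hB', he'.trans ?_⟩
  have hw : ∀ k < 6, Complex.exp (E6.wt (fun k => -Complex.log (c k)) k) * c k = 1 :=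
    fun k hk => exp_neg_log_mul (hne k (by simp; omega)) (E6.wt_simple _ hk)
  simp [lcomb, hw, combine]

lemma exists_normalForm_A1 (hB : IsE6Grading B h E6.diagramA1) (t : IsSl2Triple h e f)
    (hd : IsDistinguished L e) : ∃ B', IsE6Grading B' h E6.diagramA1 ∧
      e = combine B' [(0, 1), (1, 1), (2, 1), (5, 1), (8, 1), (9, 1)] := by
  have tab3 : E6.bracketTable 3 E6.weightTwoA1 = [(1, 7, 1), (2, 8, 1), (4, 9, -1)] := by
    decide +kernel
  have tab39 : E6.bracketTable 39 E6.weightTwoA1 = [(7, 1, 1), (8, 2, 1), (9, 4, -1)] := by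
    decide +kernel
  obtain ⟨c, he⟩ := hB.exists_eq_lcomb (T := E6.weightTwoA1) (n := 2) (by decide)
    (by decide +kernel) (by simpa using t.lie_h_e_smul ℂ)
  obtain ⟨B, c, hB, he, h1⟩ : ∃ B' c, IsE6Grading B' h E6.diagramA1 ∧
      e = lcomb B' E6.weightTwoA1 c ∧ c 1 ≠ 0 := by
    by_cases h1 : c 1 = 0
    · obtain ⟨B', hB', he'⟩ := hB.exists_shearA1 he 39 (by decide) 1
      refine ⟨B', _, hB', he', ?_⟩
      simp only [E6.shear, tab39]
      intro h7
      simp [h1] at h7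
      exact hB.false_of_card_lt t hd he (Z := [1, 7]) (by simp [h1, h7])
        [3, 39, 72, 73, 74, 75, 76, 77] [0, 2, 4, 5, 8, 9] (by decide) (by decide +kernel)
        (by decide +kernel) (by decide)
    · exact ⟨B, c, hB, he, h1⟩
  obtain ⟨B, c, hB, he, h7⟩ : ∃ B' c, IsE6Grading B' h E6.diagramA1 ∧
      e = lcomb B' E6.weightTwoA1 c ∧ c 7 = 0 := by
    obtain ⟨B', hB', he'⟩ := hB.exists_shearA1 he 3 (by decide) (-c 7 / c 1)
    refine ⟨B', _, hB', he', ?_⟩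
    simp only [E6.shear, tab3]
    simp
    field_simp
    ring
  have h9 : c 9 ≠ 0 := fun h9 =>
    hB.false_of_card_lt t hd he (Z := [7, 9]) (by simp [h7, h9])
      [72, 73, 74, 75, 76, 77, 39] [0, 1, 8, 4, 5, 2] (by decide) (by decide +kernel)
      (by decide +kernel) (by decide)
  obtain ⟨B, c, hB, he, h7, h4⟩ : ∃ B' c, IsE6Grading B' h E6.diagramA1 ∧
      e = lcomb B' E6.weightTwoA1 c ∧ c 7 = 0 ∧ c 4 = 0 := by
    obtain ⟨B', hB', he'⟩ := hB.exists_shearA1 he 39 (by decide) (c 4 / c 9)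
    refine ⟨B', _, hB', he', ?_⟩
    simp only [E6.shear, tab39]
    simp [h7]
    field_simp
    ring
  have hne : ∀ i ∈ [0, 1, 2, 5, 8, 9], c i ≠ 0 := by
    intro i hi h0
    refine hB.false_of_card_lt t hd he (Z := [7, 4, i]) (by simp [h0, h4, h7])
      [72, 73, 74, 75, 76, 77] ([0, 1, 2, 5, 8, 9].filter (· ≠ i)) (by decide) (by decide +kernel)
      ?_ ?_ <;> clear h0 <;> revert i <;> decide +kernel
  let l := fun k => Complex.log (c k)
  let s : ℕ → ℂ := fun k =>
    [-l 0, -l 1, -l 2, -l 8 + l 2, -l 9 + l 8 - l 2, -l 5].getD k 0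
  obtain ⟨B', hB', he'⟩ := hB.exists_scale (by decide) he s
  refine ⟨B', hB', he'.trans ?_⟩
  have w0 : Complex.exp (E6.wt s 0) * c 0 = 1 := exp_neg_log_mul (hne 0 (by decide)) (by
    rw [E6.wt_of_coef_eq s (i := 0) (show _ = [1, 0, 0, 0, 0, 0] by decide +kernel)]; simp [s, l])
  have w1 : Complex.exp (E6.wt s 1) * c 1 = 1 := exp_neg_log_mul (hne 1 (by decide)) (by
    rw [E6.wt_of_coef_eq s (i := 1) (show _ = [0, 1, 0, 0, 0, 0] by decide +kernel)]; simp [s, l])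
  have w2 : Complex.exp (E6.wt s 2) * c 2 = 1 := exp_neg_log_mul (hne 2 (by decide)) (by
    rw [E6.wt_of_coef_eq s (i := 2) (show _ = [0, 0, 1, 0, 0, 0] by decide +kernel)]; simp [s, l])
  have w5 : Complex.exp (E6.wt s 5) * c 5 = 1 := exp_neg_log_mul (hne 5 (by decide)) (by
    rw [E6.wt_of_coef_eq s (i := 5) (show _ = [0, 0, 0, 0, 0, 1] by decide +kernel)]; simp [s, l])
  have w8 : Complex.exp (E6.wt s 8) * c 8 = 1 := exp_neg_log_mul (hne 8 (by decide)) (by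
    rw [E6.wt_of_coef_eq s (i := 8) (show _ = [0, 0, 1, 1, 0, 0] by decide +kernel)]; simp [s, l])
  have w9 : Complex.exp (E6.wt s 9) * c 9 = 1 := exp_neg_log_mul (hne 9 (by decide)) (by
    rw [E6.wt_of_coef_eq s (i := 9) (show _ = [0, 0, 0, 1, 1, 0] by decide +kernel)]; simp [s, l])
  simp [lcomb, E6.weightTwoA1, w0, w1, w2, w5, w8, w9, h4, h7, combine]

lemma exists_det_ne_zero {a0 a1 a2 a3 b0 b1 b2 b3 : ℂ} (h : a0 * a3 - a1 * a2 ≠ 0) :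
    ∃ u : ℂ, (b0 - u * a0) * (b3 - u * a3) - (b1 - u * a1) * (b2 - u * a2) ≠ 0 := by
  by_contra! hu
  apply h
  linear_combination (hu 0 - 2 * hu 1 + hu 2) / 2

lemma exists_det_eq_zero {a0 a1 a2 a3 b0 b1 b2 b3 : ℂ} (h : b0 * b3 - b1 * b2 ≠ 0) :
    ∃ u : ℂ, (a0 - u * b0) * (a3 - u * b3) - (a1 - u * b1) * (a2 - u * b2) = 0 := by
  obtain ⟨u, hu⟩ := exists_quadratic_eq_zero h (b := -(a0 * b3 + a3 * b0 - a1 * b2 - a2 * b1))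
    (c := a0 * a3 - a1 * a2) (IsAlgClosed.exists_eq_mul_self _)
  exact ⟨u, by linear_combination hu⟩

lemma exists_normalForm_A3 (hB : IsE6Grading B h E6.diagramA3) (t : IsSl2Triple h e f)
    (hd : IsDistinguished L e) : ∃ B', IsE6Grading B' h E6.diagramA3 ∧
      e = combine B' [(0, 1), (5, 1), (6, 1), (10, 1), (3, 1), (18, 1)] := by
  have tab1 : E6.bracketTable 1 E6.weightTwoA3 =
      [(3, 7, -1), (8, 12, -1), (9, 13, -1), (14, 18, -1)] := by decide +kernel
  have tab37 : E6.bracketTable 37 E6.weightTwoA3 =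
      [(7, 3, -1), (12, 8, -1), (13, 9, -1), (18, 14, -1)] := by decide +kernel
  have tab2 : E6.bracketTable 2 E6.weightTwoA3 =
      [(0, 6, 1), (3, 8, -1), (9, 14, -1), (7, 12, -1), (13, 18, -1)] := by decide +kernel
  have tab38 : E6.bracketTable 38 E6.weightTwoA3 =
      [(6, 0, 1), (8, 3, -1), (14, 9, -1), (12, 7, -1), (18, 13, -1)] := by decide +kernel
  have tab4 : E6.bracketTable 4 E6.weightTwoA3 =
      [(5, 10, -1), (3, 9, 1), (8, 14, 1), (7, 13, 1), (12, 18, 1)] := by decide +kernel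
  have tab40 : E6.bracketTable 40 E6.weightTwoA3 =
      [(10, 5, -1), (9, 3, 1), (14, 8, 1), (13, 7, 1), (18, 12, 1)] := by decide +kernel
  obtain ⟨c, he⟩ := hB.exists_eq_lcomb (T := E6.weightTwoA3) (n := 2) (by decide)
    (by decide +kernel) (by simpa using t.lie_h_e_smul ℂ)
  obtain ⟨B, c, hB, he, hA⟩ : ∃ B' c, IsE6Grading B' h E6.diagramA3 ∧
      e = lcomb B' E6.weightTwoA3 c ∧ c 3 * c 14 - c 8 * c 9 = 0 := by
    by_cases hA : c 3 * c 14 - c 8 * c 9 = 0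
    · exact ⟨B, c, hB, he, hA⟩
    obtain ⟨u, hu⟩ := exists_det_ne_zero (b0 := c 7) (b1 := c 12) (b2 := c 13) (b3 := c 18) hA
    obtain ⟨B, hB, he⟩ := hB.exists_shearA3 he 1 (by decide) u
    generalize hc : E6.shear (E6.bracketTable 1 E6.weightTwoA3) u c = c' at he
    have hdet : c' 7 * c' 18 - c' 12 * c' 13 ≠ 0 := by
      simp only [← hc, E6.shear, tab1]
      simpa [← sub_eq_add_neg] using hu
    obtain ⟨u, hu⟩ := exists_det_eq_zero (a0 := c' 3) (a1 := c' 8) (a2 := c' 9) (a3 := c' 14) hdet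
    obtain ⟨B, hB, he⟩ := hB.exists_shearA3 he 37 (by decide) u
    refine ⟨B, _, hB, he, ?_⟩
    simp only [E6.shear, tab37]
    simpa [← sub_eq_add_neg] using hu
  obtain ⟨B, c, u, hB, he, hA8, hA14⟩ : ∃ B' c, ∃ u : ℂ, IsE6Grading B' h E6.diagramA3 ∧
      e = lcomb B' E6.weightTwoA3 c ∧ c 8 = u * c 3 ∧ c 14 = u * c 9 := by
    by_cases h3 : c 3 = 0
    · by_cases h9 : c 9 = 0
      · obtain ⟨B, hB, he⟩ := hB.exists_shearA3 he 38 (by decide) (-1)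
        refine ⟨B, _, 1, hB, he, ?_⟩
        simp only [E6.shear, tab38]
        simp [h3, h9]
      · refine ⟨B, c, c 14 / c 9, hB, he, ?_, by field_simp⟩
        rw [h3] at hA ⊢
        simpa [h9] using hA
    · refine ⟨B, c, c 8 / c 3, hB, he, by field_simp, ?_⟩
      field_simp
      linear_combination hA
  obtain ⟨B, c, hB, he, h8, h14⟩ : ∃ B' c, IsE6Grading B' h E6.diagramA3 ∧
      e = lcomb B' E6.weightTwoA3 c ∧ c 8 = 0 ∧ c 14 = 0 := by
    obtain ⟨B, hB, he⟩ := hB.exists_shearA3 he 2 (by decide) u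
    refine ⟨B, _, hB, he, ?_⟩
    simp only [E6.shear, tab2]
    simp [hA8, hA14]
  obtain ⟨B, c, u, hB, he, h8, h14, hA9⟩ : ∃ B' c, ∃ u : ℂ, IsE6Grading B' h E6.diagramA3 ∧
      e = lcomb B' E6.weightTwoA3 c ∧ c 8 = 0 ∧ c 14 = 0 ∧ c 9 = u * c 3 := by
    by_cases h3 : c 3 = 0
    · obtain ⟨B, hB, he⟩ := hB.exists_shearA3 he 40 (by decide) 1
      refine ⟨B, _, 1, hB, he, ?_⟩
      simp only [E6.shear, tab40]
      simp [h3, h8, h14]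
    · exact ⟨B, c, c 9 / c 3, hB, he, h8, h14, by field_simp⟩
  obtain ⟨B, c, hB, he, h8, h14, h9⟩ : ∃ B' c, IsE6Grading B' h E6.diagramA3 ∧
      e = lcomb B' E6.weightTwoA3 c ∧ c 8 = 0 ∧ c 14 = 0 ∧ c 9 = 0 := by
    obtain ⟨B, hB, he⟩ := hB.exists_shearA3 he 4 (by decide) (-u)
    refine ⟨B, _, hB, he, ?_⟩
    simp only [E6.shear, tab4]
    simp [h8, h14, hA9]
  have h18 : c 18 ≠ 0 := fun h18 =>
    hB.false_of_card_lt t hd he (Z := [8, 9, 14, 18]) (by simp [h8, h9, h14, h18])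
      [72, 73, 74, 75, 76, 77, 38, 40, 1] [6, 3, 12, 10, 13, 0, 5, 7] (by decide)
      (by decide +kernel) (by decide +kernel) (by decide)
  obtain ⟨B, c, hB, he, h8, h14, h9, h18, h13⟩ : ∃ B' c, IsE6Grading B' h E6.diagramA3 ∧
      e = lcomb B' E6.weightTwoA3 c ∧ c 8 = 0 ∧ c 14 = 0 ∧ c 9 = 0 ∧ c 18 ≠ 0 ∧ c 13 = 0 := by
    obtain ⟨B, hB, he⟩ := hB.exists_shearA3 he 38 (by decide) (c 13 / c 18)
    refine ⟨B, _, hB, he, ?_⟩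
    simp only [E6.shear, tab38]
    simp [h8, h14, h9, h18]
  obtain ⟨B, c, hB, he, h8, h14, h9, h13, h12⟩ : ∃ B' c, IsE6Grading B' h E6.diagramA3 ∧
      e = lcomb B' E6.weightTwoA3 c ∧ c 8 = 0 ∧ c 14 = 0 ∧ c 9 = 0 ∧ c 13 = 0 ∧ c 12 = 0 := by
    obtain ⟨B, hB, he⟩ := hB.exists_shearA3 he 40 (by decide) (-c 12 / c 18)
    refine ⟨B, _, hB, he, ?_⟩
    simp only [E6.shear, tab40]
    simp [h8, h14, h9, h18, h13]
  have h3 : c 3 ≠ 0 := fun h3 =>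
    hB.false_of_card_lt t hd he (Z := [3, 8, 9, 14, 12, 13]) (by simp [h3, h8, h9, h14, h12, h13])
      [72, 73, 74, 75, 76, 77, 1] [0, 6, 5, 10, 18, 7] (by decide)
      (by decide +kernel) (by decide +kernel) (by decide)
  obtain ⟨B, c, hB, he, h8, h14, h9, h13, h12, h7⟩ : ∃ B' c, IsE6Grading B' h E6.diagramA3 ∧
      e = lcomb B' E6.weightTwoA3 c ∧ c 8 = 0 ∧ c 14 = 0 ∧ c 9 = 0 ∧ c 13 = 0 ∧ c 12 = 0 ∧
      c 7 = 0 := by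
    obtain ⟨B, hB, he⟩ := hB.exists_shearA3 he 1 (by decide) (c 7 / c 3)
    refine ⟨B, _, hB, he, ?_⟩
    simp only [E6.shear, tab1]
    simp [h8, h14, h9, h13, h12, h3]
  have hne : ∀ i ∈ [0, 3, 5, 6, 10, 18], c i ≠ 0 := by
    intro i hi h0
    refine hB.false_of_card_lt t hd he (Z := [8, 14, 9, 13, 12, 7, i])
      (by simp [h0, h8, h14, h9, h13, h12, h7])
      [72, 73, 74, 75, 76, 77] ([0, 3, 5, 6, 10, 18].filter (· ≠ i)) (by decide)
      (by decide +kernel) ?_ ?_ <;> clear h0 <;> revert i <;> decide +kernel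
  let l := fun k => Complex.log (c k)
  let s : ℕ → ℂ := fun k =>
    [-l 0, -l 18 + l 6 - l 0 + l 3 + l 10 - l 5, -l 6 + l 0, -l 3, -l 10 + l 5, -l 5].getD k 0
  obtain ⟨B', hB', he'⟩ := hB.exists_scale (by decide) he s
  refine ⟨B', hB', he'.trans ?_⟩
  have w0 : Complex.exp (E6.wt s 0) * c 0 = 1 := exp_neg_log_mul (hne 0 (by decide)) (by
    rw [E6.wt_of_coef_eq s (i := 0) (show _ = [1, 0, 0, 0, 0, 0] by decide +kernel)]; simp [s, l])
  have w3 : Complex.exp (E6.wt s 3) * c 3 = 1 := exp_neg_log_mul (hne 3 (by decide)) (by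
    rw [E6.wt_of_coef_eq s (i := 3) (show _ = [0, 0, 0, 1, 0, 0] by decide +kernel)]; simp [s, l])
  have w5 : Complex.exp (E6.wt s 5) * c 5 = 1 := exp_neg_log_mul (hne 5 (by decide)) (by
    rw [E6.wt_of_coef_eq s (i := 5) (show _ = [0, 0, 0, 0, 0, 1] by decide +kernel)]; simp [s, l])
  have w6 : Complex.exp (E6.wt s 6) * c 6 = 1 := exp_neg_log_mul (hne 6 (by decide)) (by
    rw [E6.wt_of_coef_eq s (i := 6) (show _ = [1, 0, 1, 0, 0, 0] by decide +kernel)]; simp [s, l])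
  have w10 : Complex.exp (E6.wt s 10) * c 10 = 1 := exp_neg_log_mul (hne 10 (by decide)) (by
    rw [E6.wt_of_coef_eq s (i := 10) (show _ = [0, 0, 0, 0, 1, 1] by decide +kernel)]; simp [s, l])
  have w18 : Complex.exp (E6.wt s 18) * c 18 = 1 := exp_neg_log_mul (hne 18 (by decide)) (by
    rw [E6.wt_of_coef_eq s (i := 18) (show _ = [0, 1, 1, 1, 1, 0] by decide +kernel)]; simp [s, l]
    ring)
  simp [lcomb, E6.weightTwoA3, w0, w3, w5, w6, w10, w18, h8, h14, h9, h13, h12, h7, combine]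

end

end IsE6Grading

/-- The `k`-th coordinate of a sparse vector. -/
def lookup (l : List (ℕ × ℤ)) (k : ℕ) : ℤ := l.foldr (fun t s => bif Nat.beq t.1 k then t.2 + s else s) 0

namespace E6

/-- The matrix of `ad (combine B E)` on the coordinates, extended by the rows `φ j`. -/
def adRows (E : List (ℕ × ℤ)) (φ : ℕ → List (ℕ × ℤ)) (r : ℕ) : List (List ℤ) :=
  (List.range 78).map (fun k => (List.range 78).map fun i => lookup (sparseLie sc E [(i, 1)]) k) ++
    (List.range r).map fun j => (List.range 78).map fun i => lookup (φ j) i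

/-- Coordinates of the brackets of the `Y j`, extended by the first `c` unit rows. -/
def centerRows (Y : ℕ → List (ℕ × ℤ)) (K : List (ℕ × ℕ)) (c r : ℕ) : List (List ℤ) :=
  K.map (fun p => (List.range r).map fun j => lookup (sparseLie sc (Y p.1) (Y j)) p.2) ++
    (List.range c).map fun i => (List.range r).map fun j => bif Nat.beq i j then 1 else 0

/-- A certificate for the centralizer of `e = combine B E` and its centre: `F` and `H` complete `e`
to an `sl₂`-triple, the `Y j` with `j < r` form a basis of the centralizer with dual functionals
`φ j`, and those with `j < c` form a basis of its centre, the last one being the highest root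
vector. -/
structure IsCentralizerData (a : ℕ → ℤ) (E F H : List (ℕ × ℤ)) (Y φ : ℕ → List (ℕ × ℤ))
    (K : List (ℕ × ℕ)) (c r : ℕ) : Prop where
  lie_F : addSMul (-1) (sparseLie sc E F) H = []
  lie_H : ∀ i ∈ List.range 78, addTo (-(wt a i)) i (sparseLie sc H [(i, 1)]) = []
  wt_F : ∀ t ∈ F, t.1 < 78 ∧ wt a t.1 = -2
  lie_Y : ∀ j ∈ List.range r, sparseLie sc E (Y j) = []
  lt : ∀ j ∈ List.range r, ∀ t ∈ Y j, t.1 < 78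
  dual : ∀ i ∈ List.range r, ∀ j ∈ List.range r,
    ((List.range 78).map fun k => lookup (Y j) k * lookup (φ i) k).sum = if i = j then 1 else 0
  fullRank_ad : fullRank 78 (adRows E φ r) = true
  comm : ∀ i ∈ List.range r, ∀ j ∈ List.range c, sparseLie sc (Y i) (Y j) = []
  fullRank_center : fullRank r (centerRows Y K c r) = true
  mem_lt : ∀ p ∈ K, p.1 < r ∧ p.2 < 78
  pos : 0 < c
  le : c ≤ r
  top : Y (c - 1) = [(35, 1)]
  wt_le : ∀ i ∈ List.range 78, wt a i ≤ wt a 35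

lemma lt_of_mem_addTo {n : ℕ} {c : ℤ} {k : ℕ} {l : List (ℕ × ℤ)} (hk : k < n)
    (hl : ∀ t ∈ l, t.1 < n) : ∀ t ∈ addTo c k l, t.1 < n := by
  induction l generalizing c with
  | nil =>
    unfold addTo
    split <;> simp [hk]
  | cons s l ih =>
    unfold addTo
    split
    · exact hl
    · have h1 := hl s List.mem_cons_self
      have h2 := fun t ht => hl t (List.mem_cons_of_mem _ ht)
      by_cases h : Nat.beq s.1 k = true
      · simpa only [h, cond_true] using ih h2
      · simp only [h, cond_false]
        intro t ht
        rw [List.mem_cons] at ht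
        rcases ht with rfl | ht
        · exact h1
        · exact ih h2 t ht

lemma lt_of_mem_addSMul {n : ℕ} {c : ℤ} {u l : List (ℕ × ℤ)} (hu : ∀ t ∈ u, t.1 < n)
    (hl : ∀ t ∈ l, t.1 < n) : ∀ t ∈ addSMul c u l, t.1 < n := by
  induction u with
  | nil => exact hl
  | cons s u ih =>
    exact lt_of_mem_addTo (hu s List.mem_cons_self)
      (ih fun t ht => hu t (List.mem_cons_of_mem _ ht))

lemma lt_of_mem_linExtend {n : ℕ} {A : ℕ → List (ℕ × ℤ)} (hA : ∀ k, ∀ t ∈ A k, t.1 < n)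
    (u : List (ℕ × ℤ)) : ∀ t ∈ linExtend A u, t.1 < n := by
  induction u with
  | nil => simp [linExtend]
  | cons s u ih => exact lt_of_mem_addSMul (hA _) ih

lemma lt_of_mem_sparseLie_sc (u v : List (ℕ × ℤ)) : ∀ t ∈ sparseLie sc u v, t.1 < 78 := by
  refine lt_of_mem_linExtend (fun i => lt_of_mem_linExtend (fun j t ht => ?_) v) u
  by_cases h : 78 ≤ i ∨ 78 ≤ j
  · simp [sc_eq_nil h] at ht
  · push Not at h
    exact (coef_of_mem_sc i (by simpa using h.1) j (by simpa using h.2) t ht).1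

end E6

lemma combine_eq_sum_lookup {M : Type*} [AddCommGroup M] [Module ℂ M] (B : ℕ → M)
    {l : List (ℕ × ℤ)} {n : ℕ} (h : ∀ t ∈ l, t.1 < n) :
    combine B l = ∑ k ∈ Finset.range n, (lookup l k : ℂ) • B k := by
  induction l with
  | nil => simp [combine, lookup]
  | cons t l ih =>
    have e : ∀ k, (lookup (t :: l) k : ℂ) = (if t.1 = k then (t.2 : ℂ) else 0) + lookup l k := by
      intro k
      have hb : Nat.beq t.1 k = decide (t.1 = k) := by rw [Bool.eq_iff_iff]; simp [Nat.beq_eq]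
      by_cases h : t.1 = k <;> simp [lookup, hb, h]
    simp only [e, add_smul, Finset.sum_add_distrib, ite_smul, zero_smul, Finset.sum_ite_eq,
      Finset.mem_range, h t List.mem_cons_self, if_true, combine,
      ih fun s hs => h s (List.mem_cons_of_mem _ hs)]

namespace IsE6Grading

open Module LieAlgebra

variable {L : Type*} [LieRing L] [LieAlgebra ℂ L] {B : ℕ → L} {e h f : L} {a : ℕ → ℤ}
  {E F H : List (ℕ × ℤ)} {Y φ : ℕ → List (ℕ × ℤ)} {K : List (ℕ × ℕ)} {c r : ℕ}

lemma sum_mul_lookup_eq_zero (hB : IsE6Basis B) {n : ℕ} {s : ℕ → ℂ} {l : ℕ → List (ℕ × ℤ)}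
    (hl : ∀ j < n, ∀ t ∈ l j, t.1 < 78) (h : ∑ j ∈ Finset.range n, s j • combine B (l j) = 0) {k : ℕ}
    (hk : k < 78) : ∑ j ∈ Finset.range n, s j * lookup (l j) k = 0 := by
  refine hB.indep (fun k => ∑ j ∈ Finset.range n, s j * lookup (l j) k) ?_ k hk
  rw [← h]
  simp only [Finset.sum_smul, mul_smul]
  rw [Finset.sum_comm]
  refine Finset.sum_congr rfl fun j hj => ?_
  rw [combine_eq_sum_lookup B (hl j (by simpa using hj)), Finset.smul_sum]

lemma exists_coord_of_lie_eq_zero (hB : IsE6Grading B h a)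
    (hD : E6.IsCentralizerData a E F H Y φ K c r) {y : L} (hy : ⁅combine B E, y⁆ = 0) :
    ∃ s : ℕ → ℂ, y = ∑ j ∈ Finset.range r, s j • combine B (Y j) := by
  obtain ⟨v, rfl⟩ := hB.span y
  let s : ℕ → ℂ := fun j => ∑ k ∈ Finset.range 78, v k * lookup (φ j) k
  let w : ℕ → ℂ := fun k =>
    if k < 78 then v k - ∑ j ∈ Finset.range r, s j * lookup (Y j) k else 0
  have hw : ∀ k ∈ Finset.range 78, w k = v k - ∑ j ∈ Finset.range r, s j * lookup (Y j) k :=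
    fun k hk => if_pos (by simpa using hk)
  have hsum : ∑ k ∈ Finset.range 78, w k • B k =
      ∑ k ∈ Finset.range 78, v k • B k - ∑ j ∈ Finset.range r, s j • combine B (Y j) := by
    have e1 : ∑ j ∈ Finset.range r, s j • combine B (Y j) =
        ∑ j ∈ Finset.range r, ∑ k ∈ Finset.range 78, (s j * lookup (Y j) k) • B k :=
      Finset.sum_congr rfl fun j hj => by
        rw [combine_eq_sum_lookup B (hD.lt j (by simpa using hj)), Finset.smul_sum]
        simp only [mul_smul]
    rw [e1, Finset.sum_comm, ← Finset.sum_sub_distrib]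
    refine Finset.sum_congr rfl fun k hk => ?_
    rw [hw k hk, sub_smul, Finset.sum_smul]
  have hlie : ⁅combine B E, ∑ k ∈ Finset.range 78, w k • B k⁆ = 0 := by
    rw [hsum, lie_sub, hy, lie_sum, zero_sub, neg_eq_zero]
    refine Finset.sum_eq_zero fun j hj => ?_
    rw [lie_smul, ← combine_sparseLie B E6.sc hB.lie, hD.lie_Y j (by simpa using hj)]
    simp [combine]
  have hzero : ∀ k < 78, w k = 0 := fun k hk => by
    refine eq_zero_of_fullRank hD.fullRank_ad (fun row hrow => ?_) hk fun k hk => if_neg (by omega)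
    rw [E6.adRows, List.mem_append, List.mem_map, List.mem_map] at hrow
    rcases hrow with ⟨k, hk, rfl⟩ | ⟨i, hi, rfl⟩
    · rw [E6.rowApply_map_range]
      refine sum_mul_lookup_eq_zero (l := fun i => sparseLie E6.sc E [(i, 1)]) hB.toIsE6Basis
        (fun i _ => E6.lt_of_mem_sparseLie_sc _ _) ?_ (by simpa using hk)
      rw [← hlie, lie_sum]
      refine Finset.sum_congr rfl fun i _ => ?_
      rw [combine_sparseLie B E6.sc hB.lie, lie_smul]
      simp [combine]
    · rw [E6.rowApply_map_range, Finset.sum_congr rfl fun k hk => by rw [hw k hk, sub_mul],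
        Finset.sum_sub_distrib, sub_eq_zero]
      simp only [Finset.sum_mul]
      rw [Finset.sum_comm]
      have e1 : ∀ j ∈ Finset.range r, ∑ k ∈ Finset.range 78,
          s j * (lookup (Y j) k : ℂ) * lookup (φ i) k = if i = j then s j else 0 := by
        intro j hj
        have := hD.dual i hi j (by simpa using hj)
        simp only [mul_assoc, ← Finset.mul_sum]
        have e2 : (∑ k ∈ Finset.range 78, (lookup (Y j) k : ℂ) * lookup (φ i) k) =
            ((if i = j then 1 else 0 : ℤ) : ℂ) := by
          rw [← this, ← List.sum_toFinset _ List.nodup_range, List.toFinset_range]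
          push_cast
          rfl
        rw [e2]
        split_ifs <;> simp
      rw [Finset.sum_congr rfl e1, Finset.sum_ite_eq, if_pos (by simpa using hi)]
  refine ⟨s, ?_⟩
  rw [← sub_eq_zero, ← hsum]
  exact Finset.sum_eq_zero fun k hk => by rw [hzero k (by simpa using hk), zero_smul]

end IsE6Grading

namespace IsE6Grading

open Module LieAlgebra

variable {L : Type*} [LieRing L] [LieAlgebra ℂ L] {B : ℕ → L} {e h f : L} {a : ℕ → ℤ}
  {E F H : List (ℕ × ℤ)} {Y φ : ℕ → List (ℕ × ℤ)} {K : List (ℕ × ℕ)} {c r : ℕ}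

lemma lie_combine_combine (hB : IsE6Grading B h a) {u v : List (ℕ × ℤ)} (w : List (ℕ × ℤ))
    (huv : sparseLie E6.sc u v = w) : ⁅combine B u, combine B v⁆ = combine B w := by
  rw [← combine_sparseLie B E6.sc hB.lie, huv]

lemma lie_combine_eq_zero (hB : IsE6Grading B h a) (hD : E6.IsCentralizerData a E F H Y φ K c r)
    {j : ℕ} (hj : j < r) : ⁅combine B (Y j), combine B E⁆ = 0 := by
  rw [← lie_skew, hB.lie_combine_combine [] (hD.lie_Y j (by simpa using hj))]
  simp [combine]

lemma lie_combine_combine_eq_zero (hB : IsE6Grading B h a)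
    (hD : E6.IsCentralizerData a E F H Y φ K c r) {i j : ℕ} (hi : i < r) (hj : j < c) :
    ⁅combine B (Y i), combine B (Y j)⁆ = 0 := by
  rw [hB.lie_combine_combine [] (hD.comm i (by simpa using hi) j (by simpa using hj))]
  simp [combine]

lemma inCenterOfCentralizer_combine (hB : IsE6Grading B h a)
    (hD : E6.IsCentralizerData a E F H Y φ K c r) {j : ℕ} (hj : j < c) :
    InCenterOfCentralizer L (combine B E) (combine B (Y j)) := by
  refine ⟨hB.lie_combine_eq_zero hD (hj.trans_le hD.le), fun y hy => ?_⟩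
  rw [← lie_skew, neg_eq_zero] at hy
  obtain ⟨s, rfl⟩ := hB.exists_coord_of_lie_eq_zero hD hy
  rw [lie_sum]
  refine Finset.sum_eq_zero fun i hi => ?_
  rw [lie_smul, ← lie_skew, hB.lie_combine_combine_eq_zero hD (by simpa using hi) hj]
  simp

lemma exists_coord_of_inCenter (hB : IsE6Grading B h a)
    (hD : E6.IsCentralizerData a E F H Y φ K c r) {v : L}
    (hv : InCenterOfCentralizer L (combine B E) v) :
    ∃ s : ℕ → ℂ, v = ∑ j ∈ Finset.range c, s j • combine B (Y j) := by
  have hv' := hv.1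
  rw [← lie_skew, neg_eq_zero] at hv'
  obtain ⟨s, rfl⟩ := hB.exists_coord_of_lie_eq_zero hD hv'
  let w : ℕ → ℂ := fun j => if c ≤ j ∧ j < r then s j else 0
  have hzero : ∀ j < r, w j = 0 := fun j hj => by
    refine eq_zero_of_fullRank hD.fullRank_center (fun row hrow => ?_) hj
      fun k hk => if_neg (by omega)
    rw [E6.centerRows, List.mem_append, List.mem_map, List.mem_map] at hrow
    rcases hrow with ⟨p, hp, rfl⟩ | ⟨i, hi, rfl⟩
    · rw [E6.rowApply_map_range]
      refine sum_mul_lookup_eq_zero (l := fun j => sparseLie E6.sc (Y p.1) (Y j)) hB.toIsE6Basis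
        (fun i _ => E6.lt_of_mem_sparseLie_sc _ _) ?_ (hD.mem_lt p hp).2
      have h0 := hv.2 _ (hB.lie_combine_eq_zero hD (hD.mem_lt p hp).1)
      rw [← lie_skew, neg_eq_zero, lie_sum] at h0
      rw [← h0]
      refine Finset.sum_congr rfl fun i hi => ?_
      rw [combine_sparseLie B E6.sc hB.lie, lie_smul]
      by_cases hic : i < c
      · rw [hB.lie_combine_combine_eq_zero hD (hD.mem_lt p hp).1 hic, smul_zero, smul_zero]
      · rw [show w i = s i from if_pos ⟨not_lt.1 hic, by simpa using hi⟩]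
    · rw [E6.rowApply_map_range]
      refine Finset.sum_eq_zero fun j hj => ?_
      by_cases hij : i = j
      · subst hij
        have : i < c := by simpa using hi
        simp [w, this.not_ge]
      · have hb : Nat.beq i j = false := by
          rw [Bool.eq_false_iff]
          exact fun h => hij (Nat.eq_of_beq_eq_true h)
        simp [hb]
  refine ⟨s, (Finset.sum_subset (Finset.range_mono hD.le) fun j hj hj' => ?_).symm⟩
  simp only [Finset.mem_range] at hj hj'
  have := hzero j hj
  rw [show w j = s j from if_pos ⟨not_lt.1 hj', hj⟩] at this
  rw [this, zero_smul]

variable [FiniteDimensional ℂ L] [IsKilling ℂ L]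

lemma eq_combine_of_isSl2Triple (hB : IsE6Grading B h a)
    (hD : E6.IsCentralizerData a E F H Y φ K c r) (t : IsSl2Triple h (combine B E) f)
    (hd : IsDistinguished L (combine B E)) : f = combine B F := by
  have hH : h - combine B H = 0 := by
    have h1 : h - combine B H ∈ LieAlgebra.center ℂ L := by
      refine (LieModule.mem_maxTrivSubmodule ℂ L L _).2 fun x => ?_
      obtain ⟨v, rfl⟩ := hB.span x
      rw [sum_lie]
      refine Finset.sum_eq_zero fun i hi => ?_
      have h2 := congrArg (combine B) (hD.lie_H i (by simpa using hi))
      rw [combine_addTo, combine_sparseLie B E6.sc hB.lie] at h2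
      simp only [combine, Int.cast_one, one_smul, add_zero, Int.cast_neg, neg_smul] at h2
      rw [smul_lie, lie_sub, ← lie_skew, ← lie_skew _ (combine B H), hB.weight i (by simpa using hi),
        ← neg_add_eq_zero.1 h2]
      simp
    simpa [LieAlgebra.center_eq_bot] using h1
  have hF := congrArg (combine B) hD.lie_F
  rw [combine_addSMul, combine_sparseLie B E6.sc hB.lie] at hF
  simp only [combine, Int.cast_neg, Int.cast_one, neg_smul, one_smul] at hF
  rw [← sub_eq_zero]
  refine t.eq_zero_of_nonpos hd (n := -2) (by norm_num) ?_ ?_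
  · rw [lie_sub, t.lie_e_f, neg_add_eq_zero.1 hF, hH]
  · rw [lie_sub, t.lie_h_f_nsmul, hB.lie_combine_eq_smul hD.wt_F]
    push_cast
    module

lemma propertyP_of_isCentralizerData (hB : IsE6Grading B h a)
    (hD : E6.IsCentralizerData a E F H Y φ K c r) (t : IsSl2Triple h (combine B E) f)
    (hd : IsDistinguished L (combine B E))
    (hP : ∀ v : L, InCenterOfCentralizer L (combine B E) v → v ≠ 0 →
      ∀ z : L, ⁅h, z⁆ = ((E6.wt a 35 : ℤ) : ℂ) • z →
        ∃ x : L, ⁅x, combine B E⁆ = 0 ∧ ⁅⁅combine B F, x⁆, v⁆ = z) :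
    PropertyP L (combine B E) h f := by
  intro m ⟨z₀, hz₀, hz₀c, hz₀h⟩ hmax v hv hv0 z _ hzh
  have htop : combine B (Y (c - 1)) = B 35 := by rw [hD.top]; simp [combine]
  have hle := hmax (E6.wt a 35 : ℤ) ⟨B 35, hB.ne_zero (by norm_num),
    htop ▸ hB.inCenterOfCentralizer_combine hD (Nat.sub_lt hD.pos one_pos),
    hB.weight 35 (by norm_num)⟩
  obtain ⟨n, rfl⟩ : ∃ n : ℕ, m = n := t.exists_nat_of_lie_eq_zero
    (by rw [← lie_skew, hz₀c.1, neg_zero]) hz₀h hz₀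
  have hn : (n : ℤ) = E6.wt a 35 := by
    have hle' := (Complex.le_def.1 hle).1
    simp only [Complex.intCast_re, Complex.natCast_re] at hle'
    refine le_antisymm ?_ (by exact_mod_cast hle')
    obtain ⟨c, hc, hc'⟩ := hB.exists_coord (n := n) (by simpa using hz₀h)
    by_contra hlt
    refine hz₀ (hc.trans (Finset.sum_eq_zero fun i hi => ?_))
    rw [show c i = 0 from by_contra fun h => hlt ?_, zero_smul]
    rw [← (hc' i h).2]
    exact hD.wt_le i (by simpa using hi)
  rw [hB.eq_combine_of_isSl2Triple hD t hd]
  exact hP v hv hv0 z (by rw [hzh, ← hn]; simp)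

end IsE6Grading

namespace E6

/-- The regular nilpotent element. -/
def regE : List (ℕ × ℤ) := [(0, 1), (1, 1), (2, 1), (3, 1), (4, 1), (5, 1)]
def regF : List (ℕ × ℤ) := [(36, 16), (37, 22), (38, 30), (39, 42), (40, 30), (41, 16)]
def regH : List (ℕ × ℤ) := [(72, 16), (73, 22), (74, 30), (75, 42), (76, 30), (77, 16)]
def regY (j : ℕ) : List (ℕ × ℤ) :=
  [regE, [(16, 1), (17, 1), (19, -1), (20, 1)], [(21, -1), (22, -2), (23, -1), (24, 1)],
    [(28, 1), (29, 1), (30, 1)], [(31, 1), (32, 1)], [(35, 1)]].getD j []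
def regDual (j : ℕ) : List (ℕ × ℤ) :=
  [[(0, 1)], [(16, 1)], [(24, 1)], [(28, 1)], [(31, 1)], [(35, 1)]].getD j []

set_option maxRecDepth 4000 in
lemma isCentralizerData_reg :
    IsCentralizerData (fun _ => 2) regE regF regH regY regDual [] 6 6 := by
  constructor <;> decide +kernel

/-- The nilpotent element with Bala–Carter label `E₆(a₁)`. -/
def A1E : List (ℕ × ℤ) := [(0, 1), (1, 1), (2, 1), (5, 1), (8, 1), (9, 1)]
def A1F : List (ℕ × ℤ) :=
  [(36, 12), (37, 16), (38, 14), (40, 14), (41, 12), (43, -8), (44, 8), (45, 22)]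
def A1H : List (ℕ × ℤ) := [(72, 12), (73, 16), (74, 22), (75, 30), (76, 22), (77, 12)]
def A1Y (j : ℕ) : List (ℕ × ℤ) :=
  [A1E, [(21, 1), (22, 1), (25, 1), (27, 1)], [(26, 1), (28, 1), (29, 2), (30, 1)], [(33, 1)],
    [(35, 1)], [(6, -1), (10, -2), (11, 1), (12, -1), (13, 1), (14, -1), (15, 1)],
    [(16, -2), (17, -1), (18, 1), (19, 2), (20, -1), (23, 2)], [(28, 1), (29, 1)]].getD j []
def A1Dual (j : ℕ) : List (ℕ × ℤ) :=
  [[(0, 1)], [(21, 1)], [(26, 1)], [(33, 1)], [(35, 1)], [(11, 1)], [(18, 1)],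
    [(28, 1), (26, -1)]].getD j []

set_option maxRecDepth 4000 in
lemma isCentralizerData_A1 :
    IsCentralizerData diagramA1 A1E A1F A1H A1Y A1Dual [(5, 26), (5, 33), (6, 26)] 5 8 := by
  constructor <;> decide +kernel

/-- The nilpotent element with Bala–Carter label `E₆(a₃)`. -/
def A3E : List (ℕ × ℤ) := [(0, 1), (5, 1), (6, 1), (10, 1), (3, 1), (18, 1)]
def A3F : List (ℕ × ℤ) :=
  [(36, 4), (39, 10), (41, 4), (42, 4), (44, 4), (45, 4), (46, 4), (48, 4), (49, 4), (54, 10)]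
def A3H : List (ℕ × ℤ) := [(72, 8), (73, 10), (74, 14), (75, 20), (76, 14), (77, 8)]
def A3Y (j : ℕ) : List (ℕ × ℤ) :=
  [A3E, [(31, -1), (32, 1)], [(34, 1)], [(35, 1)], [(0, 1), (5, 1), (7, -1), (12, 1), (13, 1)],
    [(6, -1), (8, -1), (9, -1), (10, -1), (14, 1)], [(16, 1), (19, 1)], [(17, 1), (20, 1)],
    [(11, 1), (15, -1), (16, 2), (17, -2), (21, -1), (23, -1), (24, 1)],
    [(22, -1), (26, -1), (27, -1), (28, 1)], [(22, 1), (25, -1), (26, 1), (30, 1)],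
    [(31, 1)]].getD j []
def A3Dual (j : ℕ) : List (ℕ × ℤ) :=
  [[(3, 1)], [(32, 1)], [(34, 1)], [(35, 1)], [(12, 1)], [(14, 1)], [(19, 1)], [(20, 1)],
    [(11, 1)], [(28, 1)], [(30, 1)], [(31, 1), (32, 1)]].getD j []

set_option maxRecDepth 4000 in
lemma isCentralizerData_A3 :
    IsCentralizerData diagramA3 A3E A3F A3H A3Y A3Dual
      [(4, 11), (4, 22), (4, 25), (4, 31), (4, 32), (4, 35), (5, 11), (5, 25)] 4 12 := by
  constructor <;> decide +kernel

end E6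

namespace IsE6Grading

open Module LieAlgebra

variable {L : Type*} [LieRing L] [LieAlgebra ℂ L] {B : ℕ → L} {e h f : L} {a : ℕ → ℤ}
  {E F H : List (ℕ × ℤ)} {Y φ : ℕ → List (ℕ × ℤ)} {K : List (ℕ × ℕ)} {c r : ℕ}

lemma lie_lie_sum (hB : IsE6Grading B h a) {s : ℕ → ℂ} {i k : ℕ} {w : List (ℕ × ℤ)} (hi : i < c)
    (hs : ∀ j < i, s j = 0) (hw : sparseLie E6.sc (sparseLie E6.sc F (Y k)) (Y i) = w)
    (hj : ∀ j ∈ List.range c, i < j → sparseLie E6.sc (sparseLie E6.sc F (Y k)) (Y j) = []) :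
    ⁅⁅combine B F, combine B (Y k)⁆, ∑ j ∈ Finset.range c, s j • combine B (Y j)⁆ =
      s i • combine B w := by
  rw [hB.lie_combine_combine _ rfl, lie_sum, Finset.sum_eq_single_of_mem i (by simpa using hi),
    lie_smul, hB.lie_combine_combine _ hw]
  intro j hjc hji
  rcases hji.lt_or_gt with h1 | h1
  · rw [hs j h1, zero_smul, lie_zero]
  · rw [lie_smul, hB.lie_combine_combine _ (hj j (by simpa using hjc) h1)]
    simp [combine]

/-- The first nonzero coordinate of a nonzero central element of the centralizer. -/
lemma exists_leading_coord (hB : IsE6Grading B h a) (hD : E6.IsCentralizerData a E F H Y φ K c r)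
    {v : L} (hv : InCenterOfCentralizer L (combine B E) v) (hv0 : v ≠ 0) :
    ∃ (s : ℕ → ℂ) (i : ℕ), v = ∑ j ∈ Finset.range c, s j • combine B (Y j) ∧
      i < c ∧ s i ≠ 0 ∧ ∀ j < i, s j = 0 := by
  classical
  obtain ⟨s, rfl⟩ := hB.exists_coord_of_inCenter hD hv
  have h1 : ∃ i, i < c ∧ s i ≠ 0 := by
    by_contra! h1
    exact hv0 (Finset.sum_eq_zero fun j hj => by rw [h1 j (by simpa using hj), zero_smul])
  refine ⟨s, Nat.find h1, rfl, (Nat.find_spec h1).1, (Nat.find_spec h1).2, fun j hj => ?_⟩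
  by_contra h2
  exact Nat.find_min h1 hj ⟨hj.trans (Nat.find_spec h1).1, h2⟩

variable [FiniteDimensional ℂ L] [IsKilling ℂ L]

/-- Property (P) when the pairing `(x, v) ↦ ⁅⁅f, x⁆, v⁆` is triangular. -/
lemma propertyP_of_triangular (hB : IsE6Grading B h a)
    (hD : E6.IsCentralizerData a E F H Y φ K c r) (t : IsSl2Triple h (combine B E) f)
    (hd : IsDistinguished L (combine B E)) (τ : ℕ → ℕ) (κ : ℕ → ℤ)
    (hτ : ∀ i ∈ List.range c, τ i < r ∧ κ i ≠ 0)
    (h35 : ∀ i ∈ List.range 78, i ∈ [35] ↔ E6.wt a i = E6.wt a 35)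
    (hpair : ∀ i ∈ List.range c, ∀ j ∈ List.range c, i ≤ j →
      sparseLie E6.sc (sparseLie E6.sc F (Y (τ i))) (Y j) = if i = j then [(35, κ i)] else []) :
    PropertyP L (combine B E) h f := by
  refine hB.propertyP_of_isCentralizerData hD t hd fun v hv hv0 z hz => ?_
  obtain ⟨s, i, rfl, hi, hsi, hs⟩ := hB.exists_leading_coord hD hv hv0
  obtain ⟨d, rfl⟩ := hB.exists_eq_lcomb (T := [35]) (by decide) h35 hz
  have hi' : i ∈ List.range c := by simpa using hi
  have hκ : (κ i : ℂ) ≠ 0 := by exact_mod_cast (hτ i hi').2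
  refine ⟨(d 35 / (κ i * s i)) • combine B (Y (τ i)), ?_, ?_⟩
  · rw [smul_lie, hB.lie_combine_eq_zero hD (hτ i hi').1, smul_zero]
  · rw [lie_smul, smul_lie, hB.lie_lie_sum (w := [(35, κ i)]) hi hs
      (by rw [hpair i hi' i hi' le_rfl, if_pos rfl])
      fun j hj hij => by rw [hpair i hi' j hj hij.le, if_neg hij.ne]]
    simp only [combine, lcomb, List.map_cons, List.map_nil, List.sum_cons, List.sum_nil, add_zero,
      smul_smul]
    congr 1
    field_simp

set_option maxRecDepth 4000 in
lemma propertyP_reg (hB : IsE6Grading B h fun _ => 2) (t : IsSl2Triple h (combine B E6.regE) f)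
    (hd : IsDistinguished L (combine B E6.regE)) : PropertyP L (combine B E6.regE) h f :=
  hB.propertyP_of_triangular E6.isCentralizerData_reg t hd (fun i => 5 - i)
    (fun i => [-22, -32, 70, 70, -32, -22].getD i 0) (by decide +kernel) (by decide +kernel)
    (by decide +kernel)

set_option maxRecDepth 4000 in
lemma propertyP_A1 (hB : IsE6Grading B h E6.diagramA1) (t : IsSl2Triple h (combine B E6.A1E) f)
    (hd : IsDistinguished L (combine B E6.A1E)) : PropertyP L (combine B E6.A1E) h f :=
  hB.propertyP_of_triangular E6.isCentralizerData_A1 t hd (fun i => [4, 2, 1, 5, 0].getD i 0)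
    (fun i => [-16, 40, 40, -28, -16].getD i 0) (by decide +kernel) (by decide +kernel)
    (by decide +kernel)

end IsE6Grading

namespace E6

lemma pairing_A3 : ∀ p ∈ [(2, 0, [(34, -10)]), (3, 0, [(35, -10)]), (6, 1, [(35, -8)]),
      (7, 1, [(34, -8)]), (0, 2, [(34, -10)]), (4, 2, [(35, -2)]), (5, 2, [(34, 8)]),
      (0, 3, [(35, -10)]), (4, 3, [(35, -8)]), (5, 3, [(34, 2)])],
    sparseLie sc (sparseLie sc A3F (A3Y p.1)) (A3Y p.2.1) = p.2.2 := by
  decide +kernel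

lemma pairing_A3_eq_nil : ∀ p ∈ [(2, 0), (3, 0), (6, 1), (7, 1)], ∀ j ∈ List.range 4, p.2 < j →
    sparseLie sc (sparseLie sc A3F (A3Y p.1)) (A3Y j) = [] := by
  decide +kernel

end E6

namespace IsE6Grading

open Module LieAlgebra

variable {L : Type*} [LieRing L] [LieAlgebra ℂ L] [FiniteDimensional ℂ L] [IsKilling ℂ L]
  {B : ℕ → L} {h f : L}

set_option maxRecDepth 4000 in
lemma propertyP_A3 (hB : IsE6Grading B h E6.diagramA3) (t : IsSl2Triple h (combine B E6.A3E) f)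
    (hd : IsDistinguished L (combine B E6.A3E)) : PropertyP L (combine B E6.A3E) h f := by
  have hD := E6.isCentralizerData_A3
  refine hB.propertyP_of_isCentralizerData hD t hd fun v hv hv0 z hz => ?_
  obtain ⟨d, rfl⟩ := hB.exists_eq_lcomb (T := [34, 35]) (by decide) (by decide +kernel) hz
  obtain ⟨s, i, rfl, hi, hsi, hs⟩ := hB.exists_leading_coord hD hv hv0
  have key : ∀ k l : ℕ, k < 12 → l < 12 → ∀ p q : ℂ,
      p • ⁅⁅combine B E6.A3F, combine B (E6.A3Y k)⁆,
          ∑ j ∈ Finset.range 4, s j • combine B (E6.A3Y j)⁆ +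
        q • ⁅⁅combine B E6.A3F, combine B (E6.A3Y l)⁆,
          ∑ j ∈ Finset.range 4, s j • combine B (E6.A3Y j)⁆ = lcomb B [34, 35] d →
      ∃ x : L, ⁅x, combine B E6.A3E⁆ = 0 ∧ ⁅⁅combine B E6.A3F, x⁆,
        ∑ j ∈ Finset.range 4, s j • combine B (E6.A3Y j)⁆ = lcomb B [34, 35] d := by
    intro k l hk hl p q h
    refine ⟨p • combine B (E6.A3Y k) + q • combine B (E6.A3Y l), ?_, ?_⟩
    · rw [add_lie, smul_lie, smul_lie, hB.lie_combine_eq_zero hD hk, hB.lie_combine_eq_zero hD hl,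
        smul_zero, smul_zero, add_zero]
    · rw [lie_add, add_lie, lie_smul, lie_smul, smul_lie, smul_lie, h]
  have hlc : lcomb B [34, 35] d = d 34 • B 34 + d 35 • B 35 := by simp [lcomb]
  have hpair := E6.pairing_A3
  have hnil := E6.pairing_A3_eq_nil
  by_cases hi0 : i = 0
  · subst hi0
    refine key 2 3 (by norm_num) (by norm_num) (-d 34 / (10 * s 0)) (-d 35 / (10 * s 0)) ?_
    rw [hB.lie_lie_sum hi hs (hpair (2, 0, [(34, -10)]) (by simp))
        (hnil (2, 0) (by simp)),
      hB.lie_lie_sum hi hs (hpair (3, 0, [(35, -10)]) (by simp))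
        (hnil (3, 0) (by simp)), hlc]
    simp only [combine, add_zero, smul_smul]
    push_cast
    congr 2 <;> field_simp
  by_cases hi1 : i = 1
  · subst hi1
    refine key 7 6 (by norm_num) (by norm_num) (-d 34 / (8 * s 1)) (-d 35 / (8 * s 1)) ?_
    rw [hB.lie_lie_sum hi hs (hpair (7, 1, [(34, -8)]) (by simp))
        (hnil (7, 1) (by simp)),
      hB.lie_lie_sum hi hs (hpair (6, 1, [(35, -8)]) (by simp))
        (hnil (6, 1) (by simp)), hlc]
    simp only [combine, add_zero, smul_smul]
    push_cast
    congr 2 <;> field_simp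
  have h0 : s 0 = 0 := hs 0 (by omega)
  have h1 : s 1 = 0 := hs 1 (by omega)
  have h23 : s 2 ≠ 0 ∨ s 3 ≠ 0 := by
    obtain rfl | rfl : i = 2 ∨ i = 3 := by omega
    exacts [Or.inl hsi, Or.inr hsi]
  have hsum : ∀ k, ∀ u w : List (ℕ × ℤ),
      sparseLie E6.sc (sparseLie E6.sc E6.A3F (E6.A3Y k)) (E6.A3Y 2) = u →
      sparseLie E6.sc (sparseLie E6.sc E6.A3F (E6.A3Y k)) (E6.A3Y 3) = w →
      ⁅⁅combine B E6.A3F, combine B (E6.A3Y k)⁆,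
        ∑ j ∈ Finset.range 4, s j • combine B (E6.A3Y j)⁆ =
        s 2 • combine B u + s 3 • combine B w := by
    intro k u w hu hw
    simp only [Finset.sum_range_succ, Finset.sum_range_zero, h0, h1, zero_smul, zero_add, lie_add,
      lie_smul]
    rw [hB.lie_combine_combine _ rfl, hB.lie_combine_combine _ hu, hB.lie_combine_combine _ hw]
  have p0 := hsum 0 _ _ (hpair (0, 2, [(34, -10)]) (by simp))
    (hpair (0, 3, [(35, -10)]) (by simp))
  have p4 := hsum 4 _ _ (hpair (4, 2, [(35, -2)]) (by simp))
    (hpair (4, 3, [(35, -8)]) (by simp))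
  have p5 := hsum 5 _ _ (hpair (5, 2, [(34, 8)]) (by simp))
    (hpair (5, 3, [(34, 2)]) (by simp))
  simp only [combine, add_zero] at p0 p4 p5
  push_cast at p0 p4 p5
  by_cases h4 : s 2 + 4 * s 3 = 0
  · have h2 : s 2 = -4 * s 3 := by linear_combination h4
    have h3 : s 3 ≠ 0 := fun h3 => by simp [h2, h3] at h23
    refine key 0 5 (by norm_num) (by norm_num) (-d 35 / (10 * s 3))
      (-(d 34 + 4 * d 35) / (30 * s 3)) ?_
    rw [p0, p5, hlc, h2]
    match_scalars <;> field_simp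
    ring
  by_cases h5 : 4 * s 2 + s 3 = 0
  · have h3 : s 3 = -4 * s 2 := by linear_combination h5
    have h2 : s 2 ≠ 0 := fun h2 => by simp [h2, h3] at h23
    refine key 0 4 (by norm_num) (by norm_num) (-d 34 / (10 * s 2))
      ((d 35 + 4 * d 34) / (30 * s 2)) ?_
    rw [p0, p4, hlc, h3]
    match_scalars <;> field_simp
    ring
  · refine key 5 4 (by norm_num) (by norm_num) (d 34 / (2 * (4 * s 2 + s 3)))
      (-d 35 / (2 * (s 2 + 4 * s 3))) ?_
    rw [p4, p5, hlc]
    match_scalars <;> field_simp <;> ring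

end IsE6Grading

/-- Distinguished non-regular nilpotent elements of the complex simple
Lie algebra of type corresponding to `LieAlgebra.e₆` satisfy property (P). -/
theorem propertyP_of_type_5
    (L : Type*) [LieRing L] [LieAlgebra ℂ L] [FiniteDimensional ℂ L]
    [LieAlgebra.IsSimple ℂ L]
    (htype : Nonempty (L ≃ₗ⁅ℂ⁆ LieAlgebra.e₆ ℂ))
    (e h f : L) (ht : IsSl2Triple h e f) (he : IsNilpotent (LieAlgebra.ad ℂ L e))
    (hdist : IsDistinguished L e)
    (hnonreg : Module.finrank ℂ ↥(centralizer L e) ≠ LieAlgebra.rank ℂ L) :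
    PropertyP L e h f := by
  obtain ⟨B, hB⟩ := E6.exists_isE6Basis L htype
  obtain ⟨B, a, hB, ha⟩ := hB.exists_isE6Grading ht.iSup_eigenspace_eq_top
  rcases (hB.eq_or_of_isDistinguished ht hdist ha).1 with h1 | h1 | h1 <;>
    simp only [List.cons.injEq, and_true] at h1 <;> obtain ⟨h0, h1, h2, h3, h4, h5⟩ := h1
  · obtain ⟨B, hB, rfl⟩ := (hB.congr (a' := E6.diagramA3) fun k hk => by
      interval_cases k <;> assumption).exists_normalForm_A3 ht hdist
    exact hB.propertyP_A3 ht hdist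
  · obtain ⟨B, hB, rfl⟩ := (hB.congr (a' := E6.diagramA1) fun k hk => by
      interval_cases k <;> assumption).exists_normalForm_A1 ht hdist
    exact hB.propertyP_A1 ht hdist
  · obtain ⟨B, hB, rfl⟩ := (hB.congr (a' := fun _ => 2) fun k hk => by
      interval_cases k <;> assumption).exists_normalForm_regular ht hdist
    exact hB.propertyP_reg ht hdist
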